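/- There exists a real number τ > 0 such that every C₅-free simple graph G satisfies max(α(G), ω(G)) ≥ |G|^τ. -/

import Mathlib

open SimpleGraph

/-- The independence (stable set) number of a graph: the clique number of the complement. -/
noncomputable def alphaNum {V : Type*} (G : SimpleGraph V) : ℕ := Gᶜ.cliqueNum

/-- The clique number of a graph. -/
noncomputable def omegaNum {V : Type*} (G : SimpleGraph V) : ℕ := G.cliqueNum

/-- κ(G) = α(G)·ω(G). -/
noncomputable def kappaNum {V : Type*} (G : SimpleGraph V) : ℕ := alphaNum G * omegaNum G

section ErdosHajnal

open scoped Classical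

variable {V : Type*} {ι : Type*}

/-- No five vertices induce a five-cycle, in the order listed. -/
def C5Free (G : SimpleGraph V) : Prop :=
  ∀ a b c d e, G.Adj a b → G.Adj b c → G.Adj c d → G.Adj d e → G.Adj e a →
    ¬ G.Adj a c → ¬ G.Adj a d → ¬ G.Adj b d → ¬ G.Adj b e → ¬ G.Adj c e → False

theorem c5Free_of_not_embedding {G : SimpleGraph V} (h : ¬ Nonempty (cycleGraph 5 ↪g G)) :
    C5Free G := by
  intro a b c d e hab hbc hcd hde hea hac had hbd hbe hce
  have n1 := hab.ne
  have n2 := hbc.ne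
  have n3 := hcd.ne
  have n4 := hde.ne
  have n5 := hea.ne
  have m1 : a ≠ c := by rintro rfl; exact had hcd
  have m2 : a ≠ d := by rintro rfl; exact hac hcd.symm
  have m3 : b ≠ d := by rintro rfl; exact hbe hde
  have m4 : b ≠ e := by rintro rfl; exact hbd hde.symm
  have m5 : c ≠ e := by rintro rfl; exact hac hea.symm
  refine h ⟨⟨⟨![a, b, c, d, e], ?_⟩, ?_⟩⟩
  · intro i j hij
    fin_cases i <;> fin_cases j <;> simp_all [eq_comm]
  · intro i j
    change G.Adj (![a, b, c, d, e] i) (![a, b, c, d, e] j) ↔ _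
    have key : ∀ i j : Fin 5, (cycleGraph 5).Adj i j ↔
        (![![0, 1, 0, 0, 1], ![1, 0, 1, 0, 0], ![0, 1, 0, 1, 0], ![0, 0, 1, 0, 1],
          ![1, 0, 0, 1, 0]] : Fin 5 → Fin 5 → Fin 2) i j = 1 := by decide
    rw [key]
    fin_cases i <;> fin_cases j <;> simp [hab, hbc, hcd, hde, hea, hac, had, hbd, hbe, hce,
      hab.symm, hbc.symm, hcd.symm, hde.symm, hea.symm, G.adj_comm c a, G.adj_comm d a,
      G.adj_comm d b, G.adj_comm e b, G.adj_comm e c]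

theorem C5Free.compl {G : SimpleGraph V} (h : C5Free G) : C5Free Gᶜ := by
  intro a b c d e hab hbc hcd hde hea hac had hbd hbe hce
  have m1 : a ≠ c := by rintro rfl; exact had hcd
  have m2 : a ≠ d := by rintro rfl; exact hac hcd.symm
  have m3 : b ≠ d := by rintro rfl; exact hbe hde
  have m4 : b ≠ e := by rintro rfl; exact hbd hde.symm
  have m5 : c ≠ e := by rintro rfl; exact hac hea.symm
  simp only [compl_adj, not_and, not_not] at *
  exact h a c e b d (hac m1) (hce m5) (hbe m4).symm (hbd m3) (had m2).symm
    (fun h => hea.2 h.symm) hab.2 (fun h => hbc.2 h.symm) hcd.2 (fun h => hde.2 h.symm)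

/-- The neighbours of `v` inside `X`. -/
noncomputable def nb (G : SimpleGraph V) (v : V) (X : Finset V) : Finset V :=
  X.filter (fun x => G.Adj v x)

/-- The vertices of `X` with a neighbour in `P`. -/
noncomputable def nbs (G : SimpleGraph V) (P X : Finset V) : Finset V :=
  X.filter (fun x => ∃ p ∈ P, G.Adj p x)

/-- No edges between `A` and `B`. -/
def Anti (G : SimpleGraph V) (A B : Finset V) : Prop := ∀ a ∈ A, ∀ b ∈ B, ¬ G.Adj a b

@[simp] theorem mem_nb {G : SimpleGraph V} {v x : V} {X : Finset V} :
    x ∈ nb G v X ↔ x ∈ X ∧ G.Adj v x := by simp [nb]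

@[simp] theorem mem_nbs {G : SimpleGraph V} {P X : Finset V} {x : V} :
    x ∈ nbs G P X ↔ x ∈ X ∧ ∃ p ∈ P, G.Adj p x := by simp [nbs]

theorem nb_subset (G : SimpleGraph V) (v : V) (X : Finset V) : nb G v X ⊆ X :=
  Finset.filter_subset _ _

theorem nbs_subset (G : SimpleGraph V) (P X : Finset V) : nbs G P X ⊆ X :=
  Finset.filter_subset _ _

theorem nb_mono (G : SimpleGraph V) (v : V) {X Y : Finset V} (h : X ⊆ Y) :
    nb G v X ⊆ nb G v Y := Finset.filter_subset_filter _ h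

theorem Anti.symm {G : SimpleGraph V} {A B : Finset V} (h : Anti G A B) : Anti G B A :=
  fun b hb a ha hab => h a ha b hb hab.symm

/-- A staircase argument: if adjacency to `Q` separates the rows `R c` whenever it differs,
then each row has a large part, these parts being pairwise anticomplete. -/
theorem exists_anti_parts (G : SimpleGraph V) {m : ℝ} (hm : 0 < m) (Q : Finset V) (n : ℕ) :
    ∀ (C : Finset ι) (R : ι → Finset V), C.card = n →
      (∀ c ∈ C, ∀ x ∈ R c, ∃ q ∈ Q, G.Adj q x) →
      (∀ c ∈ C, ∀ q ∈ Q, ((nb G q (R c)).card : ℝ) ≤ m) →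
      (∀ c ∈ C, 2 * n * m ≤ ((R c).card : ℝ)) →
      (∀ c ∈ C, ∀ c' ∈ C, c ≠ c' → ∀ x ∈ R c, ∀ x' ∈ R c', ∀ q ∈ Q,
        G.Adj q x → ¬ G.Adj q x' → ¬ G.Adj x x') →
      ∃ Y : ι → Finset V, (∀ c ∈ C, Y c ⊆ R c ∧ m ≤ ((Y c).card : ℝ)) ∧
        ∀ c ∈ C, ∀ c' ∈ C, c ≠ c' → Anti G (Y c) (Y c') := by
  induction n with
  | zero =>
    intro C R hC _ _ _ _
    rw [Finset.card_eq_zero] at hC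
    subst hC
    exact ⟨R, by simp, by simp⟩
  | succ k ih =>
    intro C R hC hnb hdeg hcard hrel
    obtain ⟨c₁, hc₁⟩ : C.Nonempty := Finset.card_pos.1 (by omega)
    have hQ : ∃ c ∈ C, m ≤ ((nbs G Q (R c)).card : ℝ) := by
      refine ⟨c₁, hc₁, ?_⟩
      have : nbs G Q (R c₁) = R c₁ := by
        ext x
        simp only [mem_nbs, and_iff_left_iff_imp]
        exact hnb c₁ hc₁ x
      rw [this]
      have h1 := hcard c₁ hc₁
      push_cast at h1
      have : 0 ≤ (k : ℝ) * m := by positivity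
      linarith
    obtain ⟨Q', hQ', hmin⟩ := Finset.exists_min_image
      (Q.powerset.filter (fun Q' => ∃ c ∈ C, m ≤ ((nbs G Q' (R c)).card : ℝ))) Finset.card
      ⟨Q, by simpa using hQ⟩
    simp only [Finset.mem_filter, Finset.mem_powerset] at hQ' hmin
    obtain ⟨hQ'Q, c₀, hc₀, hbig⟩ := hQ'
    have hsmall : ∀ c ∈ C, ((nbs G Q' (R c)).card : ℝ) ≤ 2 * m := by
      intro c hc
      have hne : Q'.Nonempty := by
        by_contra h
        rw [Finset.not_nonempty_iff_eq_empty] at h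
        subst h
        simp [nbs] at hbig
        linarith
      obtain ⟨q, hq⟩ := hne
      have h1 : ((nbs G (Q'.erase q) (R c)).card : ℝ) < m := by
        by_contra h
        push Not at h
        have := hmin (Q'.erase q) ⟨(Finset.erase_subset _ _).trans hQ'Q, c, hc, h⟩
        rw [Finset.card_erase_of_mem hq] at this
        have := Finset.card_pos.2 ⟨q, hq⟩
        omega
      have h2 := hdeg c hc q (hQ'Q hq)
      have h3 : nbs G Q' (R c) ⊆ nbs G (Q'.erase q) (R c) ∪ nb G q (R c) := by
        intro x hx
        simp only [mem_nbs, Finset.mem_union, mem_nb, Finset.mem_erase] at *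
        obtain ⟨hx, p, hp, hpx⟩ := hx
        by_cases hpq : p = q
        · subst hpq; exact Or.inr ⟨hx, hpx⟩
        · exact Or.inl ⟨hx, p, ⟨hpq, hp⟩, hpx⟩
      have h4 := (Finset.card_le_card h3).trans (Finset.card_union_le _ _)
      have h5 : ((nbs G Q' (R c)).card : ℝ) ≤
        (nbs G (Q'.erase q) (R c)).card + (nb G q (R c)).card := by exact_mod_cast h4
      linarith
    obtain ⟨Y, hY, hanti⟩ := ih (C.erase c₀) (fun c => R c \ nbs G Q' (R c))
      (by rw [Finset.card_erase_of_mem hc₀]; omega)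
      (fun c hc x hx => hnb c (Finset.mem_of_mem_erase hc) x (Finset.mem_sdiff.1 hx).1)
      (fun c hc q hq => le_trans (by
        exact_mod_cast Finset.card_le_card (nb_mono G q Finset.sdiff_subset))
        (hdeg c (Finset.mem_of_mem_erase hc) q hq))
      (fun c hc => by
        have hc := Finset.mem_of_mem_erase hc
        have h1 := hsmall c hc
        have h2 := hcard c hc
        have h3 := Finset.card_sdiff_add_card_eq_card (nbs_subset G Q' (R c))
        have h4 : ((R c \ nbs G Q' (R c)).card : ℝ) + (nbs G Q' (R c)).card = (R c).card := by
          exact_mod_cast h3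
        push_cast at h2
        linarith)
      (fun c hc c' hc' hne x hx x' hx' q hq => hrel c (Finset.mem_of_mem_erase hc) c'
        (Finset.mem_of_mem_erase hc') hne x (Finset.mem_sdiff.1 hx).1 x'
        (Finset.mem_sdiff.1 hx').1 q hq)
    have key : ∀ c ∈ C, c ≠ c₀ → Anti G (nbs G Q' (R c₀)) (Y c) := by
      intro c hc hne x hx x' hx'
      have h1 := (hY c (Finset.mem_erase.2 ⟨hne, hc⟩)).1 hx'
      simp only [mem_nbs, Finset.mem_sdiff, not_and, not_exists] at hx h1
      obtain ⟨hx, q, hq, hqx⟩ := hx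
      exact hrel c₀ hc₀ c hc (Ne.symm hne) x hx x' h1.1 q (hQ'Q hq) hqx (h1.2 h1.1 q hq)
    refine ⟨fun c => if c = c₀ then nbs G Q' (R c₀) else Y c, ?_, ?_⟩
    · intro c hc
      by_cases h : c = c₀
      · subst h; simpa using ⟨nbs_subset _ _ _, hbig⟩
      · have := hY c (Finset.mem_erase.2 ⟨h, hc⟩)
        simp only [h, if_false]
        exact ⟨this.1.trans Finset.sdiff_subset, this.2⟩
    · intro c hc c' hc' hne
      by_cases h : c = c₀ <;> by_cases h' : c' = c₀
      · exact absurd (h.trans h'.symm) hne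
      · simpa [h, h'] using key c' hc' h'
      · simpa [h, h'] using (key c hc h).symm
      · simp only [h, h', if_false]
        exact hanti c (Finset.mem_erase.2 ⟨h, hc⟩) c' (Finset.mem_erase.2 ⟨h', hc'⟩) hne

theorem card_union_le_real [DecidableEq V] (A B : Finset V) :
    ((A ∪ B).card : ℝ) ≤ A.card + B.card := by
  exact_mod_cast Finset.card_union_le A B

theorem card_le_real {A B : Finset V} (h : A ⊆ B) : (A.card : ℝ) ≤ B.card := by
  exact_mod_cast Finset.card_le_card h

theorem card_sdiff_real [DecidableEq V] {A B : Finset V} (h : A ⊆ B) :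
    ((B \ A).card : ℝ) = B.card - A.card := by
  have := Finset.card_sdiff_add_card_eq_card h
  have h2 : ((B \ A).card : ℝ) + A.card = B.card := by exact_mod_cast this
  linarith

theorem card_sub_le_sdiff_real [DecidableEq V] (A B : Finset V) :
    (B.card : ℝ) - A.card ≤ (B \ A).card := by
  have := Finset.le_card_sdiff A B
  have h2 : (B.card : ℝ) ≤ (B \ A).card + A.card := by
    have : B.card ≤ (B \ A).card + A.card := by omega
    exact_mod_cast this
  linarith

theorem card_biUnion_le_real [DecidableEq V] (C : Finset ι) (f : ι → Finset V) (n : ℝ)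
    (h : ∀ c ∈ C, ((f c).card : ℝ) ≤ n) : ((C.biUnion f).card : ℝ) ≤ C.card * n := by
  have h1 : ((C.biUnion f).card : ℝ) ≤ ∑ c ∈ C, ((f c).card : ℝ) := by
    exact_mod_cast Finset.card_biUnion_le
  refine h1.trans ((Finset.sum_le_sum h).trans ?_)
  simp

theorem sum_card_nb_comm (G : SimpleGraph V) (A B : Finset V) :
    ∑ a ∈ A, (nb G a B).card = ∑ b ∈ B, (nb G b A).card := by
  have := Finset.sum_card_bipartiteAbove_eq_sum_card_bipartiteBelow (s := A) (t := B) G.Adj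
  simp only [Finset.bipartiteAbove, Finset.bipartiteBelow] at this
  simp only [nb]
  rw [this]
  refine Finset.sum_congr rfl fun b _ => ?_
  congr 1
  ext a
  simp [G.adj_comm]

/-- Either some `A'` is privately adjacent to a large part of `B`, or removing few vertices of
`B` makes all degrees from `A` small. -/
theorem private_neighbours_or_small_degrees (G : SimpleGraph V) (A B : Finset V) {Δ θ : ℝ}
    (hΔ : 0 ≤ Δ) (hdeg : ∀ a ∈ A, ((nb G a B).card : ℝ) ≤ Δ) (L : ℕ) :
    (∃ A' ⊆ A, ∃ B' ⊆ B, (∀ x ∈ B', ∃ a ∈ A', G.Adj a x ∧ ∀ a' ∈ A', G.Adj a' x → a' = a) ∧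
      θ ≤ B'.card ∧ (A'.card : ℝ) * ((2 / 3) ^ L * Δ) ≤ B.card) ∨
    (∃ H ⊆ B, (H.card : ℝ) ≤ 2 * L * θ ∧
      ∀ a ∈ A, ((nb G a (B \ H)).card : ℝ) ≤ (2 / 3) ^ L * Δ) := by
  induction L with
  | zero => exact Or.inr ⟨∅, by simp, by simp, by simpa using hdeg⟩
  | succ L ih =>
    rcases ih with ⟨A', hA', B', hB', h1, h2, h3⟩ | ⟨H, hH, hHc, hHd⟩
    · refine Or.inl ⟨A', hA', B', hB', h1, h2, le_trans ?_ h3⟩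
      have : 0 ≤ (A'.card : ℝ) * ((2 / 3) ^ L * Δ) := by positivity
      rw [pow_succ]
      nlinarith
    set E := (2 / 3 : ℝ) ^ L * Δ with hE
    have hE0 : 0 ≤ E := by positivity
    have hE' : (2 / 3 : ℝ) ^ (L + 1) * Δ = 2 / 3 * E := by rw [hE, pow_succ]; ring
    rw [hE']
    obtain ⟨A', hA', hmax⟩ := Finset.exists_max_image
      (A.powerset.filter (fun A' => 2 / 3 * E * A'.card ≤ ((nbs G A' (B \ H)).card : ℝ)))
      Finset.card ⟨∅, by simp⟩
    simp only [Finset.mem_filter, Finset.mem_powerset] at hA' hmax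
    obtain ⟨hA'A, hbig⟩ := hA'
    set W := nbs G A' (B \ H) with hW
    have hWB : W ⊆ B := (nbs_subset _ _ _).trans Finset.sdiff_subset
    by_cases hWθ : (W.card : ℝ) ≤ 2 * θ
    · refine Or.inr ⟨H ∪ W, Finset.union_subset hH hWB, ?_, ?_⟩
      · have := card_union_le_real H W
        push_cast
        linarith
      · intro a ha
        by_cases haA' : a ∈ A'
        · have : nb G a (B \ (H ∪ W)) = ∅ := by
            ext x
            simp only [mem_nb, Finset.mem_sdiff, Finset.mem_union, hW, mem_nbs,
              Finset.notMem_empty, iff_false]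
            rintro ⟨⟨hxB, hx⟩, hax⟩
            push Not at hx
            exact hx.2 ⟨hxB, hx.1⟩ a haA' hax
          rw [this]
          simp only [Finset.card_empty, Nat.cast_zero]
          positivity
        · by_contra hcon
          push Not at hcon
          have h1 : (W ∪ nb G a (B \ (H ∪ W))) ⊆ nbs G (insert a A') (B \ H) := by
            intro x hx
            simp only [Finset.mem_union, mem_nb, Finset.mem_sdiff, hW, mem_nbs,
              Finset.mem_insert] at hx ⊢
            rcases hx with ⟨hx, p, hp, hpx⟩ | hx
            · exact ⟨hx, p, Or.inr hp, hpx⟩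
            · exact ⟨⟨hx.1.1, fun h => hx.1.2 (Or.inl h)⟩, a, Or.inl rfl, hx.2⟩
          have h2 : Disjoint W (nb G a (B \ (H ∪ W))) := by
            rw [Finset.disjoint_left]
            intro x hx hx'
            simp only [mem_nb, Finset.mem_sdiff, Finset.mem_union] at hx'
            exact hx'.1.2 (Or.inr hx)
          have h3 := card_le_real h1
          rw [Finset.card_union_of_disjoint h2] at h3
          push_cast at h3
          have h4 := hmax (insert a A') ⟨Finset.insert_subset ha hA'A, by
            rw [Finset.card_insert_of_notMem haA']
            push_cast
            linarith⟩
          rw [Finset.card_insert_of_notMem haA'] at h4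
          omega
    · push Not at hWθ
      left
      set W1 := W.filter (fun x => (nb G x A').card = 1) with hW1
      refine ⟨A', hA'A, W1, (Finset.filter_subset _ _).trans hWB, ?_, ?_, ?_⟩
      · intro x hx
        rw [hW1, Finset.mem_filter] at hx
        obtain ⟨a, ha⟩ := Finset.card_eq_one.1 hx.2
        have hm : ∀ a', a' ∈ A' ∧ G.Adj x a' ↔ a' = a := by
          intro a'
          rw [← mem_nb, ha, Finset.mem_singleton]
        have h0 := (hm a).2 rfl
        exact ⟨a, h0.1, h0.2.symm, fun a' ha' h => (hm a').1 ⟨ha', h.symm⟩⟩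
      · have h1 : ∑ a ∈ A', (nb G a W).card = ∑ x ∈ W, (nb G x A').card :=
          sum_card_nb_comm G A' W
        have h2 : (∑ a ∈ A', ((nb G a W).card : ℝ)) ≤ A'.card * E := by
          refine (Finset.sum_le_sum (g := fun _ => E) fun a ha => ?_).trans (by simp)
          refine le_trans ?_ (hHd a (hA'A ha))
          exact card_le_real (nb_mono G a (nbs_subset _ _ _))
        have h3 : ∀ x ∈ W, (2 : ℝ) - (if (nb G x A').card = 1 then 1 else 0) ≤
            (nb G x A').card := by
          intro x hx
          have : 1 ≤ (nb G x A').card := by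
            rw [hW, mem_nbs] at hx
            obtain ⟨_, p, hp, hpx⟩ := hx
            exact Finset.card_pos.2 ⟨p, mem_nb.2 ⟨hp, hpx.symm⟩⟩
          split_ifs with h
          · rw [h]; norm_num
          · have : 2 ≤ (nb G x A').card := by omega
            simpa using (show (2 : ℝ) ≤ (nb G x A').card by exact_mod_cast this)
        have h4 := Finset.sum_le_sum h3
        rw [Finset.sum_sub_distrib, ← Finset.sum_filter] at h4
        simp only [Finset.sum_const, nsmul_eq_mul, mul_one] at h4
        have h5 : (∑ a ∈ A', ((nb G a W).card : ℝ)) = ∑ x ∈ W, ((nb G x A').card : ℝ) := by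
          exact_mod_cast h1
        have : (W1.card : ℝ) = ((W.filter (fun x => (nb G x A').card = 1)).card : ℝ) := rfl
        linarith
      · have := card_le_real hWB
        linarith

/-- Group the fibres of `f` on `D` into `k` large groups. -/
theorem exists_fiber_groups (f : V → V) {m s : ℝ} (hs : 0 ≤ s) (hm : 0 ≤ m) (k : ℕ) :
    ∀ D : Finset V, (∀ a, ((D.filter (fun x => f x = a)).card : ℝ) ≤ m) →
      k * (s + m) ≤ (D.card : ℝ) →
      ∃ R : ℕ → Finset V, (∀ i < k, R i ⊆ D ∧ s ≤ ((R i).card : ℝ)) ∧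
        ∀ i < k, ∀ j < k, i ≠ j → ∀ x ∈ R i, ∀ y ∈ R j, f x ≠ f y := by
  induction k with
  | zero => exact fun D _ _ => ⟨fun _ => ∅, by simp, by simp⟩
  | succ k ih =>
    intro D hfib hD
    push_cast at hD
    have hk : 0 ≤ (k : ℝ) * (s + m) := by positivity
    obtain ⟨T, hT, hmin⟩ := Finset.exists_min_image
      ((D.image f).powerset.filter (fun T => s ≤ ((D.filter (fun x => f x ∈ T)).card : ℝ)))
      Finset.card ⟨D.image f, by
        simp only [Finset.mem_filter, Finset.mem_powerset, subset_refl, true_and]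
        rw [Finset.filter_true_of_mem fun x hx => Finset.mem_image_of_mem f hx]
        linarith⟩
    simp only [Finset.mem_filter, Finset.mem_powerset] at hT hmin
    have hup : ((D.filter (fun x => f x ∈ T)).card : ℝ) ≤ s + m := by
      rcases T.eq_empty_or_nonempty with rfl | ⟨t, ht⟩
      · simp; linarith
      · have h1 : ((D.filter (fun x => f x ∈ T.erase t)).card : ℝ) < s := by
          by_contra h
          push Not at h
          have := hmin (T.erase t) ⟨(Finset.erase_subset _ _).trans hT.1, h⟩
          rw [Finset.card_erase_of_mem ht] at this
          have := Finset.card_pos.2 ⟨t, ht⟩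
          omega
        have h2 : D.filter (fun x => f x ∈ T) ⊆
            D.filter (fun x => f x ∈ T.erase t) ∪ D.filter (fun x => f x = t) := by
          intro x hx
          simp only [Finset.mem_filter, Finset.mem_union, Finset.mem_erase] at *
          tauto
        have h3 := (card_le_real h2).trans (card_union_le_real _ _)
        have := hfib t
        linarith
    obtain ⟨R, hR, hRR⟩ := ih (D \ D.filter (fun x => f x ∈ T))
      (fun a => le_trans (card_le_real
        (Finset.filter_subset_filter _ Finset.sdiff_subset)) (hfib a))
      (by rw [card_sdiff_real (Finset.filter_subset _ _)]; linarith)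
    have hx : ∀ i < k, ∀ x ∈ R i, f x ∉ T := by
      intro i hi x hx hxT
      have := (hR i hi).1 hx
      simp only [Finset.mem_sdiff, Finset.mem_filter] at this
      exact this.2 ⟨this.1, hxT⟩
    refine ⟨fun i => if i = k then D.filter (fun x => f x ∈ T) else R i, ?_, ?_⟩
    · intro i hi
      by_cases h : i = k
      · simp only [h, if_true]
        exact ⟨Finset.filter_subset _ _, hT.2⟩
      · simp only [h, if_false]
        have := hR i (by omega)
        exact ⟨this.1.trans Finset.sdiff_subset, this.2⟩
    · intro i hi j hj hij x hxi y hyj hxy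
      by_cases h : i = k <;> by_cases h' : j = k
      · omega
      · simp only [h, h', if_true, if_false, Finset.mem_filter] at hxi hyj
        exact hx j (by omega) y hyj (hxy ▸ hxi.2)
      · simp only [h, h', if_true, if_false, Finset.mem_filter] at hxi hyj
        exact hx i (by omega) x hxi (hxy ▸ hyj.2)
      · simp only [h, h', if_false] at hxi hyj
        exact hRR i (by omega) j (by omega) hij x hxi y hyj hxy

/-- `U` is critical: `|·|^σ` is superadditive against every pure family of disjoint subsets. -/
def Crit (G : SimpleGraph V) (σ : ℝ) (U : Finset V) : Prop :=
  ∀ 𝓑 : Finset (Finset V), (∀ B ∈ 𝓑, B ⊆ U) →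
    (∀ B ∈ 𝓑, ∀ B' ∈ 𝓑, B ≠ B' → Disjoint B B') →
    ((∀ B ∈ 𝓑, ∀ B' ∈ 𝓑, B ≠ B' → Anti G B B') ∨
      (∀ B ∈ 𝓑, ∀ B' ∈ 𝓑, B ≠ B' → Anti Gᶜ B B')) →
    ∑ B ∈ 𝓑, (B.card : ℝ) ^ σ ≤ (U.card : ℝ) ^ σ

theorem Crit.sum_le {G : SimpleGraph V} {σ : ℝ} {U : Finset V} (h : Crit G σ U)
    (C : Finset ι) (Y : ι → Finset V) (hne : ∀ c ∈ C, (Y c).Nonempty)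
    (hsub : ∀ c ∈ C, Y c ⊆ U) (hdisj : ∀ c ∈ C, ∀ c' ∈ C, c ≠ c' → Disjoint (Y c) (Y c'))
    (hanti : ∀ c ∈ C, ∀ c' ∈ C, c ≠ c' → Anti G (Y c) (Y c')) :
    ∑ c ∈ C, ((Y c).card : ℝ) ^ σ ≤ (U.card : ℝ) ^ σ := by
  have hinj : Set.InjOn Y C := by
    intro c hc c' hc' heq
    by_contra hcc
    have h1 := hdisj c hc c' hc' hcc
    rw [heq, Finset.disjoint_self_iff_empty] at h1
    exact (hne c' hc').ne_empty h1
  rw [← Finset.sum_image (f := fun B => (B.card : ℝ) ^ σ) hinj]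
  refine h _ ?_ ?_ (Or.inl ?_)
  · simpa using hsub
  · intro B hB B' hB' hne
    obtain ⟨c, hc, rfl⟩ := Finset.mem_image.1 hB
    obtain ⟨c', hc', rfl⟩ := Finset.mem_image.1 hB'
    exact hdisj c hc c' hc' fun h => hne (by rw [h])
  · intro B hB B' hB' hne
    obtain ⟨c, hc, rfl⟩ := Finset.mem_image.1 hB
    obtain ⟨c', hc', rfl⟩ := Finset.mem_image.1 hB'
    exact hanti c hc c' hc' fun h => hne (by rw [h])

theorem pow_mul_rpow_inv {z u : ℝ} (hz : 0 ≤ z) (hu : 0 ≤ u) :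
    (z ^ 1500 * u) ^ (1 / 1500 : ℝ) = z * u ^ (1 / 1500 : ℝ) := by
  rw [Real.mul_rpow (by positivity) hu, ← Real.rpow_natCast, ← Real.rpow_mul hz]
  norm_num

theorem Crit.card_mul_le_one {G : SimpleGraph V} {U : Finset V} (h : Crit G (1 / 1500) U)
    (hU : U.Nonempty) {z : ℝ} (hz : 0 < z) (C : Finset ι) (Y : ι → Finset V)
    (hsub : ∀ c ∈ C, Y c ⊆ U) (hlarge : ∀ c ∈ C, z ^ 1500 * U.card ≤ ((Y c).card : ℝ))
    (hdisj : ∀ c ∈ C, ∀ c' ∈ C, c ≠ c' → Disjoint (Y c) (Y c'))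
    (hanti : ∀ c ∈ C, ∀ c' ∈ C, c ≠ c' → Anti G (Y c) (Y c')) : C.card * z ≤ 1 := by
  have hU0 : (0 : ℝ) < U.card := by exact_mod_cast hU.card_pos
  have h1 := h.sum_le C Y (fun c hc => by
    have := hlarge c hc
    rw [← Finset.card_pos]
    have h2 : (0 : ℝ) < (Y c).card := lt_of_lt_of_le (by positivity) this
    exact_mod_cast h2) hsub hdisj hanti
  have h2 : ∑ c ∈ C, z * (U.card : ℝ) ^ (1 / 1500 : ℝ) ≤
      ∑ c ∈ C, ((Y c).card : ℝ) ^ (1 / 1500 : ℝ) := by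
    refine Finset.sum_le_sum fun c hc => ?_
    rw [← pow_mul_rpow_inv hz.le hU0.le]
    exact Real.rpow_le_rpow (by positivity) (hlarge c hc) (by norm_num)
  have h3 := h2.trans h1
  simp only [Finset.sum_const, nsmul_eq_mul] at h3
  have h4 : 0 < (U.card : ℝ) ^ (1 / 1500 : ℝ) := Real.rpow_pos_of_pos hU0 _
  by_contra hcon
  push Not at hcon
  nlinarith

theorem Crit.le_card_union_nbs {G : SimpleGraph V} {U : Finset V} (h : Crit G (1 / 1500) U)
    (hU : U.Nonempty) {z : ℝ} (hz : 0 < z) {P : Finset V} (hP : P ⊆ U)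
    (hlarge : z ^ 1500 * U.card ≤ (P.card : ℝ)) :
    z * U.card ≤ ((P ∪ nbs G P U).card : ℝ) := by
  have hU0 : (0 : ℝ) < U.card := by exact_mod_cast hU.card_pos
  set W := U \ (P ∪ nbs G P U) with hW
  have hsub : P ∪ nbs G P U ⊆ U := Finset.union_subset hP (nbs_subset _ _ _)
  have hWc := card_sdiff_real hsub
  have hPW : Anti G P W := by
    intro p hp w hw hpw
    simp only [hW, Finset.mem_sdiff, Finset.mem_union, mem_nbs, not_or, not_and, not_exists] at hw
    exact hw.2.2 hw.1 p hp hpw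
  have hdis : Disjoint P W := by
    rw [Finset.disjoint_left]
    intro p hp hpw
    simp only [hW, Finset.mem_sdiff, Finset.mem_union, not_or] at hpw
    exact hpw.2.1 hp
  have hPpos : (0 : ℝ) < P.card := lt_of_lt_of_le (by positivity) hlarge
  have hPne : P.Nonempty := Finset.card_pos.1 (by exact_mod_cast hPpos)
  have hne : P ≠ W := by
    rintro heq
    rw [← heq, Finset.disjoint_self_iff_empty] at hdis
    exact hPne.ne_empty hdis
  have h1 := h {P, W} (by
      intro B hB
      simp only [Finset.mem_insert, Finset.mem_singleton] at hB
      rcases hB with rfl | rfl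
      · exact hP
      · exact Finset.sdiff_subset) (by
      intro B hB B' hB' hBB
      simp only [Finset.mem_insert, Finset.mem_singleton] at hB hB'
      rcases hB with rfl | rfl <;> rcases hB' with rfl | rfl
      · exact absurd rfl hBB
      · exact hdis
      · exact hdis.symm
      · exact absurd rfl hBB) (Or.inl (by
      intro B hB B' hB' hBB
      simp only [Finset.mem_insert, Finset.mem_singleton] at hB hB'
      rcases hB with rfl | rfl <;> rcases hB' with rfl | rfl
      · exact absurd rfl hBB
      · exact hPW
      · exact hPW.symm
      · exact absurd rfl hBB))
  rw [Finset.sum_pair hne] at h1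
  have h2 : z * (U.card : ℝ) ^ (1 / 1500 : ℝ) ≤ (P.card : ℝ) ^ (1 / 1500 : ℝ) := by
    rw [← pow_mul_rpow_inv hz.le hU0.le]
    exact Real.rpow_le_rpow (by positivity) hlarge (by norm_num)
  have h4 : 0 < (U.card : ℝ) ^ (1 / 1500 : ℝ) := Real.rpow_pos_of_pos hU0 _
  have hWU : (W.card : ℝ) ≤ U.card := card_le_real Finset.sdiff_subset
  have h5 : (W.card : ℝ) / U.card ≤ ((W.card : ℝ) / U.card) ^ (1 / 1500 : ℝ) := by
    have h01 : (W.card : ℝ) / U.card ≤ 1 := by rw [div_le_one hU0]; exact hWU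
    rcases eq_or_lt_of_le (show (0 : ℝ) ≤ (W.card : ℝ) / U.card by positivity) with h0 | h0
    · rw [← h0]; exact Real.rpow_nonneg le_rfl _
    · simpa using Real.rpow_le_rpow_of_exponent_ge h0 h01 (show (1 / 1500 : ℝ) ≤ 1 by norm_num)
  rw [Real.div_rpow (by positivity) hU0.le, div_le_div_iff₀ hU0 h4] at h5
  have h6 : (W.card : ℝ) ^ (1 / 1500 : ℝ) ≤ (1 - z) * (U.card : ℝ) ^ (1 / 1500 : ℝ) := by linarith
  have h7 : (W.card : ℝ) ≤ (1 - z) * U.card := by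
    have := h5.trans (mul_le_mul_of_nonneg_right h6 hU0.le)
    nlinarith
  linarith

theorem Crit.sum_card_le {G : SimpleGraph V} {U : Finset V} (h : Crit G (1 / 1500) U)
    {z : ℝ} (hz : 0 < z) (hz1 : z ≤ 1) (𝓑 : Finset (Finset V))
    (hsub : ∀ B ∈ 𝓑, B ⊆ U) (hdisj : ∀ B ∈ 𝓑, ∀ B' ∈ 𝓑, B ≠ B' → Disjoint B B')
    (hpure : (∀ B ∈ 𝓑, ∀ B' ∈ 𝓑, B ≠ B' → Anti G B B') ∨
      (∀ B ∈ 𝓑, ∀ B' ∈ 𝓑, B ≠ B' → Anti Gᶜ B B'))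
    (hsmall : ∀ B ∈ 𝓑, (B.card : ℝ) ≤ z ^ 400 * U.card) :
    ∑ B ∈ 𝓑, (B.card : ℝ) ≤ z ^ 200 * U.card := by
  have h1 := h 𝓑 hsub hdisj hpure
  have hU0 : (0 : ℝ) ≤ U.card := by positivity
  have h2 : ∀ B ∈ 𝓑, (B.card : ℝ) ≤
      (z ^ 400 * U.card) ^ (1499 / 1500 : ℝ) * (B.card : ℝ) ^ (1 / 1500 : ℝ) := by
    intro B hB
    rcases B.eq_empty_or_nonempty with rfl | hne
    · simp
    have hB0 : (0 : ℝ) < B.card := by exact_mod_cast hne.card_pos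
    calc (B.card : ℝ) = (B.card : ℝ) ^ (1499 / 1500 : ℝ) * (B.card : ℝ) ^ (1 / 1500 : ℝ) := by
          rw [← Real.rpow_add hB0]; norm_num
      _ ≤ _ := by
          gcongr
          exact hsmall B hB
  refine (Finset.sum_le_sum h2).trans ?_
  rw [← Finset.mul_sum]
  rcases eq_or_lt_of_le hU0 with h0 | h0
  · rw [← h0]
    simp [Real.zero_rpow]
  calc _ ≤ (z ^ 400 * U.card : ℝ) ^ (1499 / 1500 : ℝ) * (U.card : ℝ) ^ (1 / 1500 : ℝ) := by
        gcongr
    _ = (z ^ 400) ^ (1499 / 1500 : ℝ) * U.card := by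
        rw [Real.mul_rpow (by positivity) hU0, mul_assoc, ← Real.rpow_add h0]; norm_num
    _ ≤ z ^ 200 * U.card := by
        gcongr
        rw [← Real.rpow_natCast, ← Real.rpow_natCast, ← Real.rpow_mul hz.le]
        apply Real.rpow_le_rpow_of_exponent_ge hz hz1
        norm_num

/-- All degrees in `G[S]` are at most `y * |S|`. -/
def Restricted (G : SimpleGraph V) (y : ℝ) (S : Finset V) : Prop :=
  ∀ v ∈ S, ((nb G v S).card : ℝ) ≤ y * S.card

theorem const_mul_pow_le {z : ℝ} (hz : 0 < z) (hz0 : z ≤ 1 / 10 ^ 10) {n : ℝ} (hn : 0 ≤ n)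
    {i j : ℕ} (hij : i < j) : 10 ^ 10 * (z ^ j * n) ≤ z ^ i * n := by
  have hz1 : z ≤ 1 := hz0.trans (by norm_num)
  have h1 : z ^ j ≤ z ^ (i + 1) := pow_le_pow_of_le_one hz.le hz1 hij
  have h2 : 0 < z ^ i := by positivity
  have h3 : (10 : ℝ) ^ 10 * z ^ j ≤ z ^ i := by
    rw [pow_succ] at h1
    have h4 : z ^ i * z ≤ z ^ i * (1 / 10 ^ 10) := by gcongr
    linarith
  calc 10 ^ 10 * (z ^ j * n) = (10 ^ 10 * z ^ j) * n := by ring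
    _ ≤ _ := by gcongr

theorem exists_two_thirds_pow {z : ℝ} (hz : 0 < z) (hz0 : z ≤ 1 / 10 ^ 10) :
    ∃ L : ℕ, (2 / 3 : ℝ) ^ L ≤ z ^ 1310 ∧ z ^ 1311 ≤ (2 / 3 : ℝ) ^ L ∧ 2 * L * z ≤ 1 := by
  have hz1 : z ≤ 1 := hz0.trans (by norm_num)
  set K := ⌊1 / (2 * z)⌋₊ with hK
  have hK1 : (K : ℝ) ≤ 1 / (2 * z) := Nat.floor_le (by positivity)
  have hK2 : 1 / (2 * z) < K + 1 := Nat.lt_floor_add_one _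
  have hKz : (2 / 3 : ℝ) ^ K ≤ z ^ 1310 := by
    rw [← Real.log_le_log_iff (by positivity) (by positivity), Real.log_pow, Real.log_pow]
    set r := Real.sqrt z with hr
    have hr0 : 0 < r := Real.sqrt_pos.2 hz
    have hrz : r * r = z := Real.mul_self_sqrt hz.le
    have hr5 : r ≤ 1 / 10 ^ 5 := by
      rw [hr, Real.sqrt_le_left (by norm_num)]
      exact hz0.trans (by norm_num)
    have h1 : -Real.log z ≤ 2 * (1 / r) := by
      have h2 := Real.log_le_sub_one_of_pos (show 0 < 1 / r by positivity)
      rw [Real.log_div one_ne_zero hr0.ne', Real.log_one] at h2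
      have h3 : Real.log z = 2 * Real.log r := by
        rw [← hrz, Real.log_mul hr0.ne' hr0.ne']; ring
      linarith
    have h2 : Real.log (2 / 3) ≤ -1 / 3 := by
      have := Real.log_le_sub_one_of_pos (show (0 : ℝ) < 2 / 3 by norm_num)
      linarith
    have h3 : (K : ℝ) * Real.log (2 / 3) ≤ K * (-1 / 3) := by gcongr
    have h4 : 1 / (2 * z) = (1 / r) * (1 / r) / 2 := by rw [← hrz]; field_simp
    have h5 : (10 : ℝ) ^ 5 ≤ 1 / r := by
      rw [le_div_iff₀ hr0]
      nlinarith
    push_cast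
    nlinarith
  have hex : ∃ L : ℕ, (2 / 3 : ℝ) ^ L ≤ z ^ 1310 := ⟨K, hKz⟩
  refine ⟨Nat.find hex, Nat.find_spec hex, ?_, ?_⟩
  · rcases h : Nat.find hex with _ | n
    · simp only [pow_zero]
      exact pow_le_one₀ hz.le hz1
    · have h1 := Nat.find_min hex (m := n) (by omega)
      push Not at h1
      have hz2 : z ≤ 2 / 3 := hz0.trans (by norm_num)
      calc z ^ 1311 = z ^ 1310 * z := by ring
        _ ≤ (2 / 3) ^ n * (2 / 3) := mul_le_mul h1.le hz2 hz.le (by positivity)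
        _ = _ := by ring
  · have h1 : Nat.find hex ≤ K := Nat.find_min' hex hKz
    have h2 : ((Nat.find hex : ℕ) : ℝ) ≤ 1 / (2 * z) := le_trans (by exact_mod_cast h1) hK1
    rw [le_div_iff₀ (by positivity)] at h2
    linarith

theorem exists_count {z : ℝ} (hz : 0 < z) (hz1 : z ≤ 1) : ∃ k : ℕ, 1 < k * z ∧ k * z ≤ 2 := by
  refine ⟨⌊1 / z⌋₊ + 1, ?_, ?_⟩
  · have h := Nat.lt_floor_add_one (1 / z)
    rw [div_lt_iff₀ hz] at h
    push_cast
    exact h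
  · have h : (⌊1 / z⌋₊ : ℝ) ≤ 1 / z := Nat.floor_le (by positivity)
    rw [le_div_iff₀ hz] at h
    push_cast
    linarith

/-- In a critical set, the private neighbourhoods of neighbours of `v` cannot be large. -/
theorem C5Free.no_private_neighbours {G : SimpleGraph V} (hG : C5Free G) {z : ℝ} (hz : 0 < z)
    (hz0 : z ≤ 1 / 10 ^ 10) {v : V} {A U : Finset V} {n : ℝ}
    (hA : ∀ a ∈ A, G.Adj v a) (hv : ∀ x ∈ U, ¬ G.Adj v x)
    (hU : ∀ x ∈ U, ∃ a ∈ A, G.Adj a x ∧ ∀ a' ∈ A, G.Adj a' x → a' = a)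
    (hcrit : Crit G (1 / 1500) U) (hUn : (U.card : ℝ) ≤ n) (hn : 0 < n)
    (hUbig : z ^ 91 * n ≤ U.card) (hAcard : A.card * z ^ 1411 ≤ 1)
    (hdegA : ∀ a ∈ A, ((nb G a U).card : ℝ) ≤ z ^ 100 * n)
    (hdegU : ∀ x ∈ U, ((nb G x U).card : ℝ) ≤ z ^ 100 * n) : False := by
  have hz1 : z ≤ 1 := hz0.trans (by norm_num)
  have hpow : ∀ {i j : ℕ}, i < j → 10 ^ 10 * (z ^ j * n) ≤ z ^ i * n :=
    fun h => const_mul_pow_le hz hz0 hn.le h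
  have hpos : ∀ i : ℕ, 0 < z ^ i * n := fun i => by positivity
  have hU0 : (0 : ℝ) < U.card := lt_of_lt_of_le (hpos 91) hUbig
  have hUne : U.Nonempty := Finset.card_pos.1 (by exact_mod_cast hU0)
  -- a neighbour with a large private neighbourhood
  obtain ⟨w, hw, hwT⟩ : ∃ w ∈ A, z ^ 1411 * U.card ≤ ((nb G w U).card : ℝ) := by
    by_contra hcon
    push Not at hcon
    have hAne : A.Nonempty := by
      obtain ⟨x, hx⟩ := hUne
      obtain ⟨a, ha, _⟩ := hU x hx
      exact ⟨a, ha⟩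
    have h1 : U ⊆ A.biUnion (fun a => nb G a U) := by
      intro x hx
      obtain ⟨a, ha, hax, _⟩ := hU x hx
      exact Finset.mem_biUnion.2 ⟨a, ha, mem_nb.2 ⟨hx, hax⟩⟩
    have h2 : ((A.biUnion (fun a => nb G a U)).card : ℝ) ≤ ∑ a ∈ A, ((nb G a U).card : ℝ) := by
      exact_mod_cast Finset.card_biUnion_le
    have h3 := Finset.sum_lt_sum_of_nonempty hAne hcon
    simp only [Finset.sum_const, nsmul_eq_mul] at h3
    have h4 := card_le_real h1
    nlinarith
  set T := nb G w U with hT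
  have hTU : T ⊆ U := nb_subset _ _ _
  have hexp := hcrit.le_card_union_nbs hUne hz hTU (le_trans (by
    gcongr ?_ * _
    exact pow_le_pow_of_le_one hz.le hz1 (by norm_num)) hwT)
  set D := nbs G T U \ T with hD
  have hDU : D ⊆ U := Finset.sdiff_subset.trans (nbs_subset _ _ _)
  have hDcard : z ^ 93 * n ≤ D.card := by
    have h1 : T ∪ nbs G T U = T ∪ D := by rw [hD, Finset.union_sdiff_self_eq_union]
    rw [h1] at hexp
    have h2 := card_union_le_real T D
    have h3 := hdegA w hw
    have h4 : z ^ 92 * n ≤ z * U.card := by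
      calc z ^ 92 * n = z * (z ^ 91 * n) := by ring
        _ ≤ _ := by gcongr
    have h5 := @hpow 92 93 (by norm_num)
    have h6 := @hpow 92 100 (by norm_num)
    have := hpos 92
    linarith
  have hchoice : ∀ x, ∃ a, x ∈ U → a ∈ A ∧ G.Adj a x ∧ ∀ a' ∈ A, G.Adj a' x → a' = a := by
    intro x
    by_cases hx : x ∈ U
    · obtain ⟨a, h1, h2, h3⟩ := hU x hx
      exact ⟨a, fun _ => ⟨h1, h2, h3⟩⟩
    · exact ⟨x, fun h => absurd h hx⟩
  choose f hf using hchoice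
  have hDw : ∀ x ∈ D, ¬ G.Adj w x := by
    intro x hx hwx
    exact (Finset.mem_sdiff.1 hx).2 (mem_nb.2 ⟨hDU hx, hwx⟩)
  have hqa : ∀ q ∈ T, ∀ a ∈ A, G.Adj a q → a = w := by
    intro q hq a ha haq
    have hq' := mem_nb.1 hq
    rw [(hf q hq'.1).2.2 a ha haq, (hf q hq'.1).2.2 w hw hq'.2]
  have hDa : ∀ x ∈ D, G.Adj w (f x) := by
    intro x hx
    by_contra hcon
    obtain ⟨_, q, hq, hqx⟩ := mem_nbs.1 (Finset.mem_sdiff.1 hx).1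
    have hx' := hf x (hDU hx)
    have hq' := mem_nb.1 hq
    have hne : f x ≠ w := fun h => hDw x hx (h ▸ hx'.2.1)
    exact hG v w q x (f x) (hA w hw) hq'.2 hqx hx'.2.1.symm (hA _ hx'.1).symm
      (hv q hq'.1) (hv x (hDU hx)) (hDw x hx) hcon
      (fun h => hne (hqa q hq _ hx'.1 h.symm))
  obtain ⟨k, hk1, hk2⟩ := exists_count hz hz1
  set m := z ^ 100 * n with hm
  have hm0 : 0 < m := hpos 100
  obtain ⟨R, hR, hRR⟩ := exists_fiber_groups f (m := m) (s := 2 * k * m) (by positivity)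
    hm0.le k D (fun a => by
      by_cases ha : a ∈ A
      · refine le_trans (card_le_real fun x hx => ?_) (hdegA a ha)
        rw [Finset.mem_filter] at hx
        exact mem_nb.2 ⟨hDU hx.1, hx.2 ▸ (hf x (hDU hx.1)).2.1⟩
      · have : D.filter (fun x => f x = a) = ∅ := by
          refine Finset.filter_eq_empty_iff.2 fun x hx h => ha (h ▸ (hf x (hDU hx)).1)
        rw [this]
        simpa using hm0.le) (by
      have h1 : (k : ℝ) * (2 * k * m + m) = (2 * (k * z) * (k * z) + z * (k * z)) * (z ^ 98 * n) := by
        rw [hm]; ring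
      rw [h1]
      have h2 : 2 * (k * z) * (k * z) + z * (k * z) ≤ 10 := by nlinarith
      have h3 := @hpow 93 98 (by norm_num)
      have h4 := mul_le_mul_of_nonneg_right h2 (hpos 98).le
      have := hpos 98
      linarith)
  obtain ⟨Y, hY, hYY⟩ := exists_anti_parts G hm0 T k (Finset.range k) R (by simp)
    (fun c hc x hx => (mem_nbs.1 (Finset.mem_sdiff.1
      ((hR c (Finset.mem_range.1 hc)).1 hx)).1).2)
    (fun c hc q hq => le_trans (card_le_real (nb_mono G q
      ((hR c (Finset.mem_range.1 hc)).1.trans hDU))) (hdegU q (hTU hq)))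
    (fun c hc => (hR c (Finset.mem_range.1 hc)).2)
    (fun c hc c' hc' hne x hx x' hx' q hq hqx hqx' hxx' => by
      have hxD := (hR c (Finset.mem_range.1 hc)).1 hx
      have hxD' := (hR c' (Finset.mem_range.1 hc')).1 hx'
      have hff := hRR c (Finset.mem_range.1 hc) c' (Finset.mem_range.1 hc') hne x hx x' hx'
      have h1 := hf x (hDU hxD)
      have h2 := hf x' (hDU hxD')
      refine hG x' (f x') w q x h2.2.1.symm (hDa x' hxD').symm (mem_nb.1 hq).2 hqx hxx'
        (fun h => hDw x' hxD' h.symm) (fun h => hqx' h.symm)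
        (fun h => hDw x' hxD' (hqa q hq _ h2.1 h ▸ h2.2.1))
        (fun h => hff (h1.2.2 _ h2.1 h).symm) (hDw x hxD))
  have := hcrit.card_mul_le_one hUne hz (Finset.range k) Y
    (fun c hc => (hY c hc).1.trans ((hR c (Finset.mem_range.1 hc)).1.trans hDU))
    (fun c hc => le_trans (by
      have h1 := @hpow 100 1500 (by norm_num)
      have h2 : z ^ 1500 * (U.card : ℝ) ≤ z ^ 1500 * n := by gcongr
      have := hpos 1500
      linarith) (hY c hc).2)
    (fun c hc c' hc' hne => by
      rw [Finset.disjoint_left]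
      intro x hx hx'
      exact hRR c (Finset.mem_range.1 hc) c' (Finset.mem_range.1 hc') hne x
        ((hY c hc).1 hx) x ((hY c' hc').1 hx') rfl)
    hYY
  rw [Finset.card_range] at this
  linarith

/-- The neighbourhood of `v` is sparse to the rest once a small set is removed. -/
theorem C5Free.exists_small_cover {G : SimpleGraph V} (hG : C5Free G) {z : ℝ} (hz : 0 < z)
    (hz0 : z ≤ 1 / 10 ^ 10) {S : Finset V} (hS : S.Nonempty) (hres : Restricted G (z ^ 100) S)
    (hcrit : ∀ X ⊆ S, z ^ 600 * S.card ≤ (X.card : ℝ) →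
      ∃ U ⊆ X, z * X.card ≤ (U.card : ℝ) ∧ Crit G (1 / 1500) U) {v : V} (hv : v ∈ S) :
    ∃ H ⊆ S, nb G v S ⊆ H ∧ (H.card : ℝ) ≤ z ^ 88 * S.card ∧
      ∀ a ∈ nb G v S, ((nb G a (S \ H)).card : ℝ) ≤ z ^ 1310 * S.card := by
  have hz1 : z ≤ 1 := hz0.trans (by norm_num)
  have hn : (0 : ℝ) < S.card := by exact_mod_cast hS.card_pos
  have hpow : ∀ {i j : ℕ}, i < j → 10 ^ 10 * (z ^ j * (S.card : ℝ)) ≤ z ^ i * S.card :=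
    fun h => const_mul_pow_le hz hz0 hn.le h
  have hpos : ∀ i : ℕ, 0 < z ^ i * (S.card : ℝ) := fun i => by positivity
  obtain ⟨L, hL1, hL2, hL3⟩ := exists_two_thirds_pow hz hz0
  rcases private_neighbours_or_small_degrees G (nb G v S) (S \ nb G v S)
    (Δ := z ^ 100 * S.card) (θ := z ^ 90 * S.card) (hpos 100).le
    (fun a ha => le_trans (card_le_real (nb_mono G a Finset.sdiff_subset))
      (hres a (nb_subset _ _ _ ha))) L with
    ⟨A, hA, B, hB, hAB, hBc, hAc⟩ | ⟨H, hH, hHc, hHd⟩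
  · exfalso
    obtain ⟨U, hUB, hUc, hU⟩ := hcrit B (hB.trans Finset.sdiff_subset) (by
      have := @hpow 90 600 (by norm_num)
      have := hpos 600
      linarith)
    have hUS : U ⊆ S := hUB.trans (hB.trans Finset.sdiff_subset)
    refine hG.no_private_neighbours hz hz0 (v := v) (A := A) (U := U) (n := S.card)
      (fun a ha => (mem_nb.1 (hA ha)).2) (fun x hx hvx => ?_) (fun x hx => hAB x (hUB hx)) hU
      (card_le_real hUS) hn ?_ ?_
      (fun a ha => le_trans (card_le_real (nb_mono G a hUS)) (hres a (nb_subset _ _ _ (hA ha))))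
      (fun a ha => le_trans (card_le_real (nb_mono G a hUS)) (hres a (hUS ha)))
    · have := Finset.mem_sdiff.1 (hB (hUB hx))
      exact this.2 (mem_nb.2 ⟨this.1, hvx⟩)
    · calc z ^ 91 * (S.card : ℝ) = z * (z ^ 90 * S.card) := by ring
        _ ≤ z * B.card := by gcongr
        _ ≤ _ := hUc
    · have h1 : ((S \ nb G v S).card : ℝ) ≤ S.card := card_le_real Finset.sdiff_subset
      have h2 : (A.card : ℝ) * (z ^ 1311 * (z ^ 100 * S.card)) ≤
          A.card * ((2 / 3) ^ L * (z ^ 100 * S.card)) := by gcongr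
      have h3 : (A.card : ℝ) * z ^ 1411 * S.card ≤ 1 * S.card := by
        have : (A.card : ℝ) * (z ^ 1311 * (z ^ 100 * S.card)) = A.card * z ^ 1411 * S.card := by
          ring
        linarith
      exact le_of_mul_le_mul_right h3 hn
  · refine ⟨nb G v S ∪ H, Finset.union_subset (nb_subset _ _ _)
      (hH.trans Finset.sdiff_subset), Finset.subset_union_left, ?_, ?_⟩
    · have h1 := card_union_le_real (nb G v S) H
      have h2 := hres v hv
      have h3 : 2 * L * (z ^ 90 * (S.card : ℝ)) ≤ z ^ 89 * S.card := by
        calc 2 * L * (z ^ 90 * (S.card : ℝ)) = (2 * L * z) * (z ^ 89 * S.card) := by ring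
          _ ≤ 1 * (z ^ 89 * S.card) := by gcongr
          _ = _ := one_mul _
      have h4 := @hpow 88 89 (by norm_num)
      have h5 := @hpow 88 100 (by norm_num)
      have := hpos 88
      linarith
    · intro a ha
      rw [show S \ (nb G v S ∪ H) = (S \ nb G v S) \ H from sdiff_sdiff_left.symm]
      refine (hHd a ha).trans ?_
      have h1 : (z : ℝ) ^ 100 ≤ 1 := pow_le_one₀ hz.le hz1
      calc (2 / 3 : ℝ) ^ L * (z ^ 100 * S.card) ≤ z ^ 1310 * (1 * S.card) := by gcongr
        _ = _ := by ring

/-- Two vertices of `X` with a common neighbour in `Y`. -/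
def Linked (G : SimpleGraph V) (X Y : Finset V) (a b : V) : Prop :=
  a ∈ X ∧ b ∈ X ∧ ∃ h ∈ Y, G.Adj a h ∧ G.Adj b h

/-- Connectivity of the vertices of `X` in the bipartite graph between `X` and `Y`. -/
def Conn (G : SimpleGraph V) (X Y : Finset V) : V → V → Prop :=
  Relation.ReflTransGen (Linked G X Y)

/-- The part in `X` of the component of `a` in the bipartite graph between `X` and `Y`. -/
noncomputable def cls (G : SimpleGraph V) (X Y : Finset V) (a : V) : Finset V :=
  X.filter (fun b => Conn G X Y a b)

theorem Conn.symm {G : SimpleGraph V} {X Y : Finset V} {a b : V} (h : Conn G X Y a b) :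
    Conn G X Y b a := by
  induction h with
  | refl => exact Relation.ReflTransGen.refl
  | tail _ h ih =>
    obtain ⟨h1, h2, y, hy, h3, h4⟩ := h
    exact Relation.ReflTransGen.head ⟨h2, h1, y, hy, h4, h3⟩ ih

theorem Conn.trans {G : SimpleGraph V} {X Y : Finset V} {a b c : V} (h : Conn G X Y a b)
    (h' : Conn G X Y b c) : Conn G X Y a c := Relation.ReflTransGen.trans h h'

theorem Conn.mono {G : SimpleGraph V} {X Y X' Y' : Finset V} (hX : X ⊆ X') (hY : Y ⊆ Y')
    {a b : V} (h : Conn G X Y a b) : Conn G X' Y' a b := by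
  refine Relation.ReflTransGen.mono ?_ _ _ h
  rintro a b ⟨h1, h2, y, hy, h3⟩
  exact ⟨hX h1, hX h2, y, hY hy, h3⟩

theorem cls_mono {G : SimpleGraph V} {X Y X' Y' : Finset V} (hX : X ⊆ X') (hY : Y ⊆ Y')
    (a : V) : cls G X Y a ⊆ cls G X' Y' a := by
  intro b hb
  rw [cls, Finset.mem_filter] at hb ⊢
  exact ⟨hX hb.1, hb.2.mono hX hY⟩

theorem conn_of_common {G : SimpleGraph V} {X Y : Finset V} {a b h : V} (ha : a ∈ X)
    (hb : b ∈ X) (hh : h ∈ Y) (h1 : G.Adj a h) (h2 : G.Adj b h) : Conn G X Y a b :=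
  Relation.ReflTransGen.single ⟨ha, hb, h, hh, h1, h2⟩

theorem C5Free.adj_iff_adj {G : SimpleGraph V} (hG : C5Free G) {s t a a' h h' : V}
    (hsa : G.Adj s a) (hsa' : G.Adj s a') (hsh : ¬ G.Adj s h) (hsh' : ¬ G.Adj s h')
    (hth : G.Adj t h) (hth' : G.Adj t h') (hta : ¬ G.Adj t a) (hta' : ¬ G.Adj t a')
    (h1 : G.Adj a h) (h2 : G.Adj a' h') (h3 : ¬ G.Adj a h') (h4 : ¬ G.Adj a' h) :
    G.Adj a a' ↔ G.Adj h h' := by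
  constructor
  · intro haa
    by_contra hhh
    exact hG a a' h' t h haa h2 hth'.symm hth h1.symm h3 (fun h => hta h.symm)
      (fun h => hta' h.symm) h4 (fun h => hhh h.symm)
  · intro hhh
    by_contra haa
    exact hG s a h h' a' hsa h1 hhh h2.symm hsa'.symm hsh hsh' h3 haa (fun h => h4 h.symm)

/-- `s` is a hub of `X` and `t` a hub of `Y`: each is complete to its own set and anticomplete to
the other one. -/
structure Hubs (G : SimpleGraph V) (s t : V) (X Y : Finset V) : Prop where
  left : ∀ x ∈ X, G.Adj s x
  right : ∀ y ∈ Y, G.Adj t y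
  left_not : ∀ y ∈ Y, ¬ G.Adj s y
  right_not : ∀ x ∈ X, ¬ G.Adj t x

theorem Hubs.adj_iff_adj {G : SimpleGraph V} {s t : V} {X Y : Finset V} (h : Hubs G s t X Y)
    (hG : C5Free G) {a a' y y' : V} (ha : a ∈ X) (ha' : a' ∈ X) (hy : y ∈ Y) (hy' : y' ∈ Y)
    (h1 : G.Adj a y) (h2 : G.Adj a' y') (h3 : ¬ G.Adj a y') (h4 : ¬ G.Adj a' y) :
    G.Adj a a' ↔ G.Adj y y' :=
  hG.adj_iff_adj (h.left a ha) (h.left a' ha') (h.left_not y hy) (h.left_not y' hy')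
    (h.right y hy) (h.right y' hy') (h.right_not a ha) (h.right_not a' ha') h1 h2 h3 h4

theorem Hubs.adj_congr {G : SimpleGraph V} {s t : V} {X Y : Finset V} (h : Hubs G s t X Y)
    (hG : C5Free G) {a a' b y : V} (haa : Conn G X Y a a') (hab : ¬ Conn G X Y a b)
    (hb : b ∈ X) (hy : y ∈ Y) (hby : G.Adj b y) : G.Adj a b ↔ G.Adj a' b := by
  induction haa with
  | refl => rfl
  | @tail c d hac hcd ih =>
    rw [ih]
    have hcb : ¬ Conn G X Y c b := fun hcb => hab (hac.trans hcb)
    have hdb : ¬ Conn G X Y d b := fun hdb =>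
      hab ((hac.tail hcd).trans hdb)
    obtain ⟨hc, hd, y', hy', hcy, hdy⟩ := hcd
    have hn1 : ¬ G.Adj c y := fun hh => hcb (conn_of_common hc hb hy hh hby)
    have hn2 : ¬ G.Adj d y := fun hh => hdb (conn_of_common hd hb hy hh hby)
    have hn3 : ¬ G.Adj b y' := fun hh => hcb (conn_of_common hc hb hy' hcy hh)
    rw [h.adj_iff_adj hG hc hb hy' hy hcy hby hn1 hn3,
      h.adj_iff_adj hG hd hb hy' hy hdy hby hn2 hn3]

set_option maxHeartbeats 400000 in
/-- Deleting few vertices makes all components of the bipartite graph small. -/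
theorem Hubs.exists_small_classes {G : SimpleGraph V} {s t : V} {X Y : Finset V}
    (h : Hubs G s t X Y) (hG : C5Free G) {d θ M : ℝ} (hd : 0 < d) (hθ : 0 < θ)
    (hM : 0 < M)
    (hX : ∀ x ∈ X, ((nb G x Y).card : ℝ) ≤ d) (hY : ∀ y ∈ Y, ((nb G y X).card : ℝ) ≤ d)
    (hst : ∀ C ⊆ X, M / 2 ≤ (C.card : ℝ) →
      ¬ Restricted G (2 * θ) C ∧ ¬ Restricted Gᶜ (2 * θ) C) :
    ∃ Z : Finset V, (Z.card : ℝ) * (θ * M ^ 2) ≤ 4 * d * X.card ^ 2 ∧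
      ∀ a ∈ X \ Z, ((cls G (X \ Z) (Y \ Z) a).card : ℝ) ≤ M := by
  set P : Finset V → Finset (V × V) := fun Z =>
    ((X \ Z) ×ˢ (X \ Z)).filter (fun p => Conn G (X \ Z) (Y \ Z) p.1 p.2) with hP
  set l := θ * M ^ 2 / (4 * d) with hl
  have hl0 : 0 < l := by positivity
  obtain ⟨Z, hZ, hmin⟩ := Finset.exists_min_image (X ∪ Y).powerset
    (fun Z => ((P Z).card : ℝ) + l * Z.card) ⟨∅, by simp⟩
  refine ⟨Z, ?_, ?_⟩
  · have h1 := hmin ∅ (by simp)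
    have h2 : ((P ∅).card : ℝ) ≤ X.card ^ 2 := by
      have : P ∅ ⊆ X ×ˢ X := by
        refine (Finset.filter_subset _ _).trans ?_
        simp
      have := Finset.card_le_card this
      rw [Finset.card_product] at this
      have h3 : ((P ∅).card : ℝ) ≤ X.card * X.card := by exact_mod_cast this
      linarith [sq (X.card : ℝ)]
    simp only [Finset.card_empty, Nat.cast_zero, mul_zero, add_zero] at h1
    have h3 : l * Z.card ≤ X.card ^ 2 := by
      have : (0 : ℝ) ≤ (P Z).card := by positivity
      linarith
    have h4 : (Z.card : ℝ) * (θ * M ^ 2) = 4 * d * (l * Z.card) := by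
      rw [hl]; field_simp
    rw [h4]
    gcongr
  intro a₀ ha₀
  by_contra hbig
  push Not at hbig
  set C := cls G (X \ Z) (Y \ Z) a₀ with hC
  have hCX : C ⊆ X \ Z := Finset.filter_subset _ _
  have hCpos : (0 : ℝ) < C.card := hM.trans hbig
  have hCconn : ∀ a ∈ C, ∀ b, b ∈ C ↔ b ∈ X \ Z ∧ Conn G (X \ Z) (Y \ Z) a b := by
    intro a ha b
    rw [hC, cls, Finset.mem_filter] at *
    exact ⟨fun hb => ⟨hb.1, ha.2.symm.trans hb.2⟩, fun hb => ⟨hb.1, ha.2.trans hb.2⟩⟩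
  have hdich : ∀ a ∈ C, ((nb G a C).card : ℝ) ≤ θ * C.card ∨
      ((nb Gᶜ a C).card : ℝ) ≤ θ * C.card := by
    intro a ha
    by_cases hiso : ∃ y ∈ Y \ Z, G.Adj a y
    swap
    · left
      have : nb G a C = ∅ := by
        refine Finset.eq_empty_of_forall_notMem fun b hb => ?_
        obtain ⟨hb, hab⟩ := mem_nb.1 hb
        have h1 := ((hCconn a ha b).1 hb).2
        rcases Relation.ReflTransGen.cases_head h1 with rfl | ⟨c, ⟨_, _, y, hy, hay, _⟩, _⟩
        · exact G.loopless.irrefl _ hab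
        · exact hiso ⟨y, hy, hay⟩
      rw [this]
      simp only [Finset.card_empty, Nat.cast_zero]
      positivity
    obtain ⟨y₀, hy₀, hay₀⟩ := hiso
    set Z' := nb G a (Y \ Z) ∪ nb G y₀ (X \ Z) with hZ'
    have hZ'c : (Z'.card : ℝ) ≤ 2 * d := by
      have h1 := card_union_le_real (nb G a (Y \ Z)) (nb G y₀ (X \ Z))
      have h2 := hX a (Finset.mem_sdiff.1 (hCX ha)).1
      have h3 := hY y₀ (Finset.mem_sdiff.1 hy₀).1
      have h4 := card_le_real (nb_mono G a (Finset.sdiff_subset (s := Y) (t := Z)))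
      have h5 := card_le_real (nb_mono G y₀ (Finset.sdiff_subset (s := X) (t := Z)))
      linarith
    have hsX : X \ (Z ∪ Z') ⊆ X \ Z := Finset.sdiff_subset_sdiff subset_rfl Finset.subset_union_left
    have hsY : Y \ (Z ∪ Z') ⊆ Y \ Z := Finset.sdiff_subset_sdiff subset_rfl Finset.subset_union_left
    obtain ⟨x, hxC, hxK⟩ : ∃ x ∈ C, (1 - θ) * C.card <
        ((C.filter (fun k => k ∈ X \ (Z ∪ Z') ∧
          Conn G (X \ (Z ∪ Z')) (Y \ (Z ∪ Z')) x k)).card : ℝ) := by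
      by_contra hcon
      push Not at hcon
      have h1 := hmin (Z ∪ Z') (by
        rw [Finset.mem_powerset] at *
        refine Finset.union_subset hZ (Finset.union_subset ?_ ?_)
        · exact (nb_subset _ _ _).trans (Finset.sdiff_subset.trans Finset.subset_union_right)
        · exact (nb_subset _ _ _).trans (Finset.sdiff_subset.trans Finset.subset_union_left))
      have h2 := card_union_le_real Z Z'
      have hsub : P (Z ∪ Z') ⊆ P Z := by
        intro p hp
        simp only [hP, Finset.mem_filter, Finset.mem_product] at hp ⊢
        exact ⟨⟨hsX hp.1.1, hsX hp.1.2⟩, hp.2.mono hsX hsY⟩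
      set T := (C ×ˢ C).filter (fun p => p ∈ P (Z ∪ Z')) with hT
      have hCC : C ×ˢ C ⊆ P Z := by
        intro p hp
        simp only [hP, Finset.mem_filter, Finset.mem_product] at hp ⊢
        exact ⟨⟨hCX hp.1, hCX hp.2⟩, ((hCconn p.1 hp.1 p.2).1 hp.2).2⟩
      have hTc : (T.card : ℝ) ≤ C.card * ((1 - θ) * C.card) := by
        have h3 : T ⊆ C.biUnion (fun x => (C.filter (fun k => k ∈ X \ (Z ∪ Z') ∧
          Conn G (X \ (Z ∪ Z')) (Y \ (Z ∪ Z')) x k)).image (fun k => (x, k))) := by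
          intro p hp
          simp only [hT, hP, Finset.mem_filter, Finset.mem_product] at hp
          refine Finset.mem_biUnion.2 ⟨p.1, hp.1.1, Finset.mem_image.2 ⟨p.2, ?_, rfl⟩⟩
          exact Finset.mem_filter.2 ⟨hp.1.2, hp.2.1.2, hp.2.2⟩
        refine (card_le_real h3).trans (card_biUnion_le_real _ _ _ fun x hx => ?_)
        refine le_trans ?_ (hcon x hx)
        exact_mod_cast Finset.card_image_le
      have h4 : P (Z ∪ Z') ⊆ (P Z \ (C ×ˢ C)) ∪ T := by
        intro p hp
        by_cases hpC : p ∈ C ×ˢ C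
        · exact Finset.mem_union_right _ (Finset.mem_filter.2 ⟨hpC, hp⟩)
        · exact Finset.mem_union_left _ (Finset.mem_sdiff.2 ⟨hsub hp, hpC⟩)
      have h5 := (card_le_real h4).trans (card_union_le_real _ _)
      rw [card_sdiff_real hCC, Finset.card_product] at h5
      push_cast at h5
      have h6 : l * (2 * d) = θ * M ^ 2 / 2 := by rw [hl]; field_simp; ring
      have h7 : l * Z'.card ≤ l * (2 * d) := by gcongr
      have h8 : l * ((Z ∪ Z').card : ℝ) ≤ l * (Z.card + Z'.card) := by gcongr
      have h9 : M ^ 2 ≤ (C.card : ℝ) ^ 2 := by gcongr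
      have h10 : θ * M ^ 2 ≤ θ * (C.card : ℝ) ^ 2 := by gcongr
      have h11 : 0 < θ * M ^ 2 := by positivity
      nlinarith
    set K := C.filter (fun k => k ∈ X \ (Z ∪ Z') ∧
          Conn G (X \ (Z ∪ Z')) (Y \ (Z ∪ Z')) x k) with hK
    have hCK : ((C \ K).card : ℝ) ≤ θ * C.card := by
      rw [card_sdiff_real (Finset.filter_subset _ _)]
      linarith
    have hpure : ∀ k, Conn G (X \ (Z ∪ Z')) (Y \ (Z ∪ Z')) x k → (G.Adj a x ↔ G.Adj a k) := by
      intro k hk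
      have hmem : a ∈ X := (Finset.mem_sdiff.1 (hCX ha)).1
      have hy₀' : y₀ ∈ Y := (Finset.mem_sdiff.1 hy₀).1
      have step : ∀ c ∈ X \ (Z ∪ Z'), ∀ y ∈ Y \ (Z ∪ Z'), G.Adj c y →
          (G.Adj a c ↔ G.Adj y₀ y) := by
        intro c hc y hy hcy
        have hc1 := hsX hc
        have hy1 := hsY hy
        simp only [Finset.mem_sdiff, Finset.mem_union, hZ', mem_nb, not_or, not_and] at hc hy hc1 hy1
        exact h.adj_iff_adj hG hmem hc.1 hy₀' hy.1 hay₀ hcy (hy.2.2.1 ⟨hy.1, hy.2.1⟩)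
          (fun hh => hc.2.2.2 ⟨hc.1, hc.2.1⟩ hh.symm)
      induction hk with
      | refl => rfl
      | @tail c e _ hce ih =>
        obtain ⟨hc, he, y, hy, hcy, hey⟩ := hce
        exact Iff.trans ih ((step c hc y hy hcy).trans (step e he y hy hey).symm)
    by_cases hax : G.Adj a x
    · right
      refine le_trans (card_le_real fun b hb => ?_) hCK
      obtain ⟨hb, hab⟩ := mem_nb.1 hb
      refine Finset.mem_sdiff.2 ⟨hb, fun hbK => ?_⟩
      exact ((compl_adj G a b).1 hab).2 ((hpure b (Finset.mem_filter.1 hbK).2.2).1 hax)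
    · left
      refine le_trans (card_le_real fun b hb => ?_) hCK
      obtain ⟨hb, hab⟩ := mem_nb.1 hb
      refine Finset.mem_sdiff.2 ⟨hb, fun hbK => ?_⟩
      exact hax ((hpure b (Finset.mem_filter.1 hbK).2.2).2 hab)
  have aux : ∀ (G' : SimpleGraph V) (D : Finset V), D ⊆ C → (C.card : ℝ) / 2 ≤ D.card →
      (∀ a ∈ D, ((nb G' a C).card : ℝ) ≤ θ * C.card) → Restricted G' (2 * θ) D := by
    intro G' D hDC hD hdeg v hv
    have h1 := card_le_real (nb_mono G' v hDC)
    have h2 := hdeg v hv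
    have h3 : θ * (C.card / 2) ≤ θ * (D.card : ℝ) := by gcongr
    linarith
  set C₁ := C.filter (fun a => ((nb G a C).card : ℝ) ≤ θ * C.card) with hC₁
  have hC₁C : C₁ ⊆ C := Finset.filter_subset _ _
  have hC₂ := card_sdiff_real hC₁C
  have hXC : C ⊆ X := hCX.trans Finset.sdiff_subset
  rcases le_total ((C.card : ℝ) / 2) C₁.card with hhalf | hhalf
  · exact (hst C₁ (hC₁C.trans hXC) (by linarith)).1
      (aux G C₁ hC₁C hhalf fun a ha => (Finset.mem_filter.1 ha).2)
  · refine (hst (C \ C₁) (Finset.sdiff_subset.trans hXC) (by linarith)).2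
      (aux Gᶜ (C \ C₁) Finset.sdiff_subset (by linarith) fun a ha => ?_)
    rw [Finset.mem_sdiff, hC₁, Finset.mem_filter, not_and] at ha
    exact (hdich a ha.1).resolve_left (ha.2 ha.1)

theorem Conn.exists_adj {G : SimpleGraph V} {X Y : Finset V} {a b : V} (h : Conn G X Y a b)
    (ha : ∃ y ∈ Y, G.Adj a y) : ∃ y ∈ Y, G.Adj b y := by
  rcases Relation.ReflTransGen.cases_tail h with rfl | ⟨c, _, _, _, y, hy, _, hby⟩
  · exact ha
  · exact ⟨y, hy, hby⟩

theorem Hubs.adj_congr_both {G : SimpleGraph V} {s t : V} {X Y : Finset V} (h : Hubs G s t X Y)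
    (hG : C5Free G) {a a' b b' : V} (haa : Conn G X Y a a') (hbb : Conn G X Y b b')
    (hab : ¬ Conn G X Y a b) (ha' : a' ∈ X) (hb : b ∈ X) (hay : ∃ y ∈ Y, G.Adj a y)
    (hby : ∃ y ∈ Y, G.Adj b y) : G.Adj a b ↔ G.Adj a' b' := by
  obtain ⟨y, hy, hby'⟩ := hby
  obtain ⟨y', hy', hay'⟩ := haa.exists_adj hay
  rw [h.adj_congr hG haa hab hb hy hby', G.adj_comm a', G.adj_comm a']
  exact h.adj_congr hG hbb (fun hc => hab (haa.trans hc.symm)) ha' hy' hay'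

theorem cls_disjoint {G : SimpleGraph V} {X Y : Finset V} {a b : V} (h : ¬ Conn G X Y a b) :
    Disjoint (cls G X Y a) (cls G X Y b) := by
  rw [Finset.disjoint_left]
  intro x hx hx'
  simp only [cls, Finset.mem_filter] at hx hx'
  exact h (hx.2.trans hx'.2.symm)

theorem cls_eq {G : SimpleGraph V} {X Y : Finset V} {a b : V} (h : Conn G X Y a b) :
    cls G X Y a = cls G X Y b := by
  ext x
  simp only [cls, Finset.mem_filter]
  exact ⟨fun hx => ⟨hx.1, h.symm.trans hx.2⟩, fun hx => ⟨hx.1, h.trans hx.2⟩⟩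

theorem mem_cls {G : SimpleGraph V} {X Y : Finset V} {a b : V} :
    b ∈ cls G X Y a ↔ b ∈ X ∧ Conn G X Y a b := by simp [cls]

theorem card_biUnion_le_sum_real [DecidableEq V] (C : Finset ι) (f : ι → Finset V) :
    ((C.biUnion f).card : ℝ) ≤ ∑ c ∈ C, ((f c).card : ℝ) := by
  exact_mod_cast Finset.card_biUnion_le

set_option maxHeartbeats 400000 in
/-- Given `x` in `Y`, few vertices `w` of `X` share a neighbour in `Q` with a neighbour of `x`. -/
theorem Hubs.card_crossing_le {G : SimpleGraph V} {s t r : V} {X Y Q U : Finset V}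
    (h : Hubs G s t X Y) (h' : Hubs G s r X Q) (hG : C5Free G) {z : ℝ} (hz : 0 < z) (hz1 : z ≤ 1)
    (hU : Crit G (1 / 1500) U) (hXU : X ⊆ U)
    (hY : ∀ a ∈ X, ((cls G X Y a).card : ℝ) ≤ z ^ 400 * U.card)
    (hQ : ∀ a ∈ X, ((cls G X Q a).card : ℝ) ≤ z ^ 400 * U.card) {x : V} (hx : x ∈ Y) :
    ((X.filter (fun w => (∃ y ∈ Y, G.Adj w y) ∧
      ∃ p ∈ X, G.Adj p x ∧ ∃ q ∈ Q, G.Adj w q ∧ G.Adj p q)).card : ℝ) ≤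
      2 * (z ^ 200 * U.card) := by
  set B := X.filter (fun w => (∃ y ∈ Y, G.Adj w y) ∧
      ∃ p ∈ X, G.Adj p x ∧ ∃ q ∈ Q, G.Adj w q ∧ G.Adj p q) with hB
  by_cases hne : ∃ p ∈ X, G.Adj p x
  swap
  · have : B = ∅ := by
      refine Finset.filter_eq_empty_iff.2 ?_
      rintro w _ ⟨_, p, hp, hpx, _⟩
      exact hne ⟨p, hp, hpx⟩
    rw [this]
    simp only [Finset.card_empty, Nat.cast_zero]
    positivity
  obtain ⟨p₀, hp₀, hp₀x⟩ := hne
  set F := cls G X Y p₀ with hF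
  set 𝓑 := (B \ F).image (cls G X Q) with h𝓑
  have hrep : ∀ w ∈ B \ F, w ∈ X ∧ ¬ Conn G X Y p₀ w ∧ (∃ y ∈ Y, G.Adj w y) ∧
      (∃ q ∈ Q, G.Adj w q) ∧ ∃ p ∈ X, Conn G X Y p₀ p ∧ Conn G X Q w p := by
    intro w hw
    rw [Finset.mem_sdiff, hB, Finset.mem_filter, hF, mem_cls, not_and] at hw
    obtain ⟨⟨hwX, hwY, p, hp, hpx, q, hq, hwq, hpq⟩, hwF⟩ := hw
    exact ⟨hwX, hwF hwX, hwY, ⟨q, hq, hwq⟩, p, hp, conn_of_common hp₀ hp hx hp₀x hpx,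
      conn_of_common hwX hp hq hwq hpq⟩
  have htype : ∀ w ∈ B \ F, ∀ w' ∈ B \ F, ¬ Conn G X Q w w' → ∀ a ∈ cls G X Q w,
      ∀ b ∈ cls G X Q w', G.Adj a b ↔ G.Adj w p₀ := by
    intro w hw w' hw' hww a ha b hb
    obtain ⟨hwX, hwF, ⟨y, hy, hwy⟩, hwQ, _⟩ := hrep w hw
    obtain ⟨hwX', _, _, hwQ', p, hp, hp₀p, hwp⟩ := hrep w' hw'
    rw [mem_cls] at ha hb
    rw [← h'.adj_congr_both hG ha.2 hb.2 hww ha.1 hwX' hwQ hwQ',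
      h'.adj_congr_both hG Relation.ReflTransGen.refl hwp hww hwX hwX' hwQ hwQ',
      G.adj_comm w, G.adj_comm w]
    exact (h.adj_congr hG hp₀p hwF hwX hy hwy).symm
  have htype' : ∀ w ∈ B \ F, ∀ w' ∈ B \ F, ¬ Conn G X Q w w' →
      (G.Adj w p₀ ↔ G.Adj w' p₀) := by
    intro w hw w' hw' hww
    have h1 := htype w hw w' hw' hww w (mem_cls.2 ⟨(hrep w hw).1, Relation.ReflTransGen.refl⟩) w'
      (mem_cls.2 ⟨(hrep w' hw').1, Relation.ReflTransGen.refl⟩)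
    have h2 := htype w' hw' w hw (fun hc => hww hc.symm) w'
      (mem_cls.2 ⟨(hrep w' hw').1, Relation.ReflTransGen.refl⟩) w
      (mem_cls.2 ⟨(hrep w hw).1, Relation.ReflTransGen.refl⟩)
    rw [← h1, ← h2, G.adj_comm]
  have hsum := hU.sum_card_le hz hz1 𝓑 (by
      intro C hC
      obtain ⟨w, _, rfl⟩ := Finset.mem_image.1 hC
      exact (Finset.filter_subset _ _).trans hXU) (by
      intro C hC C' hC' hCC
      obtain ⟨w, _, rfl⟩ := Finset.mem_image.1 hC
      obtain ⟨w', _, rfl⟩ := Finset.mem_image.1 hC'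
      exact cls_disjoint fun hc => hCC (cls_eq hc)) (by
      by_contra hcon
      rw [not_or] at hcon
      obtain ⟨hc1, hc2⟩ := hcon
      simp only [not_forall, Anti, not_not] at hc1 hc2
      obtain ⟨C₁, hC₁, C₂, hC₂, hne, a, ha, b, hb, hab⟩ := hc1
      obtain ⟨D₁, hD₁, D₂, hD₂, hne', a', ha', b', hb', hab'⟩ := hc2
      obtain ⟨w₁, hw₁, rfl⟩ := Finset.mem_image.1 hC₁
      obtain ⟨w₂, hw₂, rfl⟩ := Finset.mem_image.1 hC₂
      obtain ⟨u₁, hu₁, rfl⟩ := Finset.mem_image.1 hD₁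
      obtain ⟨u₂, hu₂, rfl⟩ := Finset.mem_image.1 hD₂
      have n1 : ¬ Conn G X Q w₁ w₂ := fun hc => hne (cls_eq hc)
      have n2 : ¬ Conn G X Q u₁ u₂ := fun hc => hne' (cls_eq hc)
      have t1 := (htype w₁ hw₁ w₂ hw₂ n1 a ha b hb).1 hab
      have t2 := (htype' w₁ hw₁ w₂ hw₂ n1).1 t1
      have t3 : ¬ G.Adj u₁ p₀ := fun hh =>
        ((compl_adj G _ _).1 hab').2 ((htype u₁ hu₁ u₂ hu₂ n2 a' ha' b' hb').2 hh)
      by_cases hc : Conn G X Q w₁ u₁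
      · exact t3 ((htype' w₂ hw₂ u₁ hu₁ fun h3 => n1 (hc.trans h3.symm)).1 t2)
      · exact t3 ((htype' w₁ hw₁ u₁ hu₁ hc).1 t1)) (by
      intro C hC
      obtain ⟨w, hw, rfl⟩ := Finset.mem_image.1 hC
      exact hQ w (hrep w hw).1)
  have hcov : B ⊆ F ∪ 𝓑.biUnion id := by
    intro w hw
    by_cases hwF : w ∈ F
    · exact Finset.mem_union_left _ hwF
    · have hw' := Finset.mem_sdiff.2 ⟨hw, hwF⟩
      refine Finset.mem_union_right _ (Finset.mem_biUnion.2 ⟨cls G X Q w,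
        Finset.mem_image_of_mem _ hw', mem_cls.2 ⟨(hrep w hw').1, Relation.ReflTransGen.refl⟩⟩)
  have h1 := (card_le_real hcov).trans (card_union_le_real _ _)
  have h2 : ((𝓑.biUnion id).card : ℝ) ≤ ∑ C ∈ 𝓑, (C.card : ℝ) := by
    exact card_biUnion_le_sum_real 𝓑 id
  have h3 := hY p₀ hp₀
  have h4 : z ^ 400 * (U.card : ℝ) ≤ z ^ 200 * U.card := by
    gcongr ?_ * _
    exact pow_le_pow_of_le_one hz.le hz1 (by norm_num)
  linarith

/-- Pairwise disjoint clusters inside a critical set, each complete to its own hub and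
anticomplete to the other hubs, with tiny degrees between different clusters. -/
structure Clusters (G : SimpleGraph V) (z : ℝ) (U : Finset V) (T : Finset ι)
    (W : ι → Finset V) (hub : ι → V) : Prop where
  nonempty : U.Nonempty
  subset : ∀ t ∈ T, W t ⊆ U
  disj : ∀ s ∈ T, ∀ t ∈ T, s ≠ t → Disjoint (W s) (W t)
  count : T.card * z ^ 5 ≤ 2
  card_le : ∀ t ∈ T, ((W t).card : ℝ) ≤ z ^ 4 * U.card
  hub_adj : ∀ t ∈ T, ∀ x ∈ W t, G.Adj (hub t) x
  hub_not : ∀ s ∈ T, ∀ t ∈ T, s ≠ t → ∀ x ∈ W t, ¬ G.Adj (hub s) x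
  cross : ∀ s ∈ T, ∀ t ∈ T, s ≠ t → ∀ x ∈ W s, ((nb G x (W t)).card : ℝ) ≤ z ^ 1000 * U.card
  stuck : ∀ X ⊆ U, z ^ 401 * U.card ≤ (X.card : ℝ) →
    ¬ Restricted G (z ^ 150) X ∧ ¬ Restricted Gᶜ (z ^ 150) X
  crit : Crit G (1 / 1500) U

theorem Clusters.hubs {G : SimpleGraph V} {z : ℝ} {U : Finset V} {T : Finset ι}
    {W : ι → Finset V} {hub : ι → V} (h : Clusters G z U T W hub) {s t : ι} (hs : s ∈ T)
    (ht : t ∈ T) (hst : s ≠ t) : Hubs G (hub s) (hub t) (W s) (W t) :=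
  ⟨h.hub_adj s hs, h.hub_adj t ht, h.hub_not s hs t ht hst, h.hub_not t ht s hs hst.symm⟩

theorem Clusters.mono {G : SimpleGraph V} {z : ℝ} {U : Finset V} {T : Finset ι}
    {W W' : ι → Finset V} {hub : ι → V} (h : Clusters G z U T W hub)
    (hW : ∀ t ∈ T, W' t ⊆ W t) : Clusters G z U T W' hub where
  nonempty := h.nonempty
  subset t ht := (hW t ht).trans (h.subset t ht)
  disj s hs t ht hst := Finset.disjoint_of_subset_left (hW s hs)
    (Finset.disjoint_of_subset_right (hW t ht) (h.disj s hs t ht hst))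
  count := h.count
  card_le t ht := (card_le_real (hW t ht)).trans (h.card_le t ht)
  hub_adj t ht x hx := h.hub_adj t ht x (hW t ht hx)
  hub_not s hs t ht hst x hx := h.hub_not s hs t ht hst x (hW t ht hx)
  cross s hs t ht hst x hx := (card_le_real (nb_mono G x (hW t ht))).trans
    (h.cross s hs t ht hst x (hW s hs hx))
  stuck := h.stuck
  crit := h.crit

theorem sum_card_filter_comm {α β : Type*} (r : α → β → Prop) (A : Finset α) (B : Finset β) :
    ∑ a ∈ A, ((B.filter (r a)).card : ℝ) = ∑ b ∈ B, ((A.filter fun a => r a b).card : ℝ) := by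
  exact_mod_cast Finset.sum_card_bipartiteAbove_eq_sum_card_bipartiteBelow (s := A) (t := B) r

theorem card_filter_mul_le {α β : Type*} (r : α → β → Prop) (A : Finset α) (B : Finset β)
    {c d : ℝ} (h : ∀ b ∈ B, ((A.filter fun a => r a b).card : ℝ) ≤ c) :
    ((A.filter fun a => d < ((B.filter (r a)).card : ℝ)).card : ℝ) * d ≤ B.card * c := by
  have h1 := Finset.sum_le_sum h
  rw [← sum_card_filter_comm, Finset.sum_const, nsmul_eq_mul] at h1
  refine le_trans ?_ h1
  rw [← nsmul_eq_mul, ← Finset.sum_const]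
  refine (Finset.sum_le_sum fun a ha => (Finset.mem_filter.1 ha).2.le).trans ?_
  exact Finset.sum_le_sum_of_subset_of_nonneg (Finset.filter_subset _ _) fun _ _ _ => by positivity

theorem card_mul_le_card_filter {α β : Type*} (r : α → β → Prop) (A : Finset α) (B : Finset β)
    {c : ℝ} (k : ℕ) (h : ∀ a ∈ A, c ≤ ((B.filter (r a)).card : ℝ)) :
    A.card * c ≤ A.card * (B.filter fun b => k ≤ (A.filter fun a => r a b).card).card +
      k * B.card := by
  have h1 := Finset.sum_le_sum h
  rw [sum_card_filter_comm, Finset.sum_const, nsmul_eq_mul] at h1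
  refine h1.trans ?_
  rw [← Finset.sum_filter_add_sum_filter_not B fun b => k ≤ (A.filter fun a => r a b).card]
  refine add_le_add ?_ ?_
  · refine (Finset.sum_le_card_nsmul _ _ (A.card : ℝ) fun b _ =>
      card_le_real (Finset.filter_subset _ _)).trans ?_
    rw [nsmul_eq_mul, mul_comm]
  · refine (Finset.sum_le_card_nsmul _ _ (k : ℝ) fun b hb => ?_).trans ?_
    · have := (Finset.mem_filter.1 hb).2
      exact_mod_cast (not_le.1 this).le
    · rw [nsmul_eq_mul, mul_comm]
      exact mul_le_mul_of_nonneg_left (card_le_real (Finset.filter_subset _ _)) (by positivity)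

theorem Clusters.card_low_le {G : SimpleGraph V} {z : ℝ} {U : Finset V} {T : Finset ι}
    {W : ι → Finset V} {hub : ι → V} (h : Clusters G z U T W hub) (hz : 0 < z) (hz1 : z ≤ 1)
    {X : Finset V} (hX : X ⊆ U) :
    ((X.filter fun x => ((nb G x X).card : ℝ) < z ^ 170 * U.card).card : ℝ) ≤ z ^ 20 * U.card := by
  by_contra hcon
  push Not at hcon
  have hsub := Finset.filter_subset (fun x => ((nb G x X).card : ℝ) < z ^ 170 * U.card) X
  refine (h.stuck _ (hsub.trans hX) (le_trans ?_ hcon.le)).1 ?_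
  · gcongr ?_ * _
    exact pow_le_pow_of_le_one hz.le hz1 (by norm_num)
  · intro x hx
    refine (card_le_real (nb_mono G x hsub)).trans ((Finset.mem_filter.1 hx).2.le.trans ?_)
    calc z ^ 170 * (U.card : ℝ) = z ^ 150 * (z ^ 20 * U.card) := by ring
      _ ≤ _ := by gcongr

/-- A vertex of a cluster with neighbours of large degree in many other clusters, most vertices of
which share no neighbour with them in the cluster, cannot exist. -/
theorem Clusters.false_of_star {G : SimpleGraph V} {z : ℝ} {U : Finset V} {T : Finset ι}
    {W : ι → Finset V} {hub : ι → V} (h : Clusters G z U T W hub) (hG : C5Free G) (hz : 0 < z)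
    (hz0 : z ≤ 1 / 10 ^ 10) {s : ι} (hs : s ∈ T) {w : V} (hw : w ∈ W s) {J : Finset ι}
    (hJ : J ⊆ T) (hsJ : s ∉ J) (hk1 : 1 < J.card * z) (hk2 : J.card * z ≤ 2) {q : ι → V}
    (hq : ∀ t ∈ J, q t ∈ W t ∧ G.Adj w (q t) ∧
      z ^ 170 * U.card ≤ ((nb G (q t) (nbs G (W s) (W t))).card : ℝ)) {B : Finset V}
    (hB : (B.card : ℝ) ≤ z ^ 172 * U.card)
    (hbad : ∀ t ∈ J, ∀ j ∈ J, ∀ x ∈ W t, x ∉ B → ∀ p ∈ W s, G.Adj p x → ¬ G.Adj p (q j)) :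
    False := by
  have hU0 : (0 : ℝ) < U.card := by exact_mod_cast h.nonempty.card_pos
  have hpow : ∀ {i j : ℕ}, i < j → 10 ^ 10 * (z ^ j * (U.card : ℝ)) ≤ z ^ i * U.card :=
    fun hij => const_mul_pow_le hz hz0 hU0.le hij
  have hpos : ∀ i : ℕ, 0 < z ^ i * (U.card : ℝ) := fun i => by positivity
  have hne : ∀ t ∈ J, s ≠ t := fun t ht hst => hsJ (hst ▸ ht)
  have hkz : ∀ i : ℕ, J.card * (z ^ (i + 1) * U.card) ≤ 2 * (z ^ i * (U.card : ℝ)) := by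
    intro i
    calc J.card * (z ^ (i + 1) * U.card) = (J.card * z) * (z ^ i * (U.card : ℝ)) := by ring
      _ ≤ _ := mul_le_mul_of_nonneg_right hk2 (hpos i).le
  set R : ι → Finset V := fun t => nb G (q t) (nbs G (W s) (W t)) \
    ((nb G w (W t) ∪ (J.erase t).biUnion fun j => nb G (q j) (W t)) ∪ B) with hR
  have hRmem : ∀ t x, x ∈ R t → x ∈ W t ∧ (∃ p ∈ W s, G.Adj p x) ∧ G.Adj (q t) x ∧
      ¬ G.Adj w x ∧ (∀ j ∈ J, j ≠ t → ¬ G.Adj (q j) x) ∧ x ∉ B := by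
    intro t x hx
    simp only [hR, Finset.mem_sdiff, Finset.mem_union, mem_nb, mem_nbs, Finset.mem_biUnion,
      Finset.mem_erase, not_or, not_and, not_exists] at hx
    obtain ⟨⟨⟨h1, h2⟩, h3⟩, ⟨h4, h5⟩, h6⟩ := hx
    exact ⟨h1, h2, h3, h4 h1, fun j hj hjt => h5 j ⟨hjt, hj⟩ h1, h6⟩
  obtain ⟨Y, hY1, hY2⟩ := exists_anti_parts G (hpos 173)
    ((W s).filter fun p => ∀ j ∈ J, ¬ G.Adj p (q j)) J.card J R rfl
    (by
      intro t ht x hx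
      obtain ⟨h1, ⟨p, hp, hpx⟩, _, _, _, h6⟩ := hRmem t x hx
      exact ⟨p, Finset.mem_filter.2 ⟨hp, fun j hj => hbad t ht j hj x h1 h6 p hp hpx⟩, hpx⟩)
    (by
      intro t ht p hp
      have h1 := h.cross s hs t (hJ ht) (hne t ht) p (Finset.mem_filter.1 hp).1
      have h2 : nb G p (R t) ⊆ nb G p (W t) := nb_mono G p fun x hx => (hRmem t x hx).1
      have h3 := card_le_real h2
      have h4 := @hpow 173 1000 (by norm_num)
      linarith [hpos 1000])
    (by
      intro t ht
      obtain ⟨h1, h2, h3⟩ := hq t ht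
      have e1 := h.cross s hs t (hJ ht) (hne t ht) w hw
      have e2 := card_biUnion_le_real (J.erase t) (fun j => nb G (q j) (W t)) (z ^ 1000 * U.card)
        fun j hj => h.cross j (hJ (Finset.mem_of_mem_erase hj)) t (hJ ht)
          (Finset.ne_of_mem_erase hj) _ (hq j (Finset.mem_of_mem_erase hj)).1
      have e3 : ((J.erase t).card : ℝ) ≤ J.card := card_le_real (Finset.erase_subset _ _)
      have e4 := card_sub_le_sdiff_real
        ((nb G w (W t) ∪ (J.erase t).biUnion fun j => nb G (q j) (W t)) ∪ B)
        (nb G (q t) (nbs G (W s) (W t)))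
      have e5 := card_union_le_real
        (nb G w (W t) ∪ (J.erase t).biUnion fun j => nb G (q j) (W t)) B
      have e6 := card_union_le_real (nb G w (W t)) ((J.erase t).biUnion fun j => nb G (q j) (W t))
      have e7 := mul_le_mul_of_nonneg_right e3 (hpos 1000).le
      have e8 := hkz 999
      have e9 := hkz 172
      have f1 := @hpow 171 172 (by norm_num)
      have f2 := @hpow 170 171 (by norm_num)
      have f3 := @hpow 171 999 (by norm_num)
      have f4 := @hpow 999 1000 (by norm_num)
      change 2 * (J.card : ℝ) * (z ^ 173 * U.card) ≤ ((nb G (q t) (nbs G (W s) (W t)) \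
        ((nb G w (W t) ∪ (J.erase t).biUnion fun j => nb G (q j) (W t)) ∪ B)).card : ℝ)
      norm_num at e8 e9
      linarith [hpos 170, hpos 171, hpos 172, hpos 999, hpos 1000])
    (by
      intro c hc c' hc' hcc x hx x' hx' p hp hpx hpx' hxx
      obtain ⟨hp, hpq⟩ := Finset.mem_filter.1 hp
      obtain ⟨a1, _, a3, a4, a5, _⟩ := hRmem c x hx
      obtain ⟨b1, _, b3, b4, b5, _⟩ := hRmem c' x' hx'
      have hpw : G.Adj p w := by
        by_contra hpw
        exact hG (hub s) w (q c) x p (h.hub_adj s hs w hw) (hq c hc).2.1 a3 hpx.symm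
          (h.hub_adj s hs p hp).symm
          (h.hub_not s hs c (hJ hc) (hne c hc) _ (hq c hc).1)
          (h.hub_not s hs c (hJ hc) (hne c hc) _ a1) a4 (fun h => hpw h.symm)
          (fun h => hpq c hc h.symm)
      exact hG x p w (q c') x' hpx.symm hpw (hq c' hc').2.1 b3 hxx.symm (fun h => a4 h.symm)
        (fun h => a5 c' hc' (Ne.symm hcc) h.symm) (hpq c' hc') hpx' b4)
  have hYW : ∀ t ∈ J, Y t ⊆ W t := fun t ht x hx => (hRmem t x ((hY1 t ht).1 hx)).1
  have := h.crit.card_mul_le_one h.nonempty hz J Y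
    (fun t ht => (hYW t ht).trans (h.subset t (hJ ht)))
    (fun t ht => le_trans (by
      have := @hpow 173 1500 (by norm_num)
      linarith [hpos 1500]) (hY1 t ht).2)
    (fun c hc c' hc' hcc => Finset.disjoint_of_subset_left (hYW c hc)
      (Finset.disjoint_of_subset_right (hYW c' hc') (h.disj c (hJ hc) c' (hJ hc') hcc))) hY2
  linarith

/-- Some vertex in the cluster of `w` is adjacent to `x` and shares with `w` a neighbour outside
the cluster. -/
def Crossing (G : SimpleGraph V) (T : Finset ι) (W : ι → Finset V) (w x : V) : Prop :=
  ∃ s ∈ T, ∃ t ∈ T, ∃ j ∈ T, s ≠ t ∧ s ≠ j ∧ w ∈ W s ∧ x ∈ W t ∧ (∃ y ∈ W t, G.Adj w y) ∧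
    ∃ p ∈ W s, G.Adj p x ∧ ∃ q ∈ W j, G.Adj w q ∧ G.Adj p q

theorem Clusters.card_crossing_le {G : SimpleGraph V} {z : ℝ} {U : Finset V} {T : Finset ι}
    {W : ι → Finset V} {hub : ι → V} (h : Clusters G z U T W hub) (hG : C5Free G) (hz : 0 < z)
    (hz0 : z ≤ 1 / 10 ^ 10)
    (hcls : ∀ s ∈ T, ∀ t ∈ T, s ≠ t → ∀ a ∈ W s,
      ((cls G (W s) (W t) a).card : ℝ) ≤ z ^ 400 * U.card) (x : V) :
    ((U.filter fun w => Crossing G T W w x).card : ℝ) ≤ z ^ 184 * U.card := by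
  have hU0 : (0 : ℝ) < U.card := by exact_mod_cast h.nonempty.card_pos
  have hsub : (U.filter fun w => Crossing G T W w x) ⊆
      (T ×ˢ T ×ˢ T).biUnion (fun τ => (W τ.1).filter fun w => τ.1 ≠ τ.2.1 ∧ τ.1 ≠ τ.2.2 ∧
        x ∈ W τ.2.1 ∧ (∃ y ∈ W τ.2.1, G.Adj w y) ∧
          ∃ p ∈ W τ.1, G.Adj p x ∧ ∃ q ∈ W τ.2.2, G.Adj w q ∧ G.Adj p q) := by
    intro w hw
    obtain ⟨_, s, hs, t, ht, j, hj, h1, h2, h3, h4, h5, h6⟩ := Finset.mem_filter.1 hw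
    refine Finset.mem_biUnion.2 ⟨(s, t, j), by simp [hs, ht, hj], ?_⟩
    exact Finset.mem_filter.2 ⟨h3, h1, h2, h4, h5, h6⟩
  have h1 := (card_le_real hsub).trans (card_biUnion_le_real _ _ (2 * (z ^ 200 * U.card)) (by
    rintro ⟨s, t, j⟩ hτ
    simp only [Finset.mem_product] at hτ
    obtain ⟨hs, ht, hj⟩ := hτ
    by_cases hx : s ≠ t ∧ s ≠ j ∧ x ∈ W t
    · refine le_trans (card_le_real ?_) ((h.hubs hs ht hx.1).card_crossing_le
        (h.hubs hs hj hx.2.1) hG hz (hz0.trans (by norm_num)) h.crit (h.subset s hs)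
        (hcls s hs t ht hx.1) (hcls s hs j hj hx.2.1) hx.2.2)
      intro w hw
      obtain ⟨h1, -, -, -, h4⟩ := Finset.mem_filter.1 hw
      exact Finset.mem_filter.2 ⟨h1, h4⟩
    · rw [Finset.filter_eq_empty_iff.2]
      · simp only [Finset.card_empty, Nat.cast_zero]
        positivity
      · rintro w _ ⟨h1, h2, h3, _⟩
        exact hx ⟨h1, h2, h3⟩))
  refine h1.trans ?_
  have h2 : ((T ×ˢ T ×ˢ T).card : ℝ) = T.card * (T.card * T.card) := by
    rw [Finset.card_product, Finset.card_product]
    push_cast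
    ring
  have h3 : (T.card * z ^ 5) ^ 3 ≤ 2 ^ 3 := pow_le_pow_left₀ (by positivity) h.count 3
  have h4 := const_mul_pow_le hz hz0 hU0.le (show 184 < 185 by norm_num)
  rw [h2]
  calc (T.card : ℝ) * (T.card * T.card) * (2 * (z ^ 200 * U.card)) =
        (T.card * z ^ 5) ^ 3 * (2 * (z ^ 185 * U.card)) := by ring
    _ ≤ 2 ^ 3 * (2 * (z ^ 185 * U.card)) := by gcongr
    _ ≤ _ := by
      have : 0 < z ^ 185 * (U.card : ℝ) := by positivity
      linarith

/-- `w` lies in a cluster other than `W t` and has a neighbour in `W t` outside `L`. -/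
def Touches (G : SimpleGraph V) (T : Finset ι) (W : ι → Finset V) (L : Finset V) (t : ι) (w : V) :
    Prop :=
  w ∈ T.biUnion W ∧ w ∉ W t ∧ ∃ q ∈ W t \ L, G.Adj w q

theorem Clusters.card_popular {G : SimpleGraph V} {z : ℝ} {U : Finset V} {T : Finset ι}
    {W : ι → Finset V} {hub : ι → V} (h : Clusters G z U T W hub) (hz : 0 < z)
    (hz0 : z ≤ 1 / 10 ^ 10) (hcov : ((U \ T.biUnion W).card : ℝ) ≤ z ^ 45 * U.card)
    {L : Finset V} (hL : (L.card : ℝ) ≤ z ^ 9 * U.card) {k : ℕ} (hk : k * z ≤ 2) :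
    z ^ 3 * U.card ≤ ((U.filter fun w =>
      k ≤ (T.filter fun t => Touches G T W L t w).card).card : ℝ) := by
  have hU0 : (0 : ℝ) < U.card := by exact_mod_cast h.nonempty.card_pos
  have hpow : ∀ {i j : ℕ}, i < j → 10 ^ 10 * (z ^ j * (U.card : ℝ)) ≤ z ^ i * U.card :=
    fun hij => const_mul_pow_le hz hz0 hU0.le hij
  have hpos : ∀ i : ℕ, 0 < z ^ i * (U.card : ℝ) := fun i => by positivity
  set A := T.filter fun t => z ^ 6 * U.card ≤ ((W t).card : ℝ) with hA
  have hA1 : 1 ≤ 2 * (A.card * z ^ 4) := by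
    have e1 : (U.card : ℝ) ≤ (T.biUnion W).card + (U \ T.biUnion W).card := by
      have : U ⊆ T.biUnion W ∪ (U \ T.biUnion W) := by
        intro x hx
        by_cases hx' : x ∈ T.biUnion W <;> simp_all
      exact (card_le_real this).trans (card_union_le_real _ _)
    have e2 := card_biUnion_le_sum_real T W
    rw [← Finset.sum_filter_add_sum_filter_not T fun t => z ^ 6 * U.card ≤ ((W t).card : ℝ)] at e2
    have e3 : ∑ t ∈ A, ((W t).card : ℝ) ≤ A.card * (z ^ 4 * U.card) := by
      rw [← nsmul_eq_mul]
      exact Finset.sum_le_card_nsmul _ _ _ fun t ht => h.card_le t (Finset.mem_filter.1 ht).1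
    have e4 : ∑ t ∈ T.filter (fun t => ¬ z ^ 6 * U.card ≤ ((W t).card : ℝ)), ((W t).card : ℝ) ≤
        T.card * (z ^ 6 * U.card) := by
      refine (Finset.sum_le_card_nsmul _ _ (z ^ 6 * (U.card : ℝ)) fun t ht =>
        (not_le.1 (Finset.mem_filter.1 ht).2).le).trans ?_
      rw [nsmul_eq_mul]
      exact mul_le_mul_of_nonneg_right (card_le_real (Finset.filter_subset _ _)) (hpos 6).le
    have e5 : T.card * (z ^ 6 * U.card) ≤ 2 * (z ^ 1 * (U.card : ℝ)) := by
      calc T.card * (z ^ 6 * U.card) = (T.card * z ^ 5) * (z ^ 1 * (U.card : ℝ)) := by ring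
        _ ≤ _ := mul_le_mul_of_nonneg_right h.count (hpos 1).le
    have e6 := @hpow 0 1 (by norm_num)
    have e7 := @hpow 0 45 (by norm_num)
    rw [pow_zero, one_mul] at e6 e7
    by_contra hcon
    push Not at hcon
    have e8 := mul_lt_mul_of_pos_right hcon hU0
    linarith
  have hA2 : ∀ t ∈ A, z ^ 2 * U.card ≤ ((U.filter (Touches G T W L t)).card : ℝ) := by
    intro t ht
    obtain ⟨htT, ht6⟩ := Finset.mem_filter.1 ht
    have e1 := card_sub_le_sdiff_real L (W t)
    have e2 := h.crit.le_card_union_nbs h.nonempty hz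
      (Finset.sdiff_subset.trans (h.subset t htT) : W t \ L ⊆ U) (by
        have := @hpow 6 9 (by norm_num)
        have := @hpow 6 1500 (by norm_num)
        linarith [hpos 9, hpos 1500, hpos 6])
    have e3 : (W t \ L) ∪ nbs G (W t \ L) U ⊆
        (W t ∪ (U \ T.biUnion W)) ∪ U.filter (Touches G T W L t) := by
      intro w hw
      simp only [Finset.mem_union, Finset.mem_filter]
      rcases Finset.mem_union.1 hw with hw | hw
      · exact Or.inl (Or.inl (Finset.mem_sdiff.1 hw).1)
      · obtain ⟨hwU, q, hq, hqw⟩ := mem_nbs.1 hw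
        by_cases h1 : w ∈ W t
        · exact Or.inl (Or.inl h1)
        by_cases h2 : w ∈ T.biUnion W
        · exact Or.inr ⟨hwU, h2, h1, q, hq, hqw.symm⟩
        · exact Or.inl (Or.inr (Finset.mem_sdiff.2 ⟨hwU, h2⟩))
    have e4 := (card_le_real e3).trans (card_union_le_real _ _)
    have e5 := card_union_le_real (W t) (U \ T.biUnion W)
    have e6 := h.card_le t htT
    have e7 := @hpow 1 2 (by norm_num)
    have e8 := @hpow 1 4 (by norm_num)
    have e9 := @hpow 1 45 (by norm_num)
    rw [pow_one] at e7 e8 e9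
    linarith [hpos 2, hpos 4, hpos 45]
  have hmain := card_mul_le_card_filter (Touches G T W L) A U k hA2
  have hA0 : (0 : ℝ) < A.card := by
    by_contra hcon
    have : (A.card : ℝ) = 0 := le_antisymm (not_lt.1 hcon) (by positivity)
    rw [this] at hA1
    norm_num at hA1
  have hkU : k * (U.card : ℝ) ≤ A.card * (4 * (z ^ 3 * U.card)) := by
    have e1 : k * (U.card : ℝ) * 1 ≤ k * (U.card : ℝ) * (2 * (A.card * z ^ 4)) :=
      mul_le_mul_of_nonneg_left hA1 (by positivity)
    have e2 : k * z * (2 * (A.card * z ^ 3) * U.card) ≤ 2 * (2 * (A.card * z ^ 3) * U.card) :=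
      mul_le_mul_of_nonneg_right hk (by positivity)
    calc k * (U.card : ℝ) ≤ k * (U.card : ℝ) * (2 * (A.card * z ^ 4)) := by linarith
      _ = k * z * (2 * (A.card * z ^ 3) * U.card) := by ring
      _ ≤ _ := e2
      _ = _ := by ring
  have hfin : z ^ 2 * U.card ≤ ((U.filter fun w => k ≤ (A.filter fun t => Touches G T W L t w).card).card : ℝ) +
      4 * (z ^ 3 * U.card) := by
    refine le_of_mul_le_mul_left ?_ hA0
    linarith
  have hle : (U.filter fun w => k ≤ (A.filter fun t => Touches G T W L t w).card) ⊆
      U.filter fun w => k ≤ (T.filter fun t => Touches G T W L t w).card := by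
    intro w hw
    rw [Finset.mem_filter] at hw ⊢
    exact ⟨hw.1, hw.2.trans (Finset.card_le_card (Finset.filter_subset_filter _
      (Finset.filter_subset _ _)))⟩
  have h1 := card_le_real hle
  have h2 := @hpow 2 3 (by norm_num)
  linarith [hpos 3]

/-- Clusters with small components do not exist. -/
theorem Clusters.false_of_small_classes {G : SimpleGraph V} {z : ℝ} {U : Finset V}
    {T : Finset ι} {W : ι → Finset V} {hub : ι → V} (h : Clusters G z U T W hub)
    (hG : C5Free G) (hz : 0 < z) (hz0 : z ≤ 1 / 10 ^ 10)
    (hcov : ((U \ T.biUnion W).card : ℝ) ≤ z ^ 45 * U.card)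
    (hcls : ∀ s ∈ T, ∀ t ∈ T, s ≠ t → ∀ a ∈ W s,
      ((cls G (W s) (W t) a).card : ℝ) ≤ z ^ 400 * U.card) : False := by
  have hz1 : z ≤ 1 := hz0.trans (by norm_num)
  have hU0 : (0 : ℝ) < U.card := by exact_mod_cast h.nonempty.card_pos
  have hpow : ∀ {i j : ℕ}, i < j → 10 ^ 10 * (z ^ j * (U.card : ℝ)) ≤ z ^ i * U.card :=
    fun hij => const_mul_pow_le hz hz0 hU0.le hij
  have hpos : ∀ i : ℕ, 0 < z ^ i * (U.card : ℝ) := fun i => by positivity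
  obtain ⟨k, hk1, hk2⟩ := exists_count hz hz1
  set low : ι × ι → Finset V := fun p => (nbs G (W p.1) (W p.2)).filter fun x =>
    ((nb G x (nbs G (W p.1) (W p.2))).card : ℝ) < z ^ 170 * U.card with hlow
  set L := T.offDiag.biUnion low with hLdef
  have hL : (L.card : ℝ) ≤ z ^ 9 * U.card := by
    have e1 := card_biUnion_le_real T.offDiag low (z ^ 20 * U.card) fun p hp =>
      h.card_low_le hz hz1 ((nbs_subset _ _ _).trans (h.subset _ (Finset.mem_offDiag.1 hp).2.1))
    have e2 : (T.offDiag.card : ℝ) ≤ T.card * T.card := by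
      have : T.offDiag.card ≤ T.card * T.card := by rw [Finset.offDiag_card]; omega
      exact_mod_cast this
    have e3 : (T.card * z ^ 5) ^ 2 ≤ 2 ^ 2 := pow_le_pow_left₀ (by positivity) h.count 2
    have e4 := mul_le_mul_of_nonneg_right e2 (hpos 20).le
    have e5 := mul_le_mul_of_nonneg_right e3 (hpos 10).le
    have e6 := @hpow 9 10 (by norm_num)
    have e7 : (T.card : ℝ) * T.card * (z ^ 20 * U.card) =
      (T.card * z ^ 5) ^ 2 * (z ^ 10 * U.card) := by ring
    linarith [hpos 10]
  have hpop := h.card_popular hz hz0 hcov hL hk2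
  have hbad := card_filter_mul_le (Crossing G T W) U U (c := z ^ 184 * U.card)
    (d := z ^ 172 * U.card) fun x _ => h.card_crossing_le hG hz hz0 hcls x
  have hbad' : ((U.filter fun w => z ^ 172 * U.card <
      ((U.filter (Crossing G T W w)).card : ℝ)).card : ℝ) ≤ z ^ 12 * U.card := by
    refine le_of_mul_le_mul_right (hbad.trans (le_of_eq ?_)) (hpos 172)
    ring
  obtain ⟨w, hw1, hw2⟩ : ∃ w ∈ U.filter fun w => k ≤ 
      (T.filter fun t => Touches G T W L t w).card, w ∉ U.filter fun w => z ^ 172 * U.card <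
      ((U.filter (Crossing G T W w)).card : ℝ) := by
    refine Finset.exists_mem_notMem_of_card_lt_card ?_
    have e1 := @hpow 3 12 (by norm_num)
    have : (z ^ 12 * U.card : ℝ) < z ^ 3 * U.card := by linarith [hpos 12]
    exact_mod_cast (hbad'.trans_lt this).trans_le hpop
  obtain ⟨hwU, hwk⟩ := Finset.mem_filter.1 hw1
  rw [Finset.mem_filter, not_and, not_lt] at hw2
  obtain ⟨J, hJ, hJk⟩ := Finset.exists_subset_card_eq hwk
  have hJ' : ∀ t ∈ J, t ∈ T ∧ w ∈ T.biUnion W ∧ w ∉ W t ∧ ∃ q ∈ W t \ L, G.Adj w q :=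
    fun t ht => Finset.mem_filter.1 (hJ ht)
  have hJne : J.Nonempty := by
    rw [← Finset.card_pos, hJk]
    rcases Nat.eq_zero_or_pos k with rfl | hk
    · norm_num at hk1
    · exact hk
  obtain ⟨t₀, ht₀⟩ := hJne
  obtain ⟨s, hs, hws⟩ := Finset.mem_biUnion.1 (hJ' t₀ ht₀).2.1
  have hst : ∀ t ∈ J, s ≠ t := fun t ht hst => (hJ' t ht).2.2.1 (hst ▸ hws)
  have : Nonempty V := ⟨w⟩
  choose! q hq using fun t ht => (hJ' t ht).2.2.2
  refine h.false_of_star hG hz hz0 hs hws (fun t ht => (hJ' t ht).1) (fun hsJ => hst s hsJ rfl)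
    (by rw [hJk]; exact hk1) (by rw [hJk]; exact hk2) (q := q)
    (B := U.filter (Crossing G T W w)) ?_ (hw2 hwU) ?_
  · intro t ht
    obtain ⟨h1, h2⟩ := hq t ht
    obtain ⟨h3, h4⟩ := Finset.mem_sdiff.1 h1
    refine ⟨h3, h2, ?_⟩
    by_contra hcon
    refine h4 (Finset.mem_biUnion.2 ⟨(s, t),
      Finset.mem_offDiag.2 ⟨hs, (hJ' t ht).1, hst t ht⟩, Finset.mem_filter.2
        ⟨mem_nbs.2 ⟨h3, w, hws, h2⟩, not_le.1 hcon⟩⟩)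
  · intro t ht j hj x hx hxB p hp hpx hpq
    refine hxB (Finset.mem_filter.2 ⟨h.subset t (hJ' t ht).1 hx, s, hs, t, (hJ' t ht).1, j,
      (hJ' j hj).1, hst t ht, hst j hj, hws, hx,
      ⟨q t, (Finset.mem_sdiff.1 (hq t ht).1).1, (hq t ht).2⟩, p, hp, hpx, q j,
      (Finset.mem_sdiff.1 (hq j hj).1).1, (hq j hj).2, hpq⟩)

/-- Clusters covering a critical set do not exist. -/
theorem Clusters.false_of_cover {G : SimpleGraph V} {z : ℝ} {U : Finset V}
    {T : Finset ι} {W : ι → Finset V} {hub : ι → V} (h : Clusters G z U T W hub)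
    (hG : C5Free G) (hz : 0 < z) (hz0 : z ≤ 1 / 10 ^ 10) (hcov : U ⊆ T.biUnion W) : False := by
  have hz1 : z ≤ 1 := hz0.trans (by norm_num)
  have hU0 : (0 : ℝ) < U.card := by exact_mod_cast h.nonempty.card_pos
  have hpow : ∀ {i j : ℕ}, i < j → 10 ^ 10 * (z ^ j * (U.card : ℝ)) ≤ z ^ i * U.card :=
    fun hij => const_mul_pow_le hz hz0 hU0.le hij
  have hpos : ∀ i : ℕ, 0 < z ^ i * (U.card : ℝ) := fun i => by positivity
  have key : ∀ p ∈ T.offDiag, ∃ Z : Finset V, (Z.card : ℝ) ≤ z ^ 56 * U.card ∧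
      ∀ a ∈ W p.1 \ Z, ((cls G (W p.1 \ Z) (W p.2 \ Z) a).card : ℝ) ≤ z ^ 400 * U.card := by
    rintro ⟨s, t⟩ hp
    obtain ⟨hs, ht, hst⟩ := Finset.mem_offDiag.1 hp
    have hmono : ∀ {H : SimpleGraph V} {C : Finset V}, Restricted H (2 * z ^ 151) C →
        Restricted H (z ^ 150) C := by
      intro H C hC v hv
      refine (hC v hv).trans ?_
      have : 2 * z ^ 151 ≤ z ^ 150 := by
        have := const_mul_pow_le hz hz0 zero_le_one (show 150 < 151 by norm_num)
        have h2 : 0 < z ^ 151 := by positivity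
        linarith
      gcongr
    obtain ⟨Z, hZ1, hZ2⟩ := (h.hubs hs ht hst).exists_small_classes hG (hpos 1000)
      (show 0 < z ^ 151 by positivity) (hpos 400) (h.cross s hs t ht hst)
      (h.cross t ht s hs hst.symm) (by
        intro C hC hCM
        have := h.stuck C (hC.trans (h.subset s hs)) (by
          have := @hpow 400 401 (by norm_num)
          linarith [hpos 401])
        exact ⟨fun hh => this.1 (hmono hh), fun hh => this.2 (hmono hh)⟩)
    refine ⟨Z, ?_, hZ2⟩
    have e2 : ((W s).card : ℝ) ^ 2 ≤ (z ^ 4 * U.card : ℝ) ^ 2 :=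
      pow_le_pow_left₀ (by positivity) (h.card_le s hs) 2
    have e3 : (4 * (z ^ 1000 * U.card) * ((W s).card : ℝ) ^ 2) ≤
        4 * (z ^ 1000 * U.card) * (z ^ 4 * U.card : ℝ) ^ 2 :=
      mul_le_mul_of_nonneg_left e2 (by positivity)
    have e4 := @hpow 56 57 (by norm_num)
    have e5 : (Z.card : ℝ) * (z ^ 151 * (z ^ 400 * U.card) ^ 2) ≤
        4 * (z ^ 57 * U.card) * (z ^ 151 * (z ^ 400 * U.card) ^ 2) := by
      refine (hZ1.trans e3).trans (le_of_eq ?_)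
      ring
    have e6 := le_of_mul_le_mul_right e5 (by positivity)
    linarith [hpos 57]
  choose! Z hZ1 hZ2 using key
  set A := T.offDiag.biUnion Z with hA
  have hAc : (A.card : ℝ) ≤ z ^ 45 * U.card := by
    have e1 := card_biUnion_le_real T.offDiag Z (z ^ 56 * U.card) hZ1
    have e2 : (T.offDiag.card : ℝ) ≤ T.card * T.card := by
      have : T.offDiag.card ≤ T.card * T.card := by rw [Finset.offDiag_card]; omega
      exact_mod_cast this
    have e3 : (T.card * z ^ 5) ^ 2 ≤ 2 ^ 2 := pow_le_pow_left₀ (by positivity) h.count 2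
    have e4 := mul_le_mul_of_nonneg_right e2 (hpos 56).le
    have e5 := mul_le_mul_of_nonneg_right e3 (hpos 46).le
    have e6 := @hpow 45 46 (by norm_num)
    have e7 : (T.card : ℝ) * T.card * (z ^ 56 * U.card) =
      (T.card * z ^ 5) ^ 2 * (z ^ 46 * U.card) := by ring
    linarith [hpos 46]
  refine (h.mono (W' := fun t => W t \ A) fun t _ => Finset.sdiff_subset).false_of_small_classes
    hG hz hz0 (le_trans (card_le_real ?_) hAc) ?_
  · intro x hx
    obtain ⟨hxU, hx⟩ := Finset.mem_sdiff.1 hx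
    by_contra hxA
    obtain ⟨t, ht, hxt⟩ := Finset.mem_biUnion.1 (hcov hxU)
    exact hx (Finset.mem_biUnion.2 ⟨t, ht, Finset.mem_sdiff.2 ⟨hxt, hxA⟩⟩)
  · intro s hs t ht hst a ha
    have hp : (s, t) ∈ T.offDiag := Finset.mem_offDiag.2 ⟨hs, ht, hst⟩
    have hsub : Z (s, t) ⊆ A := Finset.subset_biUnion_of_mem Z hp
    refine le_trans (card_le_real (cls_mono (Finset.sdiff_subset_sdiff subset_rfl hsub)
      (Finset.sdiff_subset_sdiff subset_rfl hsub) a)) (hZ2 (s, t) hp a ?_)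
    exact Finset.sdiff_subset_sdiff subset_rfl hsub ha

theorem exists_hubs {G : SimpleGraph V} {z : ℝ} (hz : 0 < z) (hz0 : z ≤ 1 / 10 ^ 10)
    {S : Finset V} (hS : S.Nonempty) (hres : Restricted G (z ^ 100) S)
    (hstuck : ∀ X ⊆ S, z ^ 600 * S.card ≤ (X.card : ℝ) → ¬ Restricted G (z ^ 150) X)
    {H : V → Finset V} (hHS : ∀ v ∈ S, H v ⊆ S)
    (hHc : ∀ v ∈ S, ((H v).card : ℝ) ≤ z ^ 88 * S.card) {M : ℕ} (hM : M * z ^ 5 ≤ 2) (m : ℕ)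
    (hm : m ≤ M) :
    ∃ v : ℕ → V, ∀ t < m, v t ∈ S ∧ z ^ 151 * S.card ≤ ((nb G (v t) S).card : ℝ) ∧
      ∀ s < t, ((nb G (v t) (H (v s))).card : ℝ) ≤ z ^ 157 * S.card := by
  have hn : (0 : ℝ) < S.card := by exact_mod_cast hS.card_pos
  have hpow : ∀ {i j : ℕ}, i < j → 10 ^ 10 * (z ^ j * (S.card : ℝ)) ≤ z ^ i * S.card :=
    fun h => const_mul_pow_le hz hz0 hn.le h
  have hpos : ∀ i : ℕ, 0 < z ^ i * (S.card : ℝ) := fun i => by positivity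
  induction m with
  | zero => exact ⟨fun _ => hS.choose, by simp⟩
  | succ m ih =>
    obtain ⟨v, hv⟩ := ih (by omega)
    set E := (Finset.range m).biUnion fun s =>
      S.filter fun x => z ^ 157 * S.card < (((H (v s)).filter (G.Adj x)).card : ℝ) with hE
    have hEc : (E.card : ℝ) ≤ m * (z ^ 31 * S.card) := by
      have := card_biUnion_le_real (Finset.range m) (fun s =>
        S.filter fun x => z ^ 157 * S.card < (((H (v s)).filter (G.Adj x)).card : ℝ))
        (z ^ 31 * S.card) (by
          intro s hs
          have hvs := (hv s (Finset.mem_range.1 hs)).1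
          have h1 := card_filter_mul_le G.Adj S (H (v s)) (c := z ^ 100 * S.card)
            (d := z ^ 157 * S.card) (by
              intro b hb
              refine le_trans (card_le_real ?_) (hres b (hHS _ hvs hb))
              intro a ha
              obtain ⟨h1, h2⟩ := Finset.mem_filter.1 ha
              exact mem_nb.2 ⟨h1, h2.symm⟩)
          have h2 := mul_le_mul_of_nonneg_right (hHc _ hvs) (hpos 100).le
          refine le_of_mul_le_mul_right ((h1.trans h2).trans (le_of_eq ?_)) (hpos 157)
          ring)
      rwa [Finset.card_range] at this
    have hmM : (m : ℝ) ≤ M := by exact_mod_cast (by omega : m ≤ M)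
    have e1 := mul_le_mul_of_nonneg_right hmM (hpos 31).le
    have e2 : (M : ℝ) * (z ^ 31 * S.card) ≤ 2 * (z ^ 26 * S.card) := by
      have := mul_le_mul_of_nonneg_right hM (hpos 26).le
      linarith
    have e3 := card_sub_le_sdiff_real E S
    have e4 := @hpow 0 26 (by norm_num)
    rw [pow_zero, one_mul] at e4
    have e5 : (S.card : ℝ) / 2 ≤ (S \ E).card := by linarith [hpos 26]
    have hX := hstuck (S \ E) Finset.sdiff_subset (by
      have := @hpow 0 600 (by norm_num)
      rw [pow_zero, one_mul] at this
      linarith [hpos 600])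
    simp only [Restricted, not_forall, not_le] at hX
    obtain ⟨x, hx, hxd⟩ := hX
    obtain ⟨hxS, hxE⟩ := Finset.mem_sdiff.1 hx
    refine ⟨Function.update v m x, fun t ht => ?_⟩
    rcases Nat.lt_succ_iff_lt_or_eq.1 ht with ht | rfl
    · rw [Function.update_of_ne ht.ne]
      refine ⟨(hv t ht).1, (hv t ht).2.1, fun s hs => ?_⟩
      rw [Function.update_of_ne (by omega)]
      exact (hv t ht).2.2 s hs
    · rw [Function.update_self]
      refine ⟨hxS, ?_, fun s hs => ?_⟩
      · have f1 := card_le_real (nb_mono G x (Finset.sdiff_subset : S \ E ⊆ S))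
        have f2 : z ^ 150 * ((S.card : ℝ) / 2) ≤ z ^ 150 * (S \ E).card := by gcongr
        have f3 := @hpow 150 151 (by norm_num)
        linarith [hpos 151]
      · rw [Function.update_of_ne hs.ne]
        by_contra hcon
        exact hxE (Finset.mem_biUnion.2 ⟨s, Finset.mem_range.2 hs,
          Finset.mem_filter.2 ⟨hxS, not_le.1 hcon⟩⟩)

theorem exists_one_sided_clusters {G : SimpleGraph V} {z : ℝ} (hz : 0 < z)
    (hz0 : z ≤ 1 / 10 ^ 10) {S : Finset V} (hS : S.Nonempty) {H : V → Finset V}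
    (hH : ∀ v ∈ S, nb G v S ⊆ H v ∧
      ∀ a ∈ nb G v S, ((nb G a (S \ H v)).card : ℝ) ≤ z ^ 1310 * S.card)
    {M : ℕ} (hM : M * z ^ 5 ≤ 2) {v : ℕ → V}
    (hv : ∀ t < M, v t ∈ S ∧ z ^ 151 * S.card ≤ ((nb G (v t) S).card : ℝ) ∧
      ∀ s < t, ((nb G (v t) (H (v s))).card : ℝ) ≤ z ^ 157 * S.card) :
    ∃ W : ℕ → Finset V, ∀ t < M, W t ⊆ S ∧ z ^ 152 * S.card ≤ ((W t).card : ℝ) ∧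
      (∀ x ∈ W t, G.Adj (v t) x) ∧ (∀ s < M, s ≠ t → ∀ x ∈ W t, ¬ G.Adj (v s) x) ∧
      ∀ s < t, ∀ a ∈ W s, ((nb G a (W t)).card : ℝ) ≤ z ^ 1310 * S.card := by
  have hn : (0 : ℝ) < S.card := by exact_mod_cast hS.card_pos
  have hpow : ∀ {i j : ℕ}, i < j → 10 ^ 10 * (z ^ j * (S.card : ℝ)) ≤ z ^ i * S.card :=
    fun h => const_mul_pow_le hz hz0 hn.le h
  have hpos : ∀ i : ℕ, 0 < z ^ i * (S.card : ℝ) := fun i => by positivity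
  set D : ℕ → Finset V := fun t =>
    ((Finset.range M).filter (· < t)).biUnion (fun s => nb G (v t) (H (v s))) ∪
    ((Finset.range M).filter (t < ·)).biUnion (fun s => nb G (v s) (H (v t))) with hD
  have hW : ∀ t < M, ∀ x, x ∈ nb G (v t) S \ D t → x ∈ S ∧ G.Adj (v t) x ∧
      (∀ s < t, x ∉ H (v s)) ∧ ∀ s < M, t < s → ¬ G.Adj (v s) x := by
    intro t ht x hx
    simp only [hD, Finset.mem_sdiff, Finset.mem_union, Finset.mem_biUnion, Finset.mem_filter,
      Finset.mem_range, mem_nb, not_or, not_exists, not_and] at hx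
    obtain ⟨⟨h1, h2⟩, h3, h4⟩ := hx
    exact ⟨h1, h2, fun s hs hxs => h3 s ⟨by omega, hs⟩ hxs h2,
      fun s hs hts => h4 s ⟨hs, hts⟩ ((hH _ (hv t ht).1).1 (mem_nb.2 ⟨h1, h2⟩))⟩
  refine ⟨fun t => nb G (v t) S \ D t, fun t ht => ⟨fun x hx => (hW t ht x hx).1, ?_,
    fun x hx => (hW t ht x hx).2.1, ?_, ?_⟩⟩
  · have e1 := card_sub_le_sdiff_real (D t) (nb G (v t) S)
    have e2 := card_union_le_real
      (((Finset.range M).filter (· < t)).biUnion (fun s => nb G (v t) (H (v s))))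
      (((Finset.range M).filter (t < ·)).biUnion (fun s => nb G (v s) (H (v t))))
    have e3 := card_biUnion_le_real ((Finset.range M).filter (· < t))
      (fun s => nb G (v t) (H (v s))) (z ^ 157 * S.card)
      (fun s hs => (hv t ht).2.2 s (Finset.mem_filter.1 hs).2)
    have e4 := card_biUnion_le_real ((Finset.range M).filter (t < ·))
      (fun s => nb G (v s) (H (v t))) (z ^ 157 * S.card)
      (fun s hs => (hv s (Finset.mem_range.1 (Finset.mem_filter.1 hs).1)).2.2 t
        (Finset.mem_filter.1 hs).2)
    have hcard : ∀ (p : ℕ → Prop) [DecidablePred p],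
        (((Finset.range M).filter p).card : ℝ) ≤ M := by
      intro p _
      have := card_le_real (Finset.filter_subset p (Finset.range M))
      rwa [Finset.card_range] at this
    have e5 := mul_le_mul_of_nonneg_right (hcard (· < t)) (hpos 157).le
    have e6 := mul_le_mul_of_nonneg_right (hcard (t < ·)) (hpos 157).le
    have e7 : (M : ℝ) * (z ^ 157 * S.card) ≤ 2 * (z ^ 152 * S.card) := by
      have := mul_le_mul_of_nonneg_right hM (hpos 152).le
      linarith
    have e8 := @hpow 151 152 (by norm_num)
    have e9 := (hv t ht).2.1
    change z ^ 152 * (S.card : ℝ) ≤ ((nb G (v t) S \ D t).card : ℝ)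
    change ((D t).card : ℝ) ≤ _ at e2
    linarith [hpos 152]
  · intro s hs hst x hx hsx
    rcases lt_or_gt_of_ne hst with h | h
    · exact (hW t ht x hx).2.2.1 s h ((hH _ (hv s hs).1).1 (mem_nb.2 ⟨(hW t ht x hx).1, hsx⟩))
    · exact (hW t ht x hx).2.2.2 s hs h hsx
  · intro s hs a ha
    have hsM : s < M := hs.trans ht
    refine le_trans (card_le_real (nb_mono G a ?_)) ((hH _ (hv s hsM).1).2 a
      (mem_nb.2 ⟨(hW s hsM a ha).1, (hW s hsM a ha).2.1⟩))
    intro x hx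
    exact Finset.mem_sdiff.2 ⟨(hW t ht x hx).1, (hW t ht x hx).2.2.1 s hs⟩

theorem exists_two_sided_clusters {G : SimpleGraph V} {z : ℝ} (hz : 0 < z)
    (hz0 : z ≤ 1 / 10 ^ 10) {S : Finset V} (hS : S.Nonempty)
    {M : ℕ} (hM : M * z ^ 5 ≤ 2) {W : ℕ → Finset V}
    (hW : ∀ t < M, W t ⊆ S ∧ z ^ 152 * S.card ≤ ((W t).card : ℝ) ∧
      ∀ s < t, ∀ a ∈ W s, ((nb G a (W t)).card : ℝ) ≤ z ^ 1310 * S.card) :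
    ∃ W' : ℕ → Finset V, ∀ t < M, W' t ⊆ W t ∧ (W' t).card = ⌈z ^ 153 * S.card⌉₊ ∧
      ∀ s < M, s ≠ t → ∀ a ∈ W' t, ((nb G a (W' s)).card : ℝ) ≤ z ^ 1149 * S.card := by
  have hn : (0 : ℝ) < S.card := by exact_mod_cast hS.card_pos
  have hpow : ∀ {i j : ℕ}, i < j → 10 ^ 10 * (z ^ j * (S.card : ℝ)) ≤ z ^ i * S.card :=
    fun h => const_mul_pow_le hz hz0 hn.le h
  have hpos : ∀ i : ℕ, 0 < z ^ i * (S.card : ℝ) := fun i => by positivity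
  set D : ℕ → Finset V := fun t => (Finset.range t).biUnion fun s =>
    (W t).filter fun b => z ^ 1149 * S.card < (((W s).filter (G.Adj b)).card : ℝ) with hD
  have hlarge : ∀ t < M, ⌈z ^ 153 * (S.card : ℝ)⌉₊ ≤ (W t \ D t).card := by
    intro t ht
    rw [Nat.ceil_le]
    have e1 := card_biUnion_le_real (Finset.range t) (fun s =>
      (W t).filter fun b => z ^ 1149 * S.card < (((W s).filter (G.Adj b)).card : ℝ))
      (z ^ 161 * S.card) (by
        intro s hs
        have hst := Finset.mem_range.1 hs
        have h1 := card_filter_mul_le G.Adj (W t) (W s) (c := z ^ 1310 * S.card)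
          (d := z ^ 1149 * S.card) (by
            intro b hb
            refine le_trans (card_le_real ?_) ((hW t ht).2.2 s hst b hb)
            intro a ha
            obtain ⟨h1, h2⟩ := Finset.mem_filter.1 ha
            exact mem_nb.2 ⟨h1, h2.symm⟩)
        have h2 := mul_le_mul_of_nonneg_right (card_le_real (hW s (hst.trans ht)).1)
          (hpos 1310).le
        refine le_of_mul_le_mul_right ((h1.trans h2).trans (le_of_eq ?_)) (hpos 1149)
        ring)
    rw [Finset.card_range] at e1
    have htM : (t : ℝ) ≤ M := by exact_mod_cast ht.le
    have e2 := mul_le_mul_of_nonneg_right htM (hpos 161).le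
    have e3 : (M : ℝ) * (z ^ 161 * S.card) ≤ 2 * (z ^ 156 * S.card) := by
      have := mul_le_mul_of_nonneg_right hM (hpos 156).le
      linarith
    have e4 := @hpow 152 153 (by norm_num)
    have e5 := @hpow 152 156 (by norm_num)
    have e6 := card_sub_le_sdiff_real (D t) (W t)
    have e7 := (hW t ht).2.1
    change ((D t).card : ℝ) ≤ _ at e1
    linarith [hpos 153, hpos 156]
  choose! W' hW' using fun t ht => Finset.exists_subset_card_eq (hlarge t ht)
  have hW'W : ∀ t < M, W' t ⊆ W t := fun t ht => (hW' t ht).1.trans Finset.sdiff_subset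
  refine ⟨W', fun t ht => ⟨hW'W t ht, (hW' t ht).2, fun s hs hst a ha => ?_⟩⟩
  rcases lt_or_gt_of_ne hst with h | h
  · have h1 := Finset.mem_sdiff.1 ((hW' t ht).1 ha)
    refine (card_le_real (nb_mono G a (hW'W s hs))).trans ?_
    by_contra hcon
    exact h1.2 (Finset.mem_biUnion.2 ⟨s, Finset.mem_range.2 h,
      Finset.mem_filter.2 ⟨h1.1, not_le.1 hcon⟩⟩)
  · have h1 := (hW s hs).2.2 t h a (hW'W t ht ha)
    have h2 := card_le_real (nb_mono G a (hW'W s hs))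
    have h3 := @hpow 1149 1310 (by norm_num)
    linarith [hpos 1310]

/-- A sparse set all of whose large subsets are neither much sparser nor much denser, and contain
large critical sets, does not exist in a graph without induced five-cycles. -/
theorem C5Free.false_of_stuck {G : SimpleGraph V} (hG : C5Free G) {z : ℝ} (hz : 0 < z)
    (hz0 : z ≤ 1 / 10 ^ 10) {S : Finset V} (hS : S.Nonempty) (hres : Restricted G (z ^ 100) S)
    (hstuck : ∀ X ⊆ S, z ^ 600 * S.card ≤ (X.card : ℝ) →
      ¬ Restricted G (z ^ 150) X ∧ ¬ Restricted Gᶜ (z ^ 150) X)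
    (hcrit : ∀ X ⊆ S, z ^ 600 * S.card ≤ (X.card : ℝ) →
      ∃ U ⊆ X, z * X.card ≤ (U.card : ℝ) ∧ Crit G (1 / 1500) U) : False := by
  have hz1 : z ≤ 1 := hz0.trans (by norm_num)
  have hn : (0 : ℝ) < S.card := by exact_mod_cast hS.card_pos
  have hpow : ∀ {i j : ℕ}, i < j → 10 ^ 10 * (z ^ j * (S.card : ℝ)) ≤ z ^ i * S.card :=
    fun h => const_mul_pow_le hz hz0 hn.le h
  have hpos : ∀ i : ℕ, 0 < z ^ i * (S.card : ℝ) := fun i => by positivity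
  choose! H hH using fun v hv => hG.exists_small_cover hz hz0 hS hres hcrit (v := v) hv
  obtain ⟨M, hM1, hM2⟩ := exists_count (pow_pos hz 5) (pow_le_one₀ hz.le hz1 (n := 5))
  obtain ⟨v, hv⟩ := exists_hubs hz hz0 hS hres (fun X h1 h2 => (hstuck X h1 h2).1)
    (fun v hv => (hH v hv).1) (fun v hv => (hH v hv).2.2.1) hM2 M le_rfl
  obtain ⟨W₀, hW₀⟩ := exists_one_sided_clusters hz hz0 hS
    (fun v hv => ⟨(hH v hv).2.1, (hH v hv).2.2.2⟩) hM2 hv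
  obtain ⟨W, hW⟩ := exists_two_sided_clusters hz hz0 hS hM2 (G := G) (W := W₀)
    (fun t ht => ⟨(hW₀ t ht).1, (hW₀ t ht).2.1, (hW₀ t ht).2.2.2.2⟩)
  set c := ⌈z ^ 153 * (S.card : ℝ)⌉₊ with hc
  have hc1 : z ^ 153 * (S.card : ℝ) ≤ c := Nat.le_ceil _
  have hdisj : ∀ s < M, ∀ t < M, s ≠ t → Disjoint (W s) (W t) := by
    intro s hs t ht hst
    rw [Finset.disjoint_left]
    intro x hx hx'
    exact (hW₀ t ht).2.2.2.1 s hs hst x ((hW t ht).1 hx')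
      ((hW₀ s hs).2.2.1 x ((hW s hs).1 hx))
  set U₀ := (Finset.range M).biUnion W with hU₀
  have hU₀c : (U₀.card : ℝ) = M * c := by
    have : U₀.card = M * c := by
      rw [hU₀, Finset.card_biUnion]
      · rw [Finset.sum_congr rfl fun t ht => (hW t (Finset.mem_range.1 ht)).2.1]
        simp
      · intro s hs t ht hst
        exact hdisj s (Finset.mem_range.1 hs) t (Finset.mem_range.1 ht) hst
    exact_mod_cast this
  have hU₀S : U₀ ⊆ S := Finset.biUnion_subset.2 fun t ht =>
    (hW t (Finset.mem_range.1 ht)).1.trans (hW₀ t (Finset.mem_range.1 ht)).1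
  have hMc : z ^ 5 * (U₀.card : ℝ) ≥ c := by
    rw [hU₀c]
    have : 1 * (c : ℝ) ≤ M * z ^ 5 * c := by gcongr
    linarith
  obtain ⟨U, hUU, hUc, hU⟩ := hcrit U₀ hU₀S (by
    have e1 : z ^ 5 * (U₀.card : ℝ) ≤ 1 * U₀.card := by
      gcongr
      exact pow_le_one₀ hz.le hz1
    have e2 := @hpow 153 600 (by norm_num)
    linarith [hpos 600])
  have hcU : (c : ℝ) ≤ z ^ 4 * U.card := by
    have : z ^ 4 * (z * (U₀.card : ℝ)) ≤ z ^ 4 * U.card := by gcongr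
    linarith
  have hSU : z ^ 149 * (S.card : ℝ) ≤ U.card := by
    refine le_of_mul_le_mul_left ?_ (pow_pos hz 4)
    linarith
  have hcl : Clusters G z U (Finset.range M) (fun t => W t ∩ U) v :=
    { nonempty := by
        rw [← Finset.card_pos]
        have : (0 : ℝ) < U.card := lt_of_lt_of_le (hpos 149) hSU
        exact_mod_cast this
      subset := fun t _ => Finset.inter_subset_right
      disj := fun s hs t ht hst => Finset.disjoint_of_subset_left Finset.inter_subset_left
        (Finset.disjoint_of_subset_right Finset.inter_subset_left
          (hdisj s (Finset.mem_range.1 hs) t (Finset.mem_range.1 ht) hst))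
      count := by rw [Finset.card_range]; exact hM2
      card_le := fun t ht => by
        have h1 := card_le_real (Finset.inter_subset_left : W t ∩ U ⊆ W t)
        rw [(hW t (Finset.mem_range.1 ht)).2.1] at h1
        exact h1.trans hcU
      hub_adj := fun t ht x hx => (hW₀ t (Finset.mem_range.1 ht)).2.2.1 x
        ((hW t (Finset.mem_range.1 ht)).1 (Finset.mem_inter.1 hx).1)
      hub_not := fun s hs t ht hst x hx => (hW₀ t (Finset.mem_range.1 ht)).2.2.2.1 s
        (Finset.mem_range.1 hs) hst x ((hW t (Finset.mem_range.1 ht)).1 (Finset.mem_inter.1 hx).1)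
      cross := fun s hs t ht hst x hx => by
        have h1 := (hW s (Finset.mem_range.1 hs)).2.2 t (Finset.mem_range.1 ht) hst.symm x
          (Finset.mem_inter.1 hx).1
        have h2 := card_le_real (nb_mono G x (Finset.inter_subset_left : W t ∩ U ⊆ W t))
        have h3 : z ^ 1000 * (z ^ 149 * (S.card : ℝ)) ≤ z ^ 1000 * U.card := by gcongr
        linarith
      stuck := fun X hX hXc => hstuck X ((hX.trans hUU).trans hU₀S) (by
        have h3 : z ^ 401 * (z ^ 149 * (S.card : ℝ)) ≤ z ^ 401 * U.card := by gcongr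
        have h4 := @hpow 550 600 (by norm_num)
        linarith [hpos 600])
      crit := hU }
  refine hcl.false_of_cover hG hz hz0 fun x hx => ?_
  obtain ⟨t, ht, hxt⟩ := Finset.mem_biUnion.1 (hUU hx)
  exact Finset.mem_biUnion.2 ⟨t, ht, Finset.mem_inter.2 ⟨hxt, hx⟩⟩

/-- The number of edges between `A` and `B`. -/
noncomputable def edges (G : SimpleGraph V) (A B : Finset V) : ℝ :=
  ∑ a ∈ A, ((nb G a B).card : ℝ)

theorem edges_comm (G : SimpleGraph V) (A B : Finset V) : edges G A B = edges G B A := by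
  unfold edges
  exact_mod_cast sum_card_nb_comm G A B

theorem edges_mono (G : SimpleGraph V) {A A' B B' : Finset V} (hA : A ⊆ A') (hB : B ⊆ B') :
    edges G A B ≤ edges G A' B' :=
  (Finset.sum_le_sum fun a _ => card_le_real (nb_mono G a hB)).trans
    (Finset.sum_le_sum_of_subset_of_nonneg hA fun _ _ _ => by positivity)

theorem exists_subset_sum_le (f : V → ℝ) (h : ℕ) (n : ℕ) (B : Finset V) (hB : B.card = h + n) :
    ∃ B' ⊆ B, B'.card = h ∧ B.card * ∑ b ∈ B', f b ≤ h * ∑ b ∈ B, f b := by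
  induction n generalizing B with
  | zero => exact ⟨B, subset_rfl, hB, by rw [hB]; simp⟩
  | succ n ih =>
    obtain ⟨b, hb, hmax⟩ := Finset.exists_max_image B f (Finset.card_pos.1 (by omega))
    have hc : (B.erase b).card = h + n := by rw [Finset.card_erase_of_mem hb]; omega
    obtain ⟨B', h1, h2, h3⟩ := ih (B.erase b) hc
    refine ⟨B', h1.trans (Finset.erase_subset _ _), h2, ?_⟩
    have e1 : ∑ x ∈ B.erase b, f x + f b = ∑ x ∈ B, f x := Finset.sum_erase_add _ _ hb
    have e2 : ∑ x ∈ B', f x ≤ h * f b := by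
      rw [← h2, ← nsmul_eq_mul]
      exact Finset.sum_le_card_nsmul _ _ _ fun x hx =>
        hmax x (Finset.mem_of_mem_erase (h1 hx))
    rw [hc] at h3
    rw [hB, ← e1]
    push_cast at h3 ⊢
    linarith

theorem exists_edges_le_of_card (G : SimpleGraph V) {A B : Finset V} {ε : ℝ}
    (h : edges G A B ≤ ε * A.card * B.card) {m : ℕ} (hm : 0 < m) (hA : m ≤ A.card)
    (hB : m ≤ B.card) :
    ∃ A' ⊆ A, ∃ B' ⊆ B, A'.card = m ∧ B'.card = m ∧ edges G A' B' ≤ ε * m ^ 2 := by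
  obtain ⟨A', h1, h2, h3⟩ := exists_subset_sum_le (fun a => ((nb G a B).card : ℝ)) m
    (A.card - m) A (by omega)
  obtain ⟨B', g1, g2, g3⟩ := exists_subset_sum_le (fun b => ((nb G b A').card : ℝ)) m
    (B.card - m) B (by omega)
  refine ⟨A', h1, B', g1, h2, g2, ?_⟩
  change A.card * edges G A' B ≤ m * edges G A B at h3
  change B.card * edges G B' A' ≤ m * edges G B A' at g3
  rw [edges_comm G B', edges_comm G B] at g3
  have ha : (0 : ℝ) < A.card := by exact_mod_cast hm.trans_le hA
  have hb : (0 : ℝ) < B.card := by exact_mod_cast hm.trans_le hB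
  have e1 : edges G A' B ≤ m * (ε * B.card) := by
    refine le_of_mul_le_mul_left (h3.trans ?_) ha
    calc m * edges G A B ≤ m * (ε * A.card * B.card) := by gcongr
      _ = _ := by ring
  refine le_of_mul_le_mul_left (g3.trans ?_) hb
  calc m * edges G A' B ≤ m * (m * (ε * B.card)) := by gcongr
    _ = _ := by ring

/-- `G` if `p` holds and its complement otherwise. -/
noncomputable def signed (G : SimpleGraph V) (p : Prop) : SimpleGraph V := if p then G else Gᶜ

theorem exists_pattern_or_pure (G : SimpleGraph V) [Nonempty V] (P : ι → ι → Prop)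
    (hP : ∀ i j, P i j ↔ P j i) {ε : ℝ} (hε : 0 < ε) (hε1 : ε ≤ 1) {K : ℕ} (k : ℕ) :
    ∀ (J : Finset ι) (W : ι → Finset V) (n : ℝ), J.card = k → k ≤ K → 0 < n →
      (∀ j ∈ J, n ≤ ((W j).card : ℝ)) →
      (∀ i ∈ J, ∀ j ∈ J, i ≠ j → Disjoint (W i) (W j)) →
      (∃ v : ι → V, (∀ j ∈ J, v j ∈ W j) ∧
        ∀ i ∈ J, ∀ j ∈ J, i ≠ j → (G.Adj (v i) (v j) ↔ P i j)) ∨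
      ∃ A B : Finset V, A ⊆ J.biUnion W ∧ B ⊆ J.biUnion W ∧ Disjoint A B ∧
        (ε / K) ^ k * n ≤ A.card ∧ (ε / K) ^ k * n ≤ B.card ∧
        (edges G A B ≤ ε * A.card * B.card ∨ edges Gᶜ A B ≤ ε * A.card * B.card) := by
  induction k with
  | zero =>
    intro J W n hJ _ _ _ _
    rw [Finset.card_eq_zero] at hJ
    subst hJ
    exact Or.inl ⟨fun _ => Classical.arbitrary V, by simp, by simp⟩
  | succ k ih =>
    intro J W n hJ hkK hn hW hdis
    have hK : (1 : ℝ) ≤ K := by exact_mod_cast (by omega : 1 ≤ K)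
    have hεK : 0 < ε / K := by positivity
    have hεK1 : ε / K ≤ 1 := by
      rw [div_le_one (by linarith)]
      linarith
    obtain ⟨i, hi⟩ : J.Nonempty := Finset.card_pos.1 (by omega)
    by_cases hgood : ∃ v ∈ W i, ∀ j ∈ J.erase i,
        ε * (W j).card ≤ ((nb (signed G (P i j)) v (W j)).card : ℝ)
    · obtain ⟨v, hv, hvj⟩ := hgood
      rcases ih (J.erase i) (fun j => nb (signed G (P i j)) v (W j)) (ε * n)
        (by rw [Finset.card_erase_of_mem hi]; omega) (by omega) (by positivity)
        (fun j hj => le_trans (by gcongr; exact hW j (Finset.mem_of_mem_erase hj)) (hvj j hj))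
        (fun a ha b hb hab => Finset.disjoint_of_subset_left (nb_subset _ _ _)
          (Finset.disjoint_of_subset_right (nb_subset _ _ _)
            (hdis a (Finset.mem_of_mem_erase ha) b (Finset.mem_of_mem_erase hb) hab)))
        with ⟨f, hf1, hf2⟩ | ⟨A, B, hA, hB, hAB, hAc, hBc, he⟩
      · have hvf : ∀ j ∈ J, j ≠ i → (G.Adj v (f j) ↔ P i j) := by
          intro j hj hji
          have := mem_nb.1 (hf1 j (Finset.mem_erase.2 ⟨hji, hj⟩))
          by_cases hp : P i j
          · simp only [signed, hp, if_true, iff_true] at this ⊢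
            exact this.2
          · simp only [signed, hp, if_false, iff_false, compl_adj] at this ⊢
            exact this.2.2
        refine Or.inl ⟨Function.update f i v, ?_, ?_⟩
        · intro j hj
          by_cases hji : j = i
          · subst hji
            rwa [Function.update_self]
          · rw [Function.update_of_ne hji]
            exact (mem_nb.1 (hf1 j (Finset.mem_erase.2 ⟨hji, hj⟩))).1
        · intro a ha b hb hab
          by_cases hai : a = i
          · subst hai
            rw [Function.update_self, Function.update_of_ne hab.symm]
            exact hvf b hb hab.symm
          · by_cases hbi : b = i
            · subst hbi
              rw [Function.update_self, Function.update_of_ne hab, G.adj_comm, hP]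
              exact hvf a ha hab
            · rw [Function.update_of_ne hai, Function.update_of_ne hbi]
              exact hf2 a (Finset.mem_erase.2 ⟨hai, ha⟩) b (Finset.mem_erase.2 ⟨hbi, hb⟩) hab
      · have hsub : (J.erase i).biUnion (fun j => nb (signed G (P i j)) v (W j)) ⊆
            J.biUnion W := by
          intro x hx
          obtain ⟨j, hj, hx⟩ := Finset.mem_biUnion.1 hx
          exact Finset.mem_biUnion.2 ⟨j, Finset.mem_of_mem_erase hj, (mem_nb.1 hx).1⟩
        have hle : (ε / K) ^ (k + 1) * n ≤ (ε / K) ^ k * (ε * n) := by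
          rw [pow_succ, mul_assoc]
          gcongr
          exact div_le_self hε.le hK
        exact Or.inr ⟨A, B, hA.trans hsub, hB.trans hsub, hAB, hle.trans hAc, hle.trans hBc, he⟩
    · push Not at hgood
      right
      set D : ι → Finset V := fun j => (W i).filter fun v =>
        ((nb (signed G (P i j)) v (W j)).card : ℝ) < ε * (W j).card with hD
      have hcov : W i ⊆ (J.erase i).biUnion D := by
        intro v hv
        obtain ⟨j, hj, hlt⟩ := hgood v hv
        exact Finset.mem_biUnion.2 ⟨j, hj, Finset.mem_filter.2 ⟨hv, hlt⟩⟩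
      obtain ⟨j, hj, hDj⟩ : ∃ j ∈ J.erase i, n / K ≤ ((D j).card : ℝ) := by
        by_contra hcon
        push Not at hcon
        have h1 := (card_le_real hcov).trans
          (card_biUnion_le_real (J.erase i) D (n / K) fun j hj => (hcon j hj).le)
        have h2 := hW i hi
        have h3 : ((J.erase i).card : ℝ) < K := by
          rw [Finset.card_erase_of_mem hi, hJ]
          exact_mod_cast (by omega : k + 1 - 1 < K)
        have h4 : ((J.erase i).card : ℝ) * (n / K) < K * (n / K) := by gcongr
        rw [mul_div_cancel₀ n (by linarith : (K : ℝ) ≠ 0)] at h4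
        linarith
      have hjJ := Finset.mem_of_mem_erase hj
      have hle : (ε / K) ^ (k + 1) * n ≤ n / K := by
        calc (ε / K) ^ (k + 1) * n = (ε / K) ^ k * (ε * (n / K)) := by ring
          _ ≤ 1 * (1 * (n / K)) := by
            gcongr
            exact pow_le_one₀ hεK.le hεK1
          _ = n / K := by ring
      refine ⟨D j, W j, fun x hx => Finset.mem_biUnion.2 ⟨i, hi, (Finset.mem_filter.1 hx).1⟩,
        fun x hx => Finset.mem_biUnion.2 ⟨j, hjJ, hx⟩,
        Finset.disjoint_of_subset_left (Finset.filter_subset _ _)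
          (hdis i hi j hjJ (Finset.ne_of_mem_erase hj).symm), hle.trans hDj,
        (hle.trans (div_le_self hn.le hK)).trans (hW j hjJ), ?_⟩
      have hedge : edges (signed G (P i j)) (D j) (W j) ≤ ε * (D j).card * (W j).card := by
        refine (Finset.sum_le_card_nsmul _ _ (ε * (W j).card) fun v hv =>
          (Finset.mem_filter.1 hv).2.le).trans (le_of_eq ?_)
        rw [nsmul_eq_mul]
        ring
      by_cases hp : P i j
      · exact Or.inl (by simpa only [signed, hp, if_true] using hedge)
      · exact Or.inr (by simpa only [signed, hp, if_false] using hedge)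

theorem exists_disjoint_subsets (m : ℕ) (k : ℕ) (X : Finset V) (hX : k * m ≤ X.card) :
    ∃ W : ℕ → Finset V, (∀ j < k, W j ⊆ X ∧ (W j).card = m) ∧
      ∀ i < k, ∀ j < k, i ≠ j → Disjoint (W i) (W j) := by
  induction k generalizing X with
  | zero => exact ⟨fun _ => ∅, by simp, by simp⟩
  | succ k ih =>
    rw [Nat.succ_mul] at hX
    obtain ⟨Y, hY, hYc⟩ := Finset.exists_subset_card_eq (show m ≤ X.card by omega)
    obtain ⟨W, h1, h2⟩ := ih (X \ Y) (by rw [Finset.card_sdiff_of_subset hY]; omega)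
    have hWY : ∀ j < k, Disjoint (W j) Y := fun j hj =>
      Finset.disjoint_of_subset_left (h1 j hj).1 Finset.sdiff_disjoint
    refine ⟨Function.update W k Y, fun j hj => ?_, fun i hi j hj hij => ?_⟩
    · rcases Nat.lt_succ_iff_lt_or_eq.1 hj with hj | rfl
      · rw [Function.update_of_ne hj.ne]
        exact ⟨(h1 j hj).1.trans Finset.sdiff_subset, (h1 j hj).2⟩
      · rw [Function.update_self]
        exact ⟨hY, hYc⟩
    · rcases Nat.lt_succ_iff_lt_or_eq.1 hi with hi | rfl
      · rw [Function.update_of_ne hi.ne]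
        rcases Nat.lt_succ_iff_lt_or_eq.1 hj with hj | rfl
        · rw [Function.update_of_ne hj.ne]
          exact h2 i hi j hj hij
        · rw [Function.update_self]
          exact hWY i hi
      · rw [Function.update_self]
        rcases Nat.lt_succ_iff_lt_or_eq.1 hj with hj | rfl
        · rw [Function.update_of_ne hj.ne]
          exact (hWY j hj).symm
        · exact absurd rfl hij

theorem C5Free.exists_pure_pair {G : SimpleGraph V} (hG : C5Free G) {ε : ℝ} (hε : 0 < ε)
    (hε1 : ε ≤ 1) {X : Finset V} (hX : 5 ≤ X.card) :
    ∃ A ⊆ X, ∃ B ⊆ X, Disjoint A B ∧ (ε / 5) ^ 5 / 10 * X.card ≤ A.card ∧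
      (ε / 5) ^ 5 / 10 * X.card ≤ B.card ∧
      (edges G A B ≤ ε * A.card * B.card ∨ edges Gᶜ A B ≤ ε * A.card * B.card) := by
  obtain ⟨W, h1, h2⟩ := exists_disjoint_subsets (X.card / 5) 5 X (by omega)
  have hne : Nonempty V := ⟨(Finset.card_pos.1 (by omega : 0 < X.card)).choose⟩
  have hm : (X.card : ℝ) / 10 ≤ (X.card / 5 : ℕ) := by
    have : X.card ≤ 10 * (X.card / 5) := by omega
    have : (X.card : ℝ) ≤ 10 * (X.card / 5 : ℕ) := by exact_mod_cast this
    linarith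
  have hX0 : (0 : ℝ) < X.card := by exact_mod_cast (by omega : 0 < X.card)
  rcases exists_pattern_or_pure G (fun i j : ℕ => j = (i + 1) % 5 ∨ i = (j + 1) % 5)
    (fun i j => or_comm) hε hε1 (K := 5) 5 (Finset.range 5) W ((X.card : ℝ) / 10) (by simp) le_rfl
    (by positivity) (fun j hj => by rw [(h1 j (Finset.mem_range.1 hj)).2]; exact hm)
    (fun i hi j hj => h2 i (Finset.mem_range.1 hi) j (Finset.mem_range.1 hj))
    with ⟨v, _, hv⟩ | ⟨A, B, hA, hB, hAB, hAc, hBc, he⟩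
  · exfalso
    have key : ∀ i < 5, ∀ j < 5, i ≠ j →
        (G.Adj (v i) (v j) ↔ j = (i + 1) % 5 ∨ i = (j + 1) % 5) := fun i hi j hj =>
      hv i (Finset.mem_range.2 hi) j (Finset.mem_range.2 hj)
    refine hG (v 0) (v 1) (v 2) (v 3) (v 4) ?_ ?_ ?_ ?_ ?_ ?_ ?_ ?_ ?_ ?_ <;>
    · rw [key _ (by norm_num) _ (by norm_num) (by norm_num)]
      norm_num
  · have hsub : (Finset.range 5).biUnion W ⊆ X :=
      Finset.biUnion_subset.2 fun j hj => (h1 j (Finset.mem_range.1 hj)).1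
    have hcalc : (ε / 5) ^ 5 / 10 * X.card = (ε / (5 : ℕ)) ^ 5 * ((X.card : ℝ) / 10) := by
      push_cast
      ring
    exact ⟨A, hA.trans hsub, B, hB.trans hsub, hAB, by rw [hcalc]; exact hAc,
      by rw [hcalc]; exact hBc, he⟩

/-- A family of disjoint subsets of `X` of size `g`, with few edges between any two of them. -/
structure Blocks (G : SimpleGraph V) (ε : ℝ) (g : ℕ) (X : Finset V) (𝓢 : Finset (Finset V)) :
    Prop where
  subset : ∀ B ∈ 𝓢, B ⊆ X
  card_eq : ∀ B ∈ 𝓢, B.card = g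
  disj : ∀ B ∈ 𝓢, ∀ C ∈ 𝓢, B ≠ C → Disjoint B C
  edges_le : ∀ B ∈ 𝓢, ∀ C ∈ 𝓢, B ≠ C → edges G B C ≤ ε * g ^ 2

theorem Blocks.mono {G : SimpleGraph V} {ε : ℝ} {g : ℕ} {X Y : Finset V}
    {𝓢 : Finset (Finset V)} (h : Blocks G ε g X 𝓢) (hXY : X ⊆ Y) : Blocks G ε g Y 𝓢 :=
  ⟨fun B hB => (h.subset B hB).trans hXY, h.card_eq, h.disj, h.edges_le⟩

theorem Blocks.singleton (G : SimpleGraph V) (ε : ℝ) (X : Finset V) :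
    Blocks G ε X.card X {X} :=
  ⟨by simp, by simp, by simp, by simp⟩

theorem Blocks.union {G : SimpleGraph V} {ε : ℝ} {g : ℕ} {A B X : Finset V}
    {𝓢 𝓣 : Finset (Finset V)} (hS : Blocks G ε g A 𝓢) (hT : Blocks G ε g B 𝓣) (hA : A ⊆ X)
    (hB : B ⊆ X) (hAB : Disjoint A B) (he : edges G A B ≤ ε * g ^ 2) (hg : 0 < g) :
    Blocks G ε g X (𝓢 ∪ 𝓣) ∧ (𝓢 ∪ 𝓣).card = 𝓢.card + 𝓣.card := by
  have hdis : ∀ C ∈ 𝓢, ∀ D ∈ 𝓣, Disjoint C D := fun C hC D hD =>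
    Finset.disjoint_of_subset_left (hS.subset C hC)
      (Finset.disjoint_of_subset_right (hT.subset D hD) hAB)
  have hedge : ∀ C ∈ 𝓢, ∀ D ∈ 𝓣, edges G C D ≤ ε * g ^ 2 := fun C hC D hD =>
    (edges_mono G (hS.subset C hC) (hT.subset D hD)).trans he
  refine ⟨⟨fun C hC => ?_, fun C hC => ?_, fun C hC D hD hCD => ?_, fun C hC D hD hCD => ?_⟩, ?_⟩
  · rcases Finset.mem_union.1 hC with hC | hC
    · exact (hS.subset C hC).trans hA
    · exact (hT.subset C hC).trans hB
  · rcases Finset.mem_union.1 hC with hC | hC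
    · exact hS.card_eq C hC
    · exact hT.card_eq C hC
  · rcases Finset.mem_union.1 hC with hC | hC <;> rcases Finset.mem_union.1 hD with hD | hD
    · exact hS.disj C hC D hD hCD
    · exact hdis C hC D hD
    · exact (hdis D hD C hC).symm
    · exact hT.disj C hC D hD hCD
  · rcases Finset.mem_union.1 hC with hC | hC <;> rcases Finset.mem_union.1 hD with hD | hD
    · exact hS.edges_le C hC D hD hCD
    · exact hedge C hC D hD
    · rw [edges_comm]
      exact hedge D hD C hC
    · exact hT.edges_le C hC D hD hCD
  · refine Finset.card_union_of_disjoint (Finset.disjoint_left.2 fun C hC hC' => ?_)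
    have h1 := hdis C hC C hC'
    rw [Finset.disjoint_self_iff_empty] at h1
    have h2 := hS.card_eq C hC
    rw [h1, Finset.card_empty] at h2
    omega

/-- One doubling step: a sparse pair combines the families found in its two sides. -/
theorem Blocks.exists_double {G : SimpleGraph V} {ε : ℝ} {g : ℕ} {A B X : Finset V} {k : ℕ}
    {𝓢 𝓓 𝓢' 𝓓' : Finset (Finset V)} (hS : Blocks G ε g A 𝓢) (hD : Blocks Gᶜ ε g A 𝓓)
    (hS' : Blocks G ε g B 𝓢') (hD' : Blocks Gᶜ ε g B 𝓓') (hk : k ≤ 𝓢.card * 𝓓.card)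
    (hk' : k ≤ 𝓢'.card * 𝓓'.card) (hA : A ⊆ X)
    (hB : B ⊆ X) (hAB : Disjoint A B) (he : edges G A B ≤ ε * g ^ 2) (hg : 0 < g) :
    ∃ 𝓢₁ 𝓓₁ : Finset (Finset V), Blocks G ε g X 𝓢₁ ∧ Blocks Gᶜ ε g X 𝓓₁ ∧
      2 * k ≤ 𝓢₁.card * 𝓓₁.card := by
  obtain ⟨h1, h2⟩ := hS.union hS' hA hB hAB he hg
  rcases le_total 𝓓.card 𝓓'.card with h | h
  · refine ⟨_, 𝓓', h1, hD'.mono hB, ?_⟩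
    rw [h2]
    nlinarith
  · refine ⟨_, 𝓓, h1, hD.mono hA, ?_⟩
    rw [h2]
    nlinarith

theorem exists_blocks {ε : ℝ} (hε : 0 < ε) (hε1 : ε ≤ 1) (d : ℕ) :
    ∃ (δ : ℝ) (n : ℕ) (g : ℕ → ℕ), 0 < δ ∧ δ ≤ 1 ∧ (∀ x ≥ n, 0 < g x ∧ δ * x ≤ g x) ∧
      ∀ (V : Type) (G : SimpleGraph V), C5Free G → ∀ X : Finset V, n ≤ X.card →
        ∃ 𝓢 𝓓 : Finset (Finset V), Blocks G ε (g X.card) X 𝓢 ∧ Blocks Gᶜ ε (g X.card) X 𝓓 ∧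
          2 ^ d ≤ 𝓢.card * 𝓓.card := by
  induction d with
  | zero =>
    refine ⟨1, 1, id, one_pos, le_rfl, fun x hx => ⟨hx, by simp⟩, fun V G _ X _ => ?_⟩
    exact ⟨{X}, {X}, Blocks.singleton G ε X, Blocks.singleton Gᶜ ε X, by simp⟩
  | succ d ih =>
    obtain ⟨δ, n, g, hδ, hδ1, hg, hmain⟩ := ih
    set ε' := ε * δ ^ 2 with hε'
    have hε'0 : 0 < ε' := by positivity
    have hε'1 : ε' ≤ 1 := mul_le_one₀ hε1 (by positivity) (pow_le_one₀ hδ.le hδ1)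
    set c := (ε' / 5) ^ 5 / 10 with hc
    have hc0 : 0 < c := by positivity
    have hc1 : c ≤ 1 := by
      have : (ε' / 5) ^ 5 ≤ 1 := pow_le_one₀ (by positivity) (by linarith)
      linarith
    have hlarge : ∀ x : ℕ, max 5 ⌈(n + 2) / c⌉₊ ≤ x → n ≤ ⌊c * x⌋₊ ∧ c / 2 * x ≤ ⌊c * x⌋₊ ∧
        0 < ⌊c * x⌋₊ := by
      intro x hx
      have h1 : ((n + 2) / c : ℝ) ≤ x := Nat.ceil_le.1 ((le_max_right _ _).trans hx)
      rw [div_le_iff₀ hc0] at h1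
      have hn0 : (0 : ℝ) ≤ n := by positivity
      refine ⟨Nat.le_floor (by linarith), ?_, Nat.floor_pos.2 (by linarith)⟩
      have := Nat.lt_floor_add_one (c * x)
      linarith
    refine ⟨δ * (c / 2), max 5 ⌈(n + 2) / c⌉₊, fun x => g ⌊c * x⌋₊, by positivity,
      mul_le_one₀ hδ1 (by positivity) (by linarith), fun x hx => ?_, fun V G hG X hX => ?_⟩
    · obtain ⟨h1, h2, _⟩ := hlarge x hx
      refine ⟨(hg _ h1).1, le_trans ?_ (hg _ h1).2⟩
      rw [mul_assoc]
      gcongr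
    · obtain ⟨h1, h2, h3⟩ := hlarge _ hX
      obtain ⟨hg1, hg2⟩ := hg _ h1
      obtain ⟨A, hA, B, hB, hAB, hAc, hBc, he⟩ := hG.exists_pure_pair hε'0 hε'1
        ((le_max_left _ _).trans hX)
      have hmA : ⌊c * (X.card : ℝ)⌋₊ ≤ A.card := Nat.floor_le_of_le hAc
      have hmB : ⌊c * (X.card : ℝ)⌋₊ ≤ B.card := Nat.floor_le_of_le hBc
      have hle : ε' * (⌊c * (X.card : ℝ)⌋₊ : ℝ) ^ 2 ≤
          ε * (g ⌊c * (X.card : ℝ)⌋₊ : ℝ) ^ 2 := by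
        rw [hε', mul_assoc, ← mul_pow]
        gcongr
      rcases he with he | he
      · obtain ⟨A', hA', B', hB', hAc', hBc', he'⟩ := exists_edges_le_of_card G he h3 hmA hmB
        obtain ⟨𝓢, 𝓓, hS, hD, hk⟩ := hmain V G hG A' (by rw [hAc']; exact h1)
        obtain ⟨𝓢', 𝓓', hS', hD', hk'⟩ := hmain V G hG B' (by rw [hBc']; exact h1)
        rw [hAc'] at hS hD
        rw [hBc'] at hS' hD'
        obtain ⟨𝓢₁, 𝓓₁, r1, r2, r3⟩ := hS.exists_double hD hS' hD' hk hk' (hA'.trans hA)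
          (hB'.trans hB) (Finset.disjoint_of_subset_left hA'
            (Finset.disjoint_of_subset_right hB' hAB)) (he'.trans hle) hg1
        exact ⟨𝓢₁, 𝓓₁, r1, r2, by rw [pow_succ]; linarith⟩
      · obtain ⟨A', hA', B', hB', hAc', hBc', he'⟩ := exists_edges_le_of_card Gᶜ he h3 hmA hmB
        obtain ⟨𝓢, 𝓓, hS, hD, hk⟩ := hmain V Gᶜ hG.compl A' (by rw [hAc']; exact h1)
        obtain ⟨𝓢', 𝓓', hS', hD', hk'⟩ := hmain V Gᶜ hG.compl B' (by rw [hBc']; exact h1)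
        rw [hAc'] at hS hD
        rw [hBc'] at hS' hD'
        obtain ⟨𝓢₁, 𝓓₁, r1, r2, r3⟩ := hS.exists_double hD hS' hD' hk hk' (hA'.trans hA)
          (hB'.trans hB) (Finset.disjoint_of_subset_left hA'
            (Finset.disjoint_of_subset_right hB' hAB)) (he'.trans hle) hg1
        rw [compl_compl] at r2
        exact ⟨𝓓₁, 𝓢₁, r2, r1, by rw [pow_succ]; linarith⟩

theorem exists_restricted_of_edges {G : SimpleGraph V} {S : Finset V} {η : ℝ} (hη : 0 < η)
    (hS : S.Nonempty) (he : edges G S S ≤ η / 4 * S.card ^ 2) :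
    ∃ S' ⊆ S, S'.Nonempty ∧ (S.card : ℝ) / 2 ≤ S'.card ∧ Restricted G η S' := by
  have hn : (0 : ℝ) < S.card := by exact_mod_cast hS.card_pos
  set S' := S.filter fun v => ((nb G v S).card : ℝ) ≤ η / 2 * S.card with hS'
  have hsub : S' ⊆ S := Finset.filter_subset _ _
  have h1 : ((S \ S').card : ℝ) * (η / 2 * S.card) ≤ edges G S S := by
    rw [← nsmul_eq_mul, ← Finset.sum_const]
    refine (Finset.sum_le_sum fun v hv => ?_).trans (Finset.sum_le_sum_of_subset_of_nonneg
      Finset.sdiff_subset fun _ _ _ => by positivity)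
    obtain ⟨hv1, hv2⟩ := Finset.mem_sdiff.1 hv
    by_contra hcon
    exact hv2 (Finset.mem_filter.2 ⟨hv1, (not_le.1 hcon).le⟩)
  have h2 : ((S \ S').card : ℝ) ≤ S.card / 2 := by
    refine le_of_mul_le_mul_right ((h1.trans he).trans (le_of_eq ?_))
      (by positivity : 0 < η / 2 * (S.card : ℝ))
    ring
  rw [card_sdiff_real hsub] at h2
  have h3 : (S.card : ℝ) / 2 ≤ S'.card := by linarith
  refine ⟨S', hsub, ?_, h3, fun v hv => ?_⟩
  · rw [← Finset.card_pos]
    have : (0 : ℝ) < S'.card := by linarith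
    exact_mod_cast this
  · refine (card_le_real (nb_mono G v hsub)).trans ((Finset.mem_filter.1 hv).2.trans ?_)
    nlinarith

theorem Blocks.exists_restricted {G : SimpleGraph V} {η : ℝ} (hη : 0 < η) {g : ℕ} (hg : 0 < g)
    {X : Finset V} {𝓢 : Finset (Finset V)} (h : Blocks G (η / 8) g X 𝓢)
    (hm : 8 ≤ η * 𝓢.card) :
    ∃ S ⊆ X, S.Nonempty ∧ (g : ℝ) / 2 ≤ S.card ∧ Restricted G η S := by
  set S := 𝓢.biUnion id with hS
  have hg0 : (0 : ℝ) < g := by exact_mod_cast hg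
  have hm0 : (0 : ℝ) < 𝓢.card := by
    by_contra hcon
    have : (𝓢.card : ℝ) = 0 := le_antisymm (not_lt.1 hcon) (by positivity)
    rw [this] at hm
    norm_num at hm
  have hm1 : (1 : ℝ) ≤ 𝓢.card := by
    have : 0 < 𝓢.card := by exact_mod_cast hm0
    exact_mod_cast this
  have hSc : (S.card : ℝ) = 𝓢.card * g := by
    have : S.card = 𝓢.card * g := by
      rw [hS, Finset.card_biUnion (t := id) fun B hB C hC hBC => h.disj B hB C hC hBC]
      rw [Finset.sum_congr rfl fun B hB => show (id B).card = g from h.card_eq B hB]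
      simp
    exact_mod_cast this
  have hSne : S.Nonempty := by
    rw [← Finset.card_pos]
    have : (0 : ℝ) < S.card := by rw [hSc]; positivity
    exact_mod_cast this
  have hcol : ∀ B ∈ 𝓢, edges G S B ≤ g ^ 2 + 𝓢.card * (η / 8 * g ^ 2) := by
    intro B hB
    have e0 : edges G S B ≤ ∑ C ∈ 𝓢, edges G C B := by
      unfold edges
      rw [hS, Finset.sum_biUnion (t := id) fun B hB C hC hBC => h.disj B hB C hC hBC]
      rfl
    rw [← Finset.sum_erase_add _ _ hB] at e0
    have e1 : edges G B B ≤ g ^ 2 := by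
      refine (Finset.sum_le_card_nsmul _ _ (g : ℝ) fun v _ => ?_).trans (le_of_eq ?_)
      · refine (card_le_real (nb_subset G v B)).trans (le_of_eq ?_)
        rw [h.card_eq B hB]
      · rw [nsmul_eq_mul, h.card_eq B hB]
        ring
    have e2 : ∑ C ∈ 𝓢.erase B, edges G C B ≤ (𝓢.erase B).card * (η / 8 * g ^ 2) := by
      rw [← nsmul_eq_mul]
      exact Finset.sum_le_card_nsmul _ _ _ fun C hC => h.edges_le C (Finset.mem_of_mem_erase hC) B
        hB (Finset.ne_of_mem_erase hC)
    have e3 : ((𝓢.erase B).card : ℝ) * (η / 8 * g ^ 2) ≤ 𝓢.card * (η / 8 * g ^ 2) :=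
      mul_le_mul_of_nonneg_right (card_le_real (Finset.erase_subset _ _)) (by positivity)
    linarith
  have htot : edges G S S ≤ 𝓢.card * (g ^ 2 + 𝓢.card * (η / 8 * g ^ 2)) := by
    have e0 : edges G S S ≤ ∑ C ∈ 𝓢, edges G C S := by
      conv_lhs => unfold edges
      rw [hS, Finset.sum_biUnion (t := id) fun B hB C hC hBC => h.disj B hB C hC hBC]
      rfl
    refine e0.trans ?_
    rw [← nsmul_eq_mul]
    refine Finset.sum_le_card_nsmul _ _ _ fun C hC => ?_
    rw [edges_comm]
    exact hcol C hC
  obtain ⟨S', h1, h2, h3, h4⟩ := exists_restricted_of_edges hη hSne (G := G) (by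
    refine htot.trans ?_
    rw [hSc]
    have : (𝓢.card : ℝ) * g ^ 2 * 8 ≤ 𝓢.card * g ^ 2 * (η * 𝓢.card) := by gcongr
    nlinarith)
  refine ⟨S', h1.trans (Finset.biUnion_subset.2 h.subset), h2, le_trans ?_ h3, h4⟩
  rw [hSc]
  have : 1 * (g : ℝ) ≤ 𝓢.card * g := by gcongr
  linarith

/-- Rödl's theorem for five-cycles: every set has a linear-size subset which is very sparse or
very dense. -/
theorem exists_restricted {η : ℝ} (hη : 0 < η) (hη1 : η ≤ 1) :
    ∃ δ : ℝ, 0 < δ ∧ ∀ (V : Type) (G : SimpleGraph V), C5Free G → ∀ X : Finset V, X.Nonempty →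
      ∃ S ⊆ X, S.Nonempty ∧ δ * X.card ≤ S.card ∧ (Restricted G η S ∨ Restricted Gᶜ η S) := by
  obtain ⟨m, hm⟩ := exists_nat_ge (8 / η)
  rw [div_le_iff₀ hη] at hm
  obtain ⟨δ, n, g, hδ, hδ1, hg, hmain⟩ := exists_blocks (ε := η / 8) (by positivity) (by linarith)
    (2 * m)
  refine ⟨min (δ / 2) (1 / (n + 1)), by positivity, fun V G hG X hX => ?_⟩
  by_cases hn : n ≤ X.card
  · obtain ⟨hg0, hg1⟩ := hg _ hn
    obtain ⟨𝓢, 𝓓, hS, hD, hk⟩ := hmain V G hG X hn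
    have hle : min (δ / 2) (1 / (n + 1)) * (X.card : ℝ) ≤ (g X.card : ℝ) / 2 := by
      have : min (δ / 2) (1 / (n + 1)) * (X.card : ℝ) ≤ δ / 2 * X.card := by
        gcongr
        exact min_le_left _ _
      linarith
    have hmm : m * m < 2 ^ (2 * m) := by
      have := Nat.lt_two_pow_self (n := m)
      rw [two_mul, pow_add]
      nlinarith
    have hor : m ≤ 𝓢.card ∨ m ≤ 𝓓.card := by
      by_contra hcon
      push Not at hcon
      nlinarith
    rcases hor with hor | hor
    · have : (m : ℝ) ≤ 𝓢.card := by exact_mod_cast hor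
      obtain ⟨S, h1, h2, h3, h4⟩ := hS.exists_restricted hη hg0 (by nlinarith)
      exact ⟨S, h1, h2, hle.trans h3, Or.inl h4⟩
    · have : (m : ℝ) ≤ 𝓓.card := by exact_mod_cast hor
      obtain ⟨S, h1, h2, h3, h4⟩ := hD.exists_restricted hη hg0 (by nlinarith)
      exact ⟨S, h1, h2, hle.trans h3, Or.inr h4⟩
  · obtain ⟨x, hx⟩ := hX
    refine ⟨{x}, by simpa using hx, by simp, ?_, Or.inl ?_⟩
    · have h1 : (X.card : ℝ) ≤ n + 1 := by
        exact_mod_cast (by omega : X.card ≤ n + 1)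
      calc min (δ / 2) (1 / (n + 1)) * (X.card : ℝ) ≤ 1 / (n + 1) * (n + 1) := by
            gcongr
            exact min_le_right _ _
        _ = 1 := one_div_mul_cancel (by positivity)
        _ = _ := by simp
    · intro v hv
      rw [Finset.mem_singleton] at hv
      subst hv
      have : nb G v {v} = ∅ := by
        ext y
        simp +contextual
      rw [this]
      simp only [Finset.card_empty, Nat.cast_zero, Finset.card_singleton]
      positivity

/-- The largest size of a stable subset of `X`. -/
noncomputable def stab (G : SimpleGraph V) (X : Finset V) : ℕ :=
  (X.powerset.filter fun T => Anti G T T).sup Finset.card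

theorem card_le_stab {G : SimpleGraph V} {X T : Finset V} (hT : T ⊆ X) (h : Anti G T T) :
    T.card ≤ stab G X :=
  Finset.le_sup (f := Finset.card) (by simp [hT, h])

theorem exists_card_eq_stab (G : SimpleGraph V) (X : Finset V) :
    ∃ T ⊆ X, Anti G T T ∧ T.card = stab G X := by
  have hne : (X.powerset.filter fun T => Anti G T T).Nonempty := 
    ⟨∅, Finset.mem_filter.2 ⟨by simp, by simp [Anti]⟩⟩
  obtain ⟨T, hT, h⟩ := Finset.exists_mem_eq_sup _ hne Finset.card
  simp only [Finset.mem_filter, Finset.mem_powerset] at hT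
  exact ⟨T, hT.1, hT.2, h.symm⟩

theorem stab_mono (G : SimpleGraph V) {X Y : Finset V} (h : X ⊆ Y) : stab G X ≤ stab G Y := by
  obtain ⟨T, hT, hA, hc⟩ := exists_card_eq_stab G X
  exact hc ▸ card_le_stab (hT.trans h) hA

theorem stab_pos (G : SimpleGraph V) {X : Finset V} (h : X.Nonempty) : 0 < stab G X := by
  obtain ⟨x, hx⟩ := h
  have : ({x} : Finset V).card ≤ stab G X := card_le_stab (by simpa using hx) (by simp [Anti])
  rwa [Finset.card_singleton] at this

theorem sum_stab_le {G : SimpleGraph V} {U : Finset V} {𝓑 : Finset (Finset V)}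
    (hU : ∀ B ∈ 𝓑, B ⊆ U) (hdisj : ∀ B ∈ 𝓑, ∀ B' ∈ 𝓑, B ≠ B' → Disjoint B B')
    (hanti : ∀ B ∈ 𝓑, ∀ B' ∈ 𝓑, B ≠ B' → Anti G B B') :
    ∑ B ∈ 𝓑, stab G B ≤ stab G U := by
  choose T hT hA hc using exists_card_eq_stab G
  calc ∑ B ∈ 𝓑, stab G B = ∑ B ∈ 𝓑, (T B).card := by simp only [hc]
    _ = (𝓑.biUnion T).card := (Finset.card_biUnion fun B hB B' hB' hne =>
        (hdisj B hB B' hB' hne).mono (hT B) (hT B')).symm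
    _ ≤ stab G U := by
      refine card_le_stab (Finset.biUnion_subset.2 fun B hB => (hT B).trans (hU B hB)) ?_
      intro x hx y hy
      rw [Finset.mem_biUnion] at hx hy
      obtain ⟨B, hB, hxB⟩ := hx
      obtain ⟨C, hC, hyC⟩ := hy
      by_cases hBC : B = C
      · subst hBC
        exact hA B x hxB y hyC
      · exact hanti B hB C hC hBC x (hT B hxB) y (hT C hyC)

/-- A set whose degrees are at most `d` has a stable subset of size at least `|S| / (1 + d)`. -/
theorem card_le_stab_mul {G : SimpleGraph V} {S : Finset V} {d : ℝ}
    (h : ∀ v ∈ S, ((nb G v S).card : ℝ) ≤ d) : (S.card : ℝ) ≤ stab G S * (1 + d) := by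
  obtain ⟨T, hT, hA, hc⟩ := exists_card_eq_stab G S
  have hsub : S ⊆ T.biUnion fun v => {v} ∪ nb G v S := by
    intro x hx
    rw [Finset.mem_biUnion]
    by_contra hcon
    push Not at hcon
    have hxT : x ∉ T := fun hxT => hcon x hxT (by simp)
    have hadj : ∀ v ∈ T, ¬ G.Adj v x := fun v hv hvx => hcon v hv (by simp [hx, hvx])
    have hle : (insert x T).card ≤ stab G S := by
      refine card_le_stab (Finset.insert_subset hx hT) ?_
      intro u hu v hv huv
      rw [Finset.mem_insert] at hu hv
      rcases hu with rfl | hu <;> rcases hv with rfl | hv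
      · exact G.loopless.irrefl _ huv
      · exact hadj v hv huv.symm
      · exact hadj u hu huv
      · exact hA u hu v hv huv
    rw [Finset.card_insert_of_notMem hxT, hc] at hle
    omega
  rw [← hc]
  refine (card_le_real hsub).trans (card_biUnion_le_real _ _ _ fun v hv => ?_)
  refine (card_union_le_real _ _).trans ?_
  rw [Finset.card_singleton, Nat.cast_one]
  linarith [h v (hT hv)]

/-- The product of the stability number and the clique number of `G[X]`. -/
noncomputable def kap (G : SimpleGraph V) (X : Finset V) : ℕ := stab G X * stab Gᶜ X

theorem kap_compl (G : SimpleGraph V) (X : Finset V) : kap Gᶜ X = kap G X := by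
  rw [kap, kap, compl_compl, mul_comm]

theorem kap_mono (G : SimpleGraph V) {X Y : Finset V} (h : X ⊆ Y) : kap G X ≤ kap G Y :=
  Nat.mul_le_mul (stab_mono G h) (stab_mono Gᶜ h)

theorem kap_pos (G : SimpleGraph V) {X : Finset V} (h : X.Nonempty) : 0 < kap G X :=
  Nat.mul_pos (stab_pos G h) (stab_pos Gᶜ h)

theorem stab_le_kap (G : SimpleGraph V) {X Y : Finset V} (h : X ⊆ Y) (hX : X.Nonempty) :
    stab G X ≤ kap G Y :=
  (Nat.le_mul_of_pos_right _ (stab_pos Gᶜ hX)).trans (kap_mono G h)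

theorem two_le_kap (G : SimpleGraph V) {X : Finset V} (h : 2 ≤ X.card) : 2 ≤ kap G X := by
  obtain ⟨x, hx, y, hy, hne⟩ := Finset.one_lt_card.1 h
  have hX : X.Nonempty := ⟨x, hx⟩
  have hsub : ({x, y} : Finset V) ⊆ X := by
    intro v hv
    simp only [Finset.mem_insert, Finset.mem_singleton] at hv
    rcases hv with rfl | rfl <;> assumption
  rw [← Finset.card_pair hne]
  by_cases hxy : G.Adj x y
  · have hA : Anti Gᶜ {x, y} {x, y} := by
      intro u hu v hv
      simp only [Finset.mem_insert, Finset.mem_singleton] at hu hv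
      rcases hu with rfl | rfl <;> rcases hv with rfl | rfl <;> simp [hxy, hxy.symm]
    rw [← kap_compl]
    exact (card_le_stab hsub hA).trans (stab_le_kap Gᶜ subset_rfl hX)
  · have hyx : ¬ G.Adj y x := fun h => hxy h.symm
    have hA : Anti G {x, y} {x, y} := by
      intro u hu v hv
      simp only [Finset.mem_insert, Finset.mem_singleton] at hu hv
      rcases hu with rfl | rfl <;> rcases hv with rfl | rfl <;> simp [hxy, hyx]
    exact (card_le_stab hsub hA).trans (stab_le_kap G subset_rfl hX)

theorem sum_kap_le {G : SimpleGraph V} {U : Finset V} {𝓑 : Finset (Finset V)}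
    (hU : ∀ B ∈ 𝓑, B ⊆ U) (hdisj : ∀ B ∈ 𝓑, ∀ B' ∈ 𝓑, B ≠ B' → Disjoint B B')
    (hanti : ∀ B ∈ 𝓑, ∀ B' ∈ 𝓑, B ≠ B' → Anti G B B') :
    ∑ B ∈ 𝓑, kap G B ≤ kap G U :=
  calc ∑ B ∈ 𝓑, kap G B ≤ ∑ B ∈ 𝓑, stab G B * stab Gᶜ U :=
        Finset.sum_le_sum fun B hB => Nat.mul_le_mul_left _ (stab_mono Gᶜ (hU B hB))
    _ = (∑ B ∈ 𝓑, stab G B) * stab Gᶜ U := (Finset.sum_mul _ _ _).symm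
    _ ≤ kap G U := Nat.mul_le_mul_right _ (sum_stab_le hU hdisj hanti)

/-- Every set contains a critical set that does at least as badly in the ratio
`κ(U) / |U| ^ σ`. -/
theorem exists_crit (G : SimpleGraph V) {σ : ℝ} (hσ : 0 < σ) {X : Finset V} (hX : X.Nonempty) :
    ∃ U ⊆ X, U.Nonempty ∧ kap G U * (X.card : ℝ) ^ σ ≤ kap G X * (U.card : ℝ) ^ σ ∧
      Crit G σ U := by
  have hpos : ∀ {B : Finset V}, B.Nonempty → (0 : ℝ) < (B.card : ℝ) ^ σ := fun hB =>
    Real.rpow_pos_of_pos (by exact_mod_cast hB.card_pos) _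
  obtain ⟨U, hU, hmin⟩ := (X.powerset.filter Finset.Nonempty).exists_min_image
    (fun U => (kap G U : ℝ) / (U.card : ℝ) ^ σ) ⟨X, by simp [hX]⟩
  simp only [Finset.mem_filter, Finset.mem_powerset] at hU hmin
  have hmin' : ∀ B ⊆ X, B.Nonempty →
      kap G U * (B.card : ℝ) ^ σ ≤ kap G B * (U.card : ℝ) ^ σ := by
    intro B hB hne
    have := hmin B ⟨hB, hne⟩
    rwa [div_le_div_iff₀ (hpos hU.2) (hpos hne)] at this
  refine ⟨U, hU.1, hU.2, hmin' X subset_rfl hX, fun 𝓑 h1 h2 h3 => ?_⟩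
  have hk : (0 : ℝ) < kap G U := by exact_mod_cast kap_pos G hU.2
  have hsum : ∑ B ∈ 𝓑, kap G B ≤ kap G U := by
    rcases h3 with h3 | h3
    · exact sum_kap_le h1 h2 h3
    · simp only [← kap_compl G]
      exact sum_kap_le h1 h2 h3
  have hsum' : ∑ B ∈ 𝓑, (kap G B : ℝ) ≤ kap G U := by exact_mod_cast hsum
  refine le_of_mul_le_mul_left ?_ hk
  calc kap G U * ∑ B ∈ 𝓑, (B.card : ℝ) ^ σ = ∑ B ∈ 𝓑, kap G U * (B.card : ℝ) ^ σ :=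
        Finset.mul_sum _ _ _
    _ ≤ ∑ B ∈ 𝓑, kap G B * (U.card : ℝ) ^ σ := by
        refine Finset.sum_le_sum fun B hB => ?_
        rcases B.eq_empty_or_nonempty with rfl | hne
        · simp only [Finset.card_empty, Nat.cast_zero, Real.zero_rpow hσ.ne', mul_zero]
          positivity
        · exact hmin' B ((h1 B hB).trans hU.1) hne
    _ = (∑ B ∈ 𝓑, (kap G B : ℝ)) * (U.card : ℝ) ^ σ := (Finset.sum_mul _ _ _).symm
    _ ≤ kap G U * (U.card : ℝ) ^ σ := mul_le_mul_of_nonneg_right hsum' (hpos hU.2).le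

/-- In a minimal counterexample `W`, every large subset has a critical subset of
proportional size. -/
theorem exists_large_crit {G : SimpleGraph V} {σ τ s A : ℝ} (hs : 0 ≤ s) (hτ : 0 < τ)
    (hA : 0 ≤ A) (hAτ : (A + 1) * τ ≤ σ) {W X : Finset V} (hX : X.Nonempty) (hXW : X ⊆ W)
    (hW : (kap G W : ℝ) < (W.card : ℝ) ^ τ)
    (hmin : ∀ U ⊂ W, (U.card : ℝ) ^ τ ≤ kap G U)
    (hlarge : Real.exp (-(A * s)) * W.card ≤ X.card) :
    ∃ U ⊆ X, Real.exp (-s) * X.card ≤ (U.card : ℝ) ∧ Crit G σ U := by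
  have hσ : 0 < σ := by nlinarith
  obtain ⟨U, hUX, hU, hk, hcrit⟩ := exists_crit G hσ hX
  refine ⟨U, hUX, ?_, hcrit⟩
  have hxpos : (0 : ℝ) < X.card := by exact_mod_cast hX.card_pos
  have hupos : (0 : ℝ) < U.card := by exact_mod_cast hU.card_pos
  have hnpos : (0 : ℝ) < W.card := by exact_mod_cast (hX.mono hXW).card_pos
  rcases (hUX.trans hXW).eq_or_ssubset with rfl | hss
  · have : (X.card : ℝ) ≤ U.card := card_le_real hXW
    have h1 : Real.exp (-s) ≤ 1 := Real.exp_le_one_iff.2 (by linarith)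
    nlinarith
  by_contra hcon
  push Not at hcon
  have hkX : (kap G X : ℝ) < (W.card : ℝ) ^ τ :=
    lt_of_le_of_lt (by exact_mod_cast kap_mono G hXW) hW
  have h1 : (U.card : ℝ) ^ τ * (X.card : ℝ) ^ σ < (W.card : ℝ) ^ τ * (U.card : ℝ) ^ σ :=
    calc (U.card : ℝ) ^ τ * (X.card : ℝ) ^ σ ≤ kap G U * (X.card : ℝ) ^ σ := by
          gcongr
          exact hmin U hss
      _ ≤ kap G X * (U.card : ℝ) ^ σ := hk
      _ < _ := by gcongr
  have hn := Real.exp_log hnpos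
  have hu := Real.exp_log hupos
  have hx := Real.exp_log hxpos
  set ln := Real.log W.card
  set lu := Real.log U.card
  set lx := Real.log X.card
  rw [← hn, ← hu, ← hx] at h1
  simp only [← Real.exp_mul, ← Real.exp_add, Real.exp_lt_exp] at h1
  rw [← hx, ← hu, ← Real.exp_add, Real.exp_lt_exp] at hcon
  rw [← hx, ← hn, ← Real.exp_add, Real.exp_le_exp] at hlarge
  have hστ : 0 ≤ σ - τ := by nlinarith
  nlinarith [mul_le_mul_of_nonneg_left hcon.le hστ, mul_le_mul_of_nonneg_left hlarge hτ.le,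
    mul_nonneg hs (sub_nonneg.2 hAτ)]

/-- A set that is `exp (-100 s)`-restricted in a minimal counterexample `W` has a subset
restricted with `s` replaced by `3 / 2 * s`. -/
theorem C5Free.exists_more_restricted {G : SimpleGraph V} (hG : C5Free G) {s a τ : ℝ}
    (hs : 10 ^ 10 ≤ s) (ha : 1200 ≤ a) (hτ : 0 < τ) (haτ : (a + 601) * τ ≤ 1 / 1500)
    {W S : Finset V} (hSW : S ⊆ W) (hS : S.Nonempty)
    (hW : (kap G W : ℝ) < (W.card : ℝ) ^ τ) (hmin : ∀ U ⊂ W, (U.card : ℝ) ^ τ ≤ kap G U)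
    (hlarge : Real.exp (-(a * s)) * W.card ≤ S.card)
    (hres : Restricted G (Real.exp (-(100 * s))) S) :
    ∃ X ⊆ W, X.Nonempty ∧ Real.exp (-(a * (3 / 2 * s))) * W.card ≤ X.card ∧
      (Restricted G (Real.exp (-(100 * (3 / 2 * s)))) X ∨
        Restricted Gᶜ (Real.exp (-(100 * (3 / 2 * s)))) X) := by
  have hz : Real.exp (-s) ≤ 1 / 10 ^ 10 := by
    rw [Real.exp_neg, ← one_div]
    refine one_div_le_one_div_of_le (by norm_num) ?_
    linarith [Real.add_one_le_exp s]
  have hpow : ∀ k : ℕ, Real.exp (-s) ^ k = Real.exp (-(k * s)) := by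
    intro k
    rw [← Real.exp_nat_mul]
    ring_nf
  have hSpos : (0 : ℝ) < S.card := by exact_mod_cast hS.card_pos
  have hne : ∀ {X : Finset V}, Real.exp (-s) ^ 600 * S.card ≤ (X.card : ℝ) → X.Nonempty := by
    intro X hX
    rw [← Finset.card_pos]
    have : (0 : ℝ) < X.card := lt_of_lt_of_le (by positivity) hX
    exact_mod_cast this
  have hbig : ∀ {X : Finset V}, Real.exp (-s) ^ 600 * S.card ≤ (X.card : ℝ) →
      Real.exp (-((a + 600) * s)) * W.card ≤ X.card := by
    intro X hX
    refine le_trans ?_ hX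
    have : Real.exp (-((a + 600) * s)) = Real.exp (-s) ^ 600 * Real.exp (-(a * s)) := by
      rw [hpow, ← Real.exp_add]
      congr 1
      push_cast
      ring
    rw [this, mul_assoc]
    exact mul_le_mul_of_nonneg_left hlarge (by positivity)
  by_contra hcon
  have h150 : Real.exp (-(100 * (3 / 2 * s))) = Real.exp (-s) ^ 150 := by
    rw [hpow]
    congr 1
    push_cast
    ring
  rw [h150] at hcon
  refine hG.false_of_stuck (Real.exp_pos (-s)) hz hS ?_ ?_ ?_
  · rw [hpow]
    exact_mod_cast hres
  · intro X hXS hX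
    rw [← not_or]
    intro hor
    refine hcon ⟨X, hXS.trans hSW, hne hX, le_trans ?_ (hbig hX), hor⟩
    refine mul_le_mul_of_nonneg_right (Real.exp_le_exp.2 ?_) (by positivity)
    nlinarith
  · intro X hXS hX
    exact exists_large_crit (A := a + 600) (by linarith) hτ (by linarith) (by linarith) (hne hX)
      (hXS.trans hSW) hW hmin (hbig hX)

theorem exists_kap_ge : ∃ τ : ℝ, 0 < τ ∧ ∀ (V : Type) (G : SimpleGraph V), C5Free G →
    ∀ W : Finset V, (W.card : ℝ) ^ τ ≤ kap G W := by
  obtain ⟨δ, hδ, hrodl⟩ := exists_restricted (Real.exp_pos (-(100 * 10 ^ 10)))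
    (Real.exp_le_one_iff.2 (by norm_num))
  set a : ℝ := 1200 + 1 / δ with ha
  have hδ' : 0 < 1 / δ := by positivity
  have ha0 : 1200 ≤ a := by linarith
  have hapos : 0 < a := by linarith
  set τ : ℝ := 1 / (10 ^ 14 * a) with hτdef
  have hτ : 0 < τ := by positivity
  have haτ : a * τ = 1 / 10 ^ 14 := by
    rw [hτdef]
    field_simp
  have haδ : Real.exp (-(a * 10 ^ 10)) ≤ δ := by
    rw [Real.exp_neg, inv_le_comm₀ (Real.exp_pos _) hδ, ← one_div]
    have h1 := Real.add_one_le_exp (a * 10 ^ 10)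
    have h2 : a ≤ a * 10 ^ 10 := le_mul_of_one_le_right hapos.le (by norm_num)
    have h3 : 1 / δ ≤ a := by linarith
    exact h3.trans (h2.trans ((le_add_of_nonneg_right zero_le_one).trans h1))
  refine ⟨τ, hτ, fun V G hG W => ?_⟩
  induction W using Finset.strongInduction with
  | H W hmin =>
  by_contra hW
  push Not at hW
  have hcard : 2 ≤ W.card := by
    by_contra hlt
    have hW01 : W.card = 0 ∨ W.card = 1 := by omega
    rcases hW01 with h | h
    · rw [h, Nat.cast_zero, Real.zero_rpow hτ.ne'] at hW
      exact absurd hW (not_lt.2 (by positivity))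
    · rw [h, Nat.cast_one, Real.one_rpow] at hW
      have := kap_pos G (Finset.card_pos.1 (by omega : 0 < W.card))
      have : (1 : ℝ) ≤ kap G W := by exact_mod_cast this
      linarith
  have hWne : W.Nonempty := Finset.card_pos.1 (by omega)
  have hnpos : (0 : ℝ) < W.card := by exact_mod_cast hWne.card_pos
  have htwo : (2 : ℝ) ≤ kap G W := by exact_mod_cast two_le_kap G hcard
  set L := Real.log W.card with hL
  have hexpL : Real.exp L = W.card := Real.exp_log hnpos
  have hnτ : (W.card : ℝ) ^ τ = Real.exp (τ * L) := by
    rw [← hexpL, ← Real.exp_mul, mul_comm]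
  rw [hnτ] at hW
  have hladder : ∀ i : ℕ, ∃ S ⊆ W, S.Nonempty ∧
      Real.exp (-(a * (10 ^ 10 * (3 / 2) ^ i))) * W.card ≤ S.card ∧
      (Restricted G (Real.exp (-(100 * (10 ^ 10 * (3 / 2) ^ i)))) S ∨
        Restricted Gᶜ (Real.exp (-(100 * (10 ^ 10 * (3 / 2) ^ i)))) S) := by
    intro i
    induction i with
    | zero =>
      obtain ⟨S, h1, h2, h3, h4⟩ := hrodl V G hG W hWne
      refine ⟨S, h1, h2, le_trans ?_ h3, ?_⟩
      · rw [pow_zero, mul_one]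
        exact mul_le_mul_of_nonneg_right haδ hnpos.le
      · rwa [pow_zero, mul_one]
    | succ i ih =>
      obtain ⟨S, h1, h2, h3, h4⟩ := ih
      have hs : (10 : ℝ) ^ 10 ≤ 10 ^ 10 * (3 / 2) ^ i :=
        le_mul_of_one_le_right (by norm_num) (one_le_pow₀ (by norm_num))
      have hstep : (10 : ℝ) ^ 10 * (3 / 2) ^ (i + 1) = 3 / 2 * (10 ^ 10 * (3 / 2) ^ i) := by ring
      rw [hstep]
      have haτ' : (a + 601) * τ ≤ 1 / 1500 := by nlinarith
      rcases h4 with h4 | h4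
      · exact hG.exists_more_restricted hs ha0 hτ haτ' h1 h2 (hnτ ▸ hW) hmin h3 h4
      · have := hG.compl.exists_more_restricted hs ha0 hτ haτ' h1 h2
          (by rw [kap_compl, hnτ]; exact hW) (fun U hU => by rw [kap_compl]; exact hmin U hU) h3 h4
        rw [compl_compl] at this
        simpa only [or_comm] using this
  have hex : ∃ i : ℕ, L ≤ 2 * a * (10 ^ 10 * (3 / 2) ^ i) := by
    obtain ⟨i, hi⟩ := pow_unbounded_of_one_lt (L / (2 * a * 10 ^ 10))
      (by norm_num : (1 : ℝ) < 3 / 2)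
    rw [div_lt_iff₀ (by positivity)] at hi
    exact ⟨i, by linarith⟩
  have hlow := Nat.find_spec hex
  have hprev := Nat.find_min hex (m := Nat.find hex - 1)
  obtain ⟨S, hSW, hS, hSc, hSr⟩ := hladder (Nat.find hex)
  have hτL : 1 < τ * L * 2 := by
    have h1 : Real.exp (τ * L) > 2 := by linarith
    by_contra hcon
    push Not at hcon
    have h2 : Real.exp (τ * L) ≤ Real.exp (1 / 2) := Real.exp_le_exp.2 (by linarith)
    have h3 : Real.exp (1 / 2) * Real.exp (1 / 2) = Real.exp 1 := by
      rw [← Real.exp_add]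
      norm_num
    nlinarith [Real.exp_one_lt_d9]
  have hi0 : Nat.find hex ≠ 0 := by
    intro h0
    rw [h0, pow_zero, mul_one] at hlow
    nlinarith [mul_le_mul_of_nonneg_left hlow hτ.le]
  have hup : a * (10 ^ 10 * (3 / 2) ^ Nat.find hex) ≤ 3 / 4 * L := by
    have h1 := hprev (by omega)
    push Not at h1
    obtain ⟨j, hj⟩ := Nat.exists_eq_succ_of_ne_zero hi0
    rw [hj] at h1 ⊢
    simp only [Nat.succ_eq_add_one, Nat.add_sub_cancel] at h1
    rw [Nat.succ_eq_add_one, pow_succ (3 / 2 : ℝ)]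
    linarith
  generalize 10 ^ 10 * (3 / 2 : ℝ) ^ Nat.find hex = s at hup hlow hSc hSr
  have hLpos : 0 < L := by
    by_contra hcon
    nlinarith
  have hSpos : (0 : ℝ) < S.card := by exact_mod_cast hS.card_pos
  have hsize : 2 * Real.exp (τ * L) ≤ S.card := by
    refine le_trans ?_ hSc
    rw [← hexpL, ← Real.exp_add]
    have h1 : 2 * Real.exp (τ * L) ≤ Real.exp (τ * L) * Real.exp (τ * L) := by
      gcongr
      linarith
    rw [← Real.exp_add] at h1
    refine h1.trans (Real.exp_le_exp.2 ?_)
    have : τ ≤ 1 / 8 := by nlinarith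
    nlinarith
  have hsparse : 2 * Real.exp (τ * L) * Real.exp (-(100 * s)) ≤ 1 := by
    have h1 : 2 * Real.exp (τ * L) ≤ Real.exp (τ * L) * Real.exp (τ * L) := by
      gcongr
      linarith
    rw [← Real.exp_add] at h1
    refine (mul_le_mul_of_nonneg_right h1 (Real.exp_pos _).le).trans ?_
    rw [← Real.exp_add, Real.exp_le_one_iff]
    have h2 : a * (τ * L) ≤ a * (50 * s) := by
      rw [← mul_assoc, haτ]
      linarith
    linarith [le_of_mul_le_mul_left h2 hapos]
  have hfinal : ∀ H : SimpleGraph V, Restricted H (Real.exp (-(100 * s))) S →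
      Real.exp (τ * L) ≤ stab H S := by
    intro H hH
    have h1 := card_le_stab_mul hH
    by_contra hcon
    push Not at hcon
    have h2 : (stab H S : ℝ) * (1 + Real.exp (-(100 * s)) * S.card) <
        Real.exp (τ * L) * (1 + Real.exp (-(100 * s)) * S.card) := by
      gcongr
    nlinarith [mul_le_mul_of_nonneg_right hsparse hSpos.le]
  have hstab : Real.exp (τ * L) ≤ kap G W := by
    rcases hSr with h | h
    · exact (hfinal G h).trans (by exact_mod_cast stab_le_kap G hSW hS)
    · rw [← kap_compl]
      exact (hfinal Gᶜ h).trans (by exact_mod_cast stab_le_kap Gᶜ hSW hS)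
  linarith

theorem stab_univ_le_cliqueNum [Fintype V] (G : SimpleGraph V) :
    stab G Finset.univ ≤ Gᶜ.cliqueNum := by
  obtain ⟨T, -, hA, hc⟩ := exists_card_eq_stab G Finset.univ
  rw [← hc]
  refine IsClique.card_le_cliqueNum (tc := ?_)
  intro x hx y hy hne
  exact (compl_adj G x y).2 ⟨hne, hA x hx y hy⟩

end ErdosHajnal

/-- There exists `τ > 0` such that every `C₅`-free graph `G` satisfies
`max(α(G), ω(G)) ≥ |G|^τ`. -/
theorem stmt_0 :
    ∃ τ : ℝ, 0 < τ ∧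
      ∀ (V : Type) [Fintype V] (G : SimpleGraph V),
        ¬ Nonempty (cycleGraph 5 ↪g G) →
        (Fintype.card V : ℝ) ^ τ ≤ ((max (alphaNum G) (omegaNum G) : ℕ) : ℝ) := by
  obtain ⟨τ, hτ, h⟩ := exists_kap_ge
  refine ⟨τ / 2, by positivity, fun V _ G hG => ?_⟩
  have h1 := h V G (c5Free_of_not_embedding hG) Finset.univ
  set m := max (alphaNum G) (omegaNum G) with hm
  have h2 : kap G Finset.univ ≤ m * m := by
    refine Nat.mul_le_mul ((stab_univ_le_cliqueNum G).trans (le_max_left _ _)) ?_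
    refine (stab_univ_le_cliqueNum Gᶜ).trans ?_
    rw [compl_compl]
    exact le_max_right _ _
  have h3 : (kap G Finset.univ : ℝ) ≤ (m : ℝ) * m := by exact_mod_cast h2
  rw [Finset.card_univ] at h1
  refine abs_le_of_sq_le_sq' ?_ (by positivity) |>.2
  rw [← Real.rpow_mul_natCast (by positivity)]
  simp only [Nat.cast_ofNat, div_mul_cancel₀ τ (two_ne_zero : (2 : ℝ) ≠ 0)]
  rw [sq]
  exact h1.trans h3
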